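/- arXiv:2311.01121 — 4 statements merged into one kernel-verified Lean document; each statement's English description precedes it below -/
import Mathlib

section
/- Let C be a compact strictly convex planar body whose boundary is traced by a C^∞, λ-periodic, affinely parametrized curve x with affine curvature k, and for n ≥ 3 let δ_i(n) := Area(C) − sup{ Area(convexHull(S)) : S ⊆ ∂C, S finite, |S| ≤ n }. Then lim_{n→∞} n⁶ · ( δ_i(n) − λ³/(12 n²) + (λ⁴/(240 n⁴)) · ∫₀^λ k(s) ds ) = −(9 λ⁶/50400) · ∫₀^λ k(s)² ds + (λ⁵/3600) · ( ∫₀^λ k(s) ds )². Equivalently, δ_i(n) = λ³/(12 n²) − (λ⁴/(2·5!))·(1/n⁴)·∫₀^λ k(s) ds + (1/n⁶)·[ −(9/(10·7!)) λ⁶ ∫₀^λ k(s)² ds + (1/(30·5!)) λ⁵ (∫₀^λ k(s) ds)² ] + o(1/n⁶) as n → ∞. -/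
open Filter MeasureTheory
open scoped Topology

/-- The standard area form on the plane: `ω(u,v) = u₁v₂ − u₂v₁`. -/
noncomputable def om (u v : ℝ × ℝ) : ℝ := u.1 * v.2 - u.2 * v.1

noncomputable def fan (y : ℝ → ℝ × ℝ) (o : ℝ × ℝ) (z : ℝ × ℝ) : ℝ × ℝ := o + z.1 • (y z.2 - o)

noncomputable def fanD (y y' : ℝ → ℝ × ℝ) (o : ℝ × ℝ) (z : ℝ × ℝ) : ℝ × ℝ →L[ℝ] ℝ × ℝ :=
  (Matrix.toLin (.finTwoProd ℝ) (.finTwoProd ℝ)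
    !![(y z.2 - o).1, z.1 * (y' z.2).1; (y z.2 - o).2, z.1 * (y' z.2).2]).toContinuousLinearMap

lemma fanD_det (y y' : ℝ → ℝ × ℝ) (o z : ℝ × ℝ) :
    (fanD y y' o z).det = z.1 * om (y z.2 - o) (y' z.2) := by
  unfold fanD om
  simp only [LinearMap.det_toContinuousLinearMap, LinearMap.det_toLin, Matrix.det_fin_two_of]
  ring

lemma fan_hasFDerivAt (y y' : ℝ → ℝ × ℝ) (o z : ℝ × ℝ) (hy : HasDerivAt y (y' z.2) z.2) :
    HasFDerivAt (fan y o) (fanD y y' o z) z := by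
  have h2 : HasFDerivAt (fun z : ℝ × ℝ => y z.2)
      ((ContinuousLinearMap.snd ℝ ℝ ℝ).smulRight (y' z.2)) z := by
    have := hy.hasFDerivAt.comp z (hasFDerivAt_snd (𝕜 := ℝ) (E := ℝ) (F := ℝ) (p := z))
    convert! this using 1
  have h3 := ((hasFDerivAt_fst (𝕜 := ℝ) (E := ℝ) (F := ℝ) (p := z)).smul (h2.sub_const o)).const_add o
  unfold fan
  refine h3.congr_fderiv ?_
  unfold fanD
  rw [Matrix.toLin_finTwoProd_toContinuousLinearMap]
  ext <;> simp

lemma fan_lintegral (y y' : ℝ → ℝ × ℝ) (o : ℝ × ℝ) (a b : ℝ) (hab : a ≤ b)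
    (hyc : Continuous y) (hyc' : Continuous y')
    (I J : Set ℝ) (hI : I ⊆ Set.Icc 0 1) (hI' : Set.Ioo 0 1 ⊆ I)
    (hJ : J ⊆ Set.Icc a b) (hJ' : Set.Ioo a b ⊆ J) (hIm : MeasurableSet I) (hJm : MeasurableSet J)
    (hnn : ∀ t ∈ J, 0 ≤ om (y t - o) (y' t)) :
    ∫⁻ z in I ×ˢ J, ENNReal.ofReal |(fanD y y' o z).det| =
      ENNReal.ofReal (1 / 2 * ∫ t in a..b, om (y t - o) (y' t)) := by
  have hc : Continuous fun t => om (y t - o) (y' t) := by unfold om; fun_prop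
  have e1 : ∫⁻ z in I ×ˢ J, ENNReal.ofReal |(fanD y y' o z).det| =
      ∫⁻ z in I ×ˢ J, ENNReal.ofReal (z.1 * om (y z.2 - o) (y' z.2)) := by
    refine setLIntegral_congr_fun (hIm.prod hJm) ?_
    rintro z ⟨h1, h2⟩
    simp only [fanD_det]
    rw [abs_of_nonneg (mul_nonneg (hI h1).1 (hnn _ h2))]
  rw [e1, ← ofReal_integral_eq_lintegral_ofReal]
  · congr 1
    rw [Measure.volume_eq_prod, setIntegral_prod_mul (fun r : ℝ => r) (fun t => om (y t - o) (y' t))]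
    have i1 : ∫ r in I, r = 1 / 2 := by
      have : ∫ r in I, r = ∫ r in Set.Icc (0:ℝ) 1, r := by
        apply setIntegral_congr_set
        refine (LE.le.eventuallyLE hI).antisymm ?_
        exact Ioo_ae_eq_Icc.symm.le.trans (LE.le.eventuallyLE hI')
      rw [this, integral_Icc_eq_integral_Ioc, ← intervalIntegral.integral_of_le zero_le_one]
      simp
    have i2 : ∫ r in J, om (y r - o) (y' r) = ∫ t in a..b, om (y t - o) (y' t) := by
      have : ∫ r in J, om (y r - o) (y' r) = ∫ r in Set.Icc a b, om (y r - o) (y' r) := by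
        apply setIntegral_congr_set
        refine (LE.le.eventuallyLE hJ).antisymm ?_
        exact Ioo_ae_eq_Icc.symm.le.trans (LE.le.eventuallyLE hJ')
      rw [this, integral_Icc_eq_integral_Ioc, ← intervalIntegral.integral_of_le hab]
    rw [i1, i2]
  · have : Continuous fun z : ℝ × ℝ => z.1 * om (y z.2 - o) (y' z.2) :=
      continuous_fst.mul (hc.comp continuous_snd)
    have h := this.continuousOn.integrableOn_compact (μ := volume)
      ((isCompact_Icc (a := (0:ℝ)) (b := 1)).prod (isCompact_Icc (a := a) (b := b)))
    exact h.mono_set (Set.prod_mono hI hJ)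
  · refine (ae_restrict_iff' (hIm.prod hJm)).2 (Eventually.of_forall ?_)
    rintro z ⟨h1, h2⟩
    exact mul_nonneg (hI h1).1 (hnn _ h2)

lemma fan_injOn (y : ℝ → ℝ × ℝ) (o : ℝ × ℝ) (a b : ℝ)
    (hpos : ∀ s ∈ Set.Ioo a b, ∀ t ∈ Set.Ioo a b, s < t → 0 < om (y s - o) (y t - o)) :
    Set.InjOn (fan y o) (Set.Ioo (0:ℝ) 1 ×ˢ Set.Ioo a b) := by
  have key : ∀ r t r' t' : ℝ, 0 < r → 0 < r' → t ∈ Set.Ioo a b → t' ∈ Set.Ioo a b →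
      fan y o (r, t) = fan y o (r', t') → ¬ t < t' := by
    intro r t r' t' hr hr' ht ht' he hlt
    have h := hpos t ht t' ht' hlt
    simp only [fan, add_right_inj] at he
    have h1 := congrArg Prod.fst he
    have h2 := congrArg Prod.snd he
    simp only [Prod.smul_fst, Prod.smul_snd, smul_eq_mul] at h1 h2
    have : r * om (y t - o) (y t' - o) = 0 := by
      unfold om
      linear_combination (y t' - o).2 * h1 - (y t' - o).1 * h2
    have := mul_pos hr h
    linarith
  rintro ⟨r, t⟩ ⟨hr, ht⟩ ⟨r', t'⟩ ⟨hr', ht'⟩ he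
  simp only at hr ht hr' ht'
  have n1 := key r t r' t' hr.1 hr'.1 ht ht' he
  have n2 := key r' t' r t hr'.1 hr.1 ht' ht he.symm
  have : t = t' := le_antisymm (not_lt.1 n2) (not_lt.1 n1)
  subst this
  have hne : y t - o ≠ 0 := by
    intro h0
    have := hpos t ht ((t + b) / 2) ⟨by linarith [ht.1, ht.2], by linarith [ht.2]⟩ (by linarith [ht.2])
    rw [h0] at this
    simp [om] at this
  simp only [fan, add_right_inj] at he
  have := smul_left_injective ℝ hne he
  rw [this]

lemma fan_volume (y y' : ℝ → ℝ × ℝ) (o : ℝ × ℝ) (a b : ℝ) (hab : a ≤ b)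
    (hy : ∀ t, HasDerivAt y (y' t) t) (hyc' : Continuous y')
    (hpos : ∀ s ∈ Set.Ioo a b, ∀ t ∈ Set.Ioo a b, s < t → 0 < om (y s - o) (y t - o))
    (hnn : ∀ t ∈ Set.Ioo a b, 0 ≤ om (y t - o) (y' t)) :
    MeasurableSet (fan y o '' (Set.Ioo (0:ℝ) 1 ×ˢ Set.Ioo a b)) ∧
    volume (fan y o '' (Set.Ioo (0:ℝ) 1 ×ˢ Set.Ioo a b)) =
      ENNReal.ofReal (1 / 2 * ∫ t in a..b, om (y t - o) (y' t)) := by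
  have hyc : Continuous y := continuous_iff_continuousAt.2 fun t => (hy t).continuousAt
  have hm : MeasurableSet (Set.Ioo (0:ℝ) 1 ×ˢ Set.Ioo a b) := measurableSet_Ioo.prod measurableSet_Ioo
  refine ⟨measurable_image_of_fderivWithin hm (fun z _ => (fan_hasFDerivAt y y' o z (hy _)).hasFDerivWithinAt)
    (fan_injOn y o a b hpos), ?_⟩
  rw [← lintegral_abs_det_fderiv_eq_addHaar_image volume hm
    (fun z _ => (fan_hasFDerivAt y y' o z (hy _)).hasFDerivWithinAt) (fan_injOn y o a b hpos)]
  exact fan_lintegral y y' o a b hab hyc hyc' _ _ Set.Ioo_subset_Icc_self subset_rfl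
    Set.Ioo_subset_Icc_self subset_rfl measurableSet_Ioo measurableSet_Ioo hnn

lemma fan_volume_le (y y' : ℝ → ℝ × ℝ) (o : ℝ × ℝ) (a b : ℝ) (hab : a ≤ b)
    (hy : ∀ t, HasDerivAt y (y' t) t) (hyc' : Continuous y')
    (hnn : ∀ t ∈ Set.Icc a b, 0 ≤ om (y t - o) (y' t)) :
    volume (fan y o '' (Set.Icc (0:ℝ) 1 ×ˢ Set.Icc a b)) ≤
      ENNReal.ofReal (1 / 2 * ∫ t in a..b, om (y t - o) (y' t)) := by
  have hyc : Continuous y := continuous_iff_continuousAt.2 fun t => (hy t).continuousAt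
  have hm : MeasurableSet (Set.Icc (0:ℝ) 1 ×ˢ Set.Icc a b) := measurableSet_Icc.prod measurableSet_Icc
  rw [← fan_lintegral y y' o a b hab hyc hyc' _ _ subset_rfl Set.Ioo_subset_Icc_self
    subset_rfl Set.Ioo_subset_Icc_self measurableSet_Icc measurableSet_Icc hnn]
  exact addHaar_image_le_lintegral_abs_det_fderiv volume hm
    (fun z _ => (fan_hasFDerivAt y y' o z (hy _)).hasFDerivWithinAt)


lemma grow (F F' : ℝ → ℝ) (n : ℕ) (B : ℝ) (hB : 0 ≤ B) (hF : ∀ s, HasDerivAt F (F' s) s)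
    (h0 : F 0 = 0) (hb : ∀ s, 0 ≤ s → s ≤ 1 → |F' s| ≤ B * s ^ n) :
    ∀ s, 0 ≤ s → s ≤ 1 → |F s| ≤ B * s ^ (n + 1) := by
  intro s hs hs1
  have := Convex.norm_image_sub_le_of_norm_hasDerivWithin_le (s := Set.Icc 0 s) (f := F) (f' := F')
    (C := B * s ^ n) (fun u _ => (hF u).hasDerivWithinAt) (fun u hu => by
      refine (hb u hu.1 (hu.2.trans hs1)).trans ?_
      have := hu.1
      have := hu.2
      gcongr) (convex_Icc 0 s) (Set.left_mem_Icc.2 hs) (Set.right_mem_Icc.2 hs)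
  rw [h0, sub_zero, sub_zero, Real.norm_eq_abs, Real.norm_eq_abs, abs_of_nonneg hs] at this
  rw [pow_succ, ← mul_assoc]
  exact this

/-- quadratic-order bound only -/
lemma expand0 (M : ℝ) (hM : 0 ≤ M) (f g k : ℝ → ℝ) (f0 : f 0 = 0) (g0 : g 0 = 0)
    (hf : ∀ s, HasDerivAt f (g s) s) (hg : ∀ s, HasDerivAt g (1 - k s * f s) s)
    (bf : ∀ s, 0 ≤ s → s ≤ 1 → |f s| ≤ M) (bk : ∀ s, |k s| ≤ M) :
    (∀ s, 0 ≤ s → s ≤ 1 → |f s| ≤ (1 + M * M) * s ^ 2) ∧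
    (∀ s, 0 ≤ s → s ≤ 1 → |f s - s ^ 2 / 2| ≤ M * (1 + M * M) * s ^ 4) := by
  have a1 : ∀ s, 0 ≤ s → s ≤ 1 → |g s| ≤ (1 + M * M) * s ^ 1 := by
    apply grow g _ 0 _ (by positivity) hg g0
    intro s h0 h1
    rw [pow_zero, mul_one]
    calc |1 - k s * f s| ≤ |1| + |k s * f s| := abs_sub _ _
      _ ≤ 1 + M * M := by
        rw [abs_one, abs_mul]
        have := bf s h0 h1
        have := bk s
        gcongr
  have a2 : ∀ s, 0 ≤ s → s ≤ 1 → |f s| ≤ (1 + M * M) * s ^ 2 :=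
    grow f g 1 _ (by positivity) hf f0 a1
  refine ⟨a2, ?_⟩
  have a3 : ∀ s, 0 ≤ s → s ≤ 1 → |g s - s| ≤ M * (1 + M * M) * s ^ 3 := by
    apply grow (fun s => g s - s) (fun s => - (k s * f s)) 2 _ (by positivity) _ (by simp [g0])
    · intro s h0 h1
      rw [abs_neg, abs_mul, mul_assoc]
      exact mul_le_mul (bk s) (a2 s h0 h1) (abs_nonneg _) hM
    · intro s
      convert! (hg s).sub (hasDerivAt_id s) using 1
      ring
  apply grow (fun s => f s - s ^ 2 / 2) _ 3 _ (by positivity) _ (by simp [f0]) a3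
  intro s
  convert! (hf s).sub (((hasDerivAt_id s).pow 2).div_const 2) using 1
  simp

lemma fin_step (x w1 w2 Z1 Z2 Z3 : ℝ) (h1 : |x| ≤ Z3) (h2 : |w1| ≤ Z1) (h3 : |w2| ≤ Z2) :
    |x + 1 / 240 * w1 - 1 / 10080 * w2| ≤ Z3 + Z1 + Z2 := by
  have z1 := (abs_nonneg _).trans h2
  have z2 := (abs_nonneg _).trans h3
  rw [abs_le] at *
  obtain ⟨q11, q12⟩ := h1
  obtain ⟨q21, q22⟩ := h2
  obtain ⟨q31, q32⟩ := h3
  constructor <;> linarith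

lemma expand (M : ℝ) (hM : 0 ≤ M) : ∃ B : ℝ, 0 ≤ B ∧ ∀ f g k k1 k2 k3 D K L : ℝ → ℝ,
    f 0 = 0 → g 0 = 0 → D 0 = 0 → K 0 = 0 → L 0 = 0 →
    (∀ s, HasDerivAt f (g s) s) → (∀ s, HasDerivAt g (1 - k s * f s) s) →
    (∀ s, HasDerivAt k (k1 s) s) → (∀ s, HasDerivAt k1 (k2 s) s) → (∀ s, HasDerivAt k2 (k3 s) s) →
    (∀ s, HasDerivAt D (1 / 2 * f s) s) → (∀ s, HasDerivAt K (k s) s) →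
    (∀ s, HasDerivAt L (k s ^ 2 + k2 s) s) →
    (∀ s, 0 ≤ s → s ≤ 1 → |f s| ≤ M) → (∀ s, |k s| ≤ M) → (∀ s, |k1 s| ≤ M) → (∀ s, |k2 s| ≤ M) →
    (∀ s, |k3 s| ≤ M) →
    ∀ h, 0 ≤ h → h ≤ 1 → |D h - (h ^ 3 / 12 - h ^ 4 * K h / 240 + h ^ 6 * L h / 10080)| ≤ B * h ^ 8 := by
  set A := 1 + M * M with hA
  have hA0 : 0 ≤ A := by positivity
  set B1 := M * A + M * (M * A) with hB1
  have hB1p : 0 ≤ B1 := by positivity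
  set B2 := M * A + M * B1 + M * (M * A) + M * (M * A) with hB2
  have hB2p : 0 ≤ B2 := by positivity
  refine ⟨B2 + M + (2 * M * M + M), by positivity, ?_⟩
  intro f g k k1 k2 k3 D K L f0 g0 D0 K0 L0 hf hg hk hk1 hk2 hD hK hL bf bk bk1 bk2 bk3
  obtain ⟨a2, a4⟩ := expand0 M hM f g k f0 g0 hf hg bf bk
  have pd : ∀ (c : ℝ) (n : ℕ) (s : ℝ), HasDerivAt (fun s : ℝ => c * s ^ (n + 1)) (c * ((n + 1) * s ^ n)) s := by
    intro c n s
    simpa using (hasDerivAt_pow (n + 1) s).const_mul c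
  -- taylor of k
  have t2 : ∀ s, 0 ≤ s → s ≤ 1 → |k2 s - k2 0| ≤ M * s ^ 1 := by
    apply grow (fun s => k2 s - k2 0) k3 0 _ hM (fun s => (hk2 s).sub_const _) (by simp)
    intro s _ _; simpa using bk3 s
  have t1a : ∀ s, 0 ≤ s → s ≤ 1 → |k1 s - k1 0| ≤ M * s ^ 1 := by
    apply grow (fun s => k1 s - k1 0) k2 0 _ hM (fun s => (hk1 s).sub_const _) (by simp)
    intro s _ _; simpa using bk2 s
  have t0a : ∀ s, 0 ≤ s → s ≤ 1 → |k s - k 0| ≤ M * s ^ 1 := by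
    apply grow (fun s => k s - k 0) k1 0 _ hM (fun s => (hk s).sub_const _) (by simp)
    intro s _ _; simpa using bk1 s
  have t1 : ∀ s, 0 ≤ s → s ≤ 1 → |k1 s - k1 0 - k2 0 * s ^ (0 + 1)| ≤ M * s ^ 2 := by
    apply grow _ (fun s => k2 s - k2 0) 1 _ hM _ (by simp) t2
    intro s
    convert! ((hk1 s).sub_const (k1 0)).sub (pd (k2 0) 0 s) using 1
    simp
  have t0 : ∀ s, 0 ≤ s → s ≤ 1 → |k s - k 0 - k1 0 * s ^ (0 + 1) - k2 0 / 2 * s ^ (1 + 1)| ≤ M * s ^ 3 := by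
    apply grow _ (fun s => k1 s - k1 0 - k2 0 * s ^ (0 + 1)) 2 _ hM _ (by simp) t1
    intro s
    convert! (((hk s).sub_const (k 0)).sub (pd (k1 0) 0 s)).sub (pd (k2 0 / 2) 1 s) using 1
    simp; ring
  have tK : ∀ s, 0 ≤ s → s ≤ 1 → |K s - k 0 * s ^ (0 + 1) - k1 0 / 2 * s ^ (1 + 1) - k2 0 / 6 * s ^ (2 + 1)|
      ≤ M * s ^ 4 := by
    apply grow _ (fun s => k s - k 0 - k1 0 * s ^ (0 + 1) - k2 0 / 2 * s ^ (1 + 1)) 3 _ hM _ (by simp [K0]) t0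
    intro s
    convert! (((hK s).sub (pd (k 0) 0 s)).sub (pd (k1 0 / 2) 1 s)).sub (pd (k2 0 / 6) 2 s) using 1
    simp; ring
  have tL : ∀ s, 0 ≤ s → s ≤ 1 → |L s - (k 0 ^ 2 + k2 0) * s ^ (0 + 1)| ≤ (2 * M * M + M) * s ^ 2 := by
    apply grow _ (fun s => k s ^ 2 + k2 s - (k 0 ^ 2 + k2 0)) 1 _ (by positivity) _ (by simp [L0])
    · intro s h0 h1
      have e : k s ^ 2 + k2 s - (k 0 ^ 2 + k2 0) = (k s + k 0) * (k s - k 0) + (k2 s - k2 0) := by ring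
      rw [e]
      calc _ ≤ |(k s + k 0) * (k s - k 0)| + |k2 s - k2 0| := abs_add_le _ _
        _ ≤ (M + M) * (M * s ^ 1) + M * s ^ 1 := by
          rw [abs_mul]
          have := t0a s h0 h1
          have := t2 s h0 h1
          have : |k s + k 0| ≤ M + M := (abs_add_le _ _).trans (add_le_add (bk s) (bk 0))
          gcongr
        _ = _ := by ring
    · intro s
      convert! (hL s).sub (pd (k 0 ^ 2 + k2 0) 0 s) using 1
      simp
  -- third order
  have b1 : ∀ s, 0 ≤ s → s ≤ 1 → |g s - 1 * s ^ (0 + 1) + k 0 / 6 * s ^ (2 + 1)| ≤ B1 * s ^ 4 := by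
    apply grow _ (fun s => - ((k s - k 0) * f s) - k 0 * (f s - s ^ 2 / 2)) 3 _ hB1p _ (by simp [g0])
    · intro s h0 h1
      calc _ ≤ |(k s - k 0) * f s| + |k 0 * (f s - s ^ 2 / 2)| := by
            refine (abs_sub _ _).trans ?_
            rw [abs_neg]
        _ ≤ (M * s ^ 1) * (A * s ^ 2) + M * (M * A * s ^ 4) := by
          rw [abs_mul, abs_mul]
          have := t0a s h0 h1
          have := a2 s h0 h1
          have := a4 s h0 h1
          have := bk 0
          gcongr
        _ ≤ (M * s ^ 1) * (A * s ^ 2) + M * (M * A * s ^ 3) := by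
          have : s ^ 4 ≤ s ^ 3 := pow_le_pow_of_le_one h0 h1 (by norm_num)
          gcongr
        _ = B1 * s ^ 3 := by rw [hB1]; ring
    · intro s
      convert! ((hg s).sub (pd 1 0 s)).add (pd (k 0 / 6) 2 s) using 1
      simp; ring
  have b2 : ∀ s, 0 ≤ s → s ≤ 1 → |f s - 1 / 2 * s ^ (1 + 1) + k 0 / 24 * s ^ (3 + 1)| ≤ B1 * s ^ 5 := by
    apply grow _ (fun s => g s - 1 * s ^ (0 + 1) + k 0 / 6 * s ^ (2 + 1)) 4 _ hB1p _ (by simp [f0]) b1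
    intro s
    convert! ((hf s).sub (pd (1/2) 1 s)).add (pd (k 0 / 24) 3 s) using 1
    simp; ring
  have c1 : ∀ s, 0 ≤ s → s ≤ 1 → |g s - 1 * s ^ (0 + 1) + k 0 / 6 * s ^ (2 + 1) + k1 0 / 8 * s ^ (3 + 1)
      + (k2 0 / 4 - k 0 ^ 2 / 24) / 5 * s ^ (4 + 1)| ≤ B2 * s ^ 6 := by
    apply grow _ (fun s => - ((k s - k 0 - k1 0 * s ^ (0 + 1) - k2 0 / 2 * s ^ (1 + 1)) * f s)
      - k 0 * (f s - 1 / 2 * s ^ (1 + 1) + k 0 / 24 * s ^ (3 + 1)) - k1 0 * s * (f s - s ^ 2 / 2)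
      - k2 0 / 2 * s ^ 2 * (f s - s ^ 2 / 2)) 5 _ hB2p _ (by simp [g0])
    · intro s h0 h1
      have p1 := mul_le_mul (t0 s h0 h1) (a2 s h0 h1) (abs_nonneg _) (by positivity)
      have p2 := mul_le_mul (bk 0) (b2 s h0 h1) (abs_nonneg _) (by positivity)
      have p3 := mul_le_mul (bk1 0) (a4 s h0 h1) (abs_nonneg _) (by positivity)
      have p4 := mul_le_mul (bk2 0) (a4 s h0 h1) (abs_nonneg _) (by positivity)
      rw [← abs_mul] at p1 p2
      have p3' : |k1 0 * s * (f s - s ^ 2 / 2)| ≤ M * (M * A * s ^ 4) * s := by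
        rw [abs_mul, abs_mul, abs_of_nonneg h0]
        calc _ = |k1 0| * |f s - s ^ 2 / 2| * s := by ring
          _ ≤ _ := by gcongr
      have p4' : |k2 0 / 2 * s ^ 2 * (f s - s ^ 2 / 2)| ≤ M * (M * A * s ^ 4) * s := by
        rw [abs_mul, abs_mul, abs_of_nonneg (by positivity : 0 ≤ s ^ 2), abs_div, abs_two]
        calc _ = |k2 0| * |f s - s ^ 2 / 2| * (s * (s / 2)) := by ring
          _ ≤ M * (M * A * s ^ 4) * (s * 1) := by gcongr; linarith
          _ = _ := by ring
      rw [hB2]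
      refine (abs_sub _ _).trans ?_
      refine (add_le_add_left (abs_sub _ _) _).trans ?_
      refine (add_le_add_left (add_le_add_left (abs_sub _ _) _) _).trans ?_
      rw [abs_neg]
      linarith [p1, p2, p3', p4']
    · intro s
      convert! ((((hg s).sub (pd 1 0 s)).add (pd (k 0 / 6) 2 s)).add (pd (k1 0 / 8) 3 s)).add
        (pd ((k2 0 / 4 - k 0 ^ 2 / 24) / 5) 4 s) using 1
      simp; ring
  have c2 : ∀ s, 0 ≤ s → s ≤ 1 → |f s - 1 / 2 * s ^ (1 + 1) + k 0 / 24 * s ^ (3 + 1) + k1 0 / 40 * s ^ (4 + 1)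
      + (k2 0 / 4 - k 0 ^ 2 / 24) / 30 * s ^ (5 + 1)| ≤ B2 * s ^ 7 := by
    apply grow _ _ 6 _ hB2p _ (by simp [f0]) c1
    intro s
    convert! ((((hf s).sub (pd (1/2) 1 s)).add (pd (k 0 / 24) 3 s)).add (pd (k1 0 / 40) 4 s)).add
        (pd ((k2 0 / 4 - k 0 ^ 2 / 24) / 30) 5 s) using 1
    simp; ring
  have c3 : ∀ s, 0 ≤ s → s ≤ 1 → |D s - 1 / 12 * s ^ (2 + 1) + k 0 / 240 * s ^ (4 + 1) + k1 0 / 480 * s ^ (5 + 1)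
      + (k2 0 / 4 - k 0 ^ 2 / 24) / 420 * s ^ (6 + 1)| ≤ B2 * s ^ 8 := by
    apply grow _ (fun s => 1 / 2 * (f s - 1 / 2 * s ^ (1 + 1) + k 0 / 24 * s ^ (3 + 1) + k1 0 / 40 * s ^ (4 + 1)
      + (k2 0 / 4 - k 0 ^ 2 / 24) / 30 * s ^ (5 + 1))) 7 _ hB2p _ (by simp [D0])
    · intro s h0 h1
      rw [abs_mul, abs_of_pos (by norm_num : (0:ℝ) < 1 / 2)]
      have := c2 s h0 h1
      have : 0 ≤ B2 * s ^ 7 := by positivity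
      linarith
    · intro s
      convert! ((((hD s).sub (pd (1/12) 2 s)).add (pd (k 0 / 240) 4 s)).add (pd (k1 0 / 480) 5 s)).add
        (pd ((k2 0 / 4 - k 0 ^ 2 / 24) / 420) 6 s) using 1
      simp; ring
  intro h h0 h1
  have q1 := c3 h h0 h1
  have q2 : h ^ 4 * |K h - k 0 * h ^ (0 + 1) - k1 0 / 2 * h ^ (1 + 1) - k2 0 / 6 * h ^ (2 + 1)| ≤ h ^ 4 * (M * h ^ 4) :=
    mul_le_mul_of_nonneg_left (tK h h0 h1) (by positivity)
  have q3 : h ^ 6 * |L h - (k 0 ^ 2 + k2 0) * h ^ (0 + 1)| ≤ h ^ 6 * ((2 * M * M + M) * h ^ 2) :=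
    mul_le_mul_of_nonneg_left (tL h h0 h1) (by positivity)
  rw [← abs_of_nonneg (by positivity : 0 ≤ h ^ 4), ← abs_mul, abs_of_nonneg (by positivity : 0 ≤ h ^ 4)] at q2
  rw [← abs_of_nonneg (by positivity : 0 ≤ h ^ 6), ← abs_mul, abs_of_nonneg (by positivity : 0 ≤ h ^ 6)] at q3
  have z1 : 0 ≤ M * h ^ 8 := by positivity
  have z2 : 0 ≤ (2 * M * M + M) * h ^ 8 := by positivity
  have e : D h - (h ^ 3 / 12 - h ^ 4 * K h / 240 + h ^ 6 * L h / 10080) =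
      (D h - 1 / 12 * h ^ (2 + 1) + k 0 / 240 * h ^ (4 + 1) + k1 0 / 480 * h ^ (5 + 1)
      + (k2 0 / 4 - k 0 ^ 2 / 24) / 420 * h ^ (6 + 1)) +
      1 / 240 * (h ^ 4 * (K h - k 0 * h ^ (0 + 1) - k1 0 / 2 * h ^ (1 + 1) - k2 0 / 6 * h ^ (2 + 1)))
      - 1 / 10080 * (h ^ 6 * (L h - (k 0 ^ 2 + k2 0) * h ^ (0 + 1))) := by ring
  rw [e]
  have e2 : h ^ 4 * (M * h ^ 4) = M * h ^ 8 := by ring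
  have e3 : h ^ 6 * ((2 * M * M + M) * h ^ 2) = (2 * M * M + M) * h ^ 8 := by ring
  rw [e2] at q2
  rw [e3] at q3
  exact (fin_step _ _ _ _ _ _ q1 q2 q3).trans_eq (by ring)


noncomputable def linR (η κ h K L W : ℝ) : ℝ :=
  η ^ 3 / 12 + η ^ 2 / 4 * (h - η) - κ * (4 * η ^ 4 * h - 4 * η ^ 5) / 240 - η ^ 4 * K / 240
    - η ^ 6 * W / 3600 + η ^ 6 * L / 10080

noncomputable def resT (η κ e q L : ℝ) : ℝ :=
  - (e ^ 2 * (6 * η ^ 2 + 4 * η * e + e ^ 2) * q / 240)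
  - κ * (e ^ 2 * ((η + e) ^ 3 + 2 * (η + e) ^ 2 * η + 3 * (η + e) * η ^ 2 + 4 * η ^ 3)) / 240
  + ((η + e) ^ 6 - η ^ 6) * L / 10080

lemma arc_id (η κ e K L W : ℝ) :
    (η + e) ^ 3 / 12 - (η + e) ^ 4 * K / 240 + (η + e) ^ 6 * L / 10080 - linR η κ (η + e) K L W =
    η / 4 * (e - η ^ 2 * (K - κ * (η + e)) / 30) ^ 2 + e ^ 3 / 12 + resT η κ e (K - κ * (η + e)) L
    + (η ^ 6 * W - η ^ 5 * (K - κ * (η + e)) ^ 2) / 3600 := by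
  unfold linR resT; ring

lemma res_bound (M η κ e q L : ℝ) (hM : 1 ≤ M) (hη : 0 < η) (hη1 : η ≤ 1) (he : |e| ≤ η)
    (hq : |q| ≤ 4 * M * η) (hκ : |κ| ≤ M) (hL : |L| ≤ 2 * M * η) :
    |resT η κ e q L| ≤ 3 * M * (η ^ 2 * e ^ 2 + η ^ 8) := by
  obtain ⟨e1, e2⟩ := abs_le.1 he
  have hM0 : 0 ≤ M := by linarith
  have h1 : |e ^ 2 * (6 * η ^ 2 + 4 * η * e + e ^ 2) * q / 240| ≤ M * (η ^ 2 * e ^ 2) := by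
    have p1 : |6 * η ^ 2 + 4 * η * e + e ^ 2| ≤ 11 * η ^ 2 := by
      rw [abs_le]; constructor <;> nlinarith
    rw [abs_div, abs_mul, abs_mul, abs_of_nonneg (sq_nonneg e), abs_of_pos (by norm_num : (0:ℝ) < 240)]
    calc _ ≤ e ^ 2 * (11 * η ^ 2) * (4 * M * η) / 240 := by gcongr
      _ = M * (η ^ 2 * e ^ 2) * (44 / 240 * η) := by ring
      _ ≤ M * (η ^ 2 * e ^ 2) * 1 := by gcongr; linarith
      _ = _ := by ring
  have hh0 : 0 ≤ η + e := by linarith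
  have hh1 : η + e ≤ 2 * η := by linarith
  have h2 : |κ * (e ^ 2 * ((η + e) ^ 3 + 2 * (η + e) ^ 2 * η + 3 * (η + e) * η ^ 2 + 4 * η ^ 3)) / 240|
      ≤ M * (η ^ 2 * e ^ 2) := by
    rw [abs_div, abs_mul, abs_of_nonneg (by positivity : 0 ≤ e ^ 2 * ((η + e) ^ 3 + 2 * (η + e) ^ 2 * η + 3 * (η + e) * η ^ 2 + 4 * η ^ 3)), abs_of_pos (by norm_num : (0:ℝ) < 240)]
    calc _ ≤ M * (e ^ 2 * ((2 * η) ^ 3 + 2 * (2 * η) ^ 2 * η + 3 * (2 * η) * η ^ 2 + 4 * η ^ 3)) / 240 := by gcongr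
      _ = M * (η ^ 2 * e ^ 2) * (26 / 240 * η) := by ring
      _ ≤ M * (η ^ 2 * e ^ 2) * 1 := by gcongr; linarith
      _ = _ := by ring
  have h3 : |((η + e) ^ 6 - η ^ 6) * L / 10080| ≤ M * (η ^ 2 * e ^ 2 + η ^ 8) := by
    have p1 : |(η + e) ^ 6 - η ^ 6| ≤ |e| * (63 * η ^ 5) := by
      have : (η + e) ^ 6 - η ^ 6 = e * ((η + e) ^ 5 + (η + e) ^ 4 * η + (η + e) ^ 3 * η ^ 2 + (η + e) ^ 2 * η ^ 3
        + (η + e) * η ^ 4 + η ^ 5) := by ring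
      rw [this, abs_mul]
      refine mul_le_mul_of_nonneg_left ?_ (abs_nonneg _)
      rw [abs_of_nonneg (by positivity)]
      calc _ ≤ (2 * η) ^ 5 + (2 * η) ^ 4 * η + (2 * η) ^ 3 * η ^ 2 + (2 * η) ^ 2 * η ^ 3
        + (2 * η) * η ^ 4 + η ^ 5 := by gcongr
        _ = _ := by ring
    rw [abs_div, abs_mul, abs_of_pos (by norm_num : (0:ℝ) < 10080)]
    calc _ ≤ |e| * (63 * η ^ 5) * (2 * M * η) / 10080 := by gcongr
      _ = M * ((η * |e|) * η ^ 5 * (126 / 10080)) := by ring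
      _ ≤ M * (η ^ 2 * e ^ 2 + η ^ 8) := by
        gcongr
        have s := sq_nonneg (η * |e| - η ^ 5)
        have e3 : |e| ^ 2 = e ^ 2 := sq_abs e
        have e4 : η ^ 10 ≤ η ^ 8 := pow_le_pow_of_le_one hη.le hη1 (by norm_num)
        have e5 : 0 ≤ η * |e| * η ^ 5 := by positivity
        have : 2 * (η * |e| * η ^ 5) ≤ η ^ 2 * e ^ 2 + η ^ 10 := by
          rw [← e3]; linarith [s]
        linarith
  unfold resT
  have := abs_add_le (- (e ^ 2 * (6 * η ^ 2 + 4 * η * e + e ^ 2) * q / 240)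
  - κ * (e ^ 2 * ((η + e) ^ 3 + 2 * (η + e) ^ 2 * η + 3 * (η + e) * η ^ 2 + 4 * η ^ 3)) / 240) (((η + e) ^ 6 - η ^ 6) * L / 10080)
  have t2 := abs_sub (- (e ^ 2 * (6 * η ^ 2 + 4 * η * e + e ^ 2) * q / 240)) (κ * (e ^ 2 * ((η + e) ^ 3 + 2 * (η + e) ^ 2 * η + 3 * (η + e) * η ^ 2 + 4 * η ^ 3)) / 240)
  rw [abs_neg] at t2
  have : 0 ≤ M * η ^ 8 := by positivity
  linarith

lemma core_lower (M η e p C2 : ℝ) (hM : 1 ≤ M) (hη : 0 < η) (hη1 : η ≤ 1) (he : |e| ≤ η) (hC2 : 0 ≤ C2)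
    (hηC : C2 * η ≤ 1 / 20) (hp : |p| ≤ M * η ^ 3) :
    -((64 * M ^ 3 + 16 * M ^ 2 * C2) * η ^ 8) ≤ η / 4 * (e - p) ^ 2 + e ^ 3 / 12 - C2 * (η ^ 2 * e ^ 2) := by
  have hM0 : 0 < M := by linarith
  by_cases hc : |e| ≤ 4 * M * η ^ 3
  · have a1 : e ^ 2 ≤ (4 * M * η ^ 3) ^ 2 := by
      rw [← sq_abs]; gcongr
    have a2 : -(4 * M * η ^ 3) ^ 3 ≤ e ^ 3 := by
      have : |e| ^ 3 ≤ (4 * M * η ^ 3) ^ 3 := by gcongr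
      rw [← abs_pow] at this
      linarith [neg_abs_le (e ^ 3)]
    have a3 : C2 * (η ^ 2 * e ^ 2) ≤ C2 * (η ^ 2 * (4 * M * η ^ 3) ^ 2) := by gcongr
    have a4 : 0 ≤ η / 4 * (e - p) ^ 2 := by positivity
    have a5 : M ^ 3 * η ^ 9 ≤ M ^ 3 * η ^ 8 := by
      gcongr ?_ * ?_
      exact pow_le_pow_of_le_one hη.le hη1 (by norm_num)
    have a6 : 0 ≤ M ^ 3 * η ^ 8 := by positivity
    have e1 : (4 * M * η ^ 3) ^ 3 = 64 * (M ^ 3 * η ^ 9) := by ring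
    have e2 : C2 * (η ^ 2 * (4 * M * η ^ 3) ^ 2) = 16 * M ^ 2 * C2 * η ^ 8 := by ring
    rw [e2] at a3
    rw [e1] at a2
    linarith
  · push Not at hc
    have b1 : |p| ≤ |e| / 4 := by linarith
    have b2 : 3 / 4 * |e| ≤ |e - p| := by
      have := abs_sub_abs_le_abs_sub e p
      linarith
    have b3 : 9 / 16 * e ^ 2 ≤ (e - p) ^ 2 := by
      rw [← sq_abs e, ← sq_abs (e - p)]
      have : (3 / 4 * |e|) ^ 2 ≤ |e - p| ^ 2 := by gcongr
      linarith
    have b4 : -(η * e ^ 2) ≤ e ^ 3 := by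
      have : -η ≤ e := (abs_le.1 he).1
      nlinarith [sq_nonneg e]
    have b5 : C2 * (η ^ 2 * e ^ 2) ≤ 1 / 20 * (η * e ^ 2) := by
      calc C2 * (η ^ 2 * e ^ 2) = C2 * η * (η * e ^ 2) := by ring
        _ ≤ _ := by gcongr
    have b6 : η / 4 * (9 / 16 * e ^ 2) ≤ η / 4 * (e - p) ^ 2 := by gcongr
    have b7 : 0 ≤ η * e ^ 2 := by positivity
    have b8 : 0 ≤ (64 * M ^ 3 + 16 * M ^ 2 * C2) * η ^ 8 := by positivity
    linarith

lemma arc_lower (M B : ℝ) (hM : 1 ≤ M) (hB : 0 ≤ B) : ∃ C ε : ℝ, 0 < C ∧ 0 < ε ∧ ε ≤ 1 ∧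
    ∀ η h D K L W κ : ℝ, 0 < η → η ≤ ε → 0 ≤ h → h ≤ ε →
    |D - (h ^ 3 / 12 - h ^ 4 * K / 240 + h ^ 6 * L / 10080)| ≤ B * h ^ 8 →
    |K| ≤ M * h → |L| ≤ M * h → 0 ≤ W → W ≤ M * h → |κ| ≤ M → (K - κ * h) ^ 2 ≤ h * W →
    linR η κ h K L W - C * η ^ 8 ≤ D := by
  set C2 := 4 * M with hC2
  set C1 := 20 * M + B with hC1
  have hM0 : 0 < M := by linarith
  refine ⟨256 * B + 4 * M + (64 * M ^ 3 + 16 * M ^ 2 * C2), 1 / (100 * (C1 + 1)), by positivity, by positivity, ?_, ?_⟩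
  · rw [div_le_one (by positivity)]
    have : 0 ≤ C1 := by positivity
    linarith
  intro η h D K L W κ hη hηε hh hhε hD hK hL hW0 hW hκ hq
  have hC10 : 0 ≤ C1 := by positivity
  have hε1 : 1 / (100 * (C1 + 1)) ≤ 1 := by
    rw [div_le_one (by positivity)]
    linarith
  have hη1 := hηε.trans hε1
  have hh1 := hhε.trans hε1
  have hεC : ∀ u, u ≤ 1 / (100 * (C1 + 1)) → C1 * u ≤ 1 / 100 := by
    intro u hu
    calc C1 * u ≤ (C1 + 1) * (1 / (100 * (C1 + 1))) :=
          (mul_le_mul_of_nonneg_left hu hC10).trans (mul_le_mul_of_nonneg_right (by linarith) (by positivity))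
      _ = 1 / 100 := by field_simp
  have hqb : |K - κ * h| ≤ 2 * M * h := by
    calc |K - κ * h| ≤ |K| + |κ * h| := abs_sub _ _
      _ ≤ M * h + M * h := by
        rw [abs_mul, abs_of_nonneg hh]
        gcongr
      _ = _ := by ring
  by_cases hc : h ≤ 2 * η
  · obtain ⟨e, rfl⟩ : ∃ e, h = η + e := ⟨h - η, by ring⟩
    have he : |e| ≤ η := by rw [abs_le]; constructor <;> linarith
    have id1 := arc_id η κ e K L W
    set q := K - κ * (η + e) with hqd
    have hqb' : |q| ≤ 4 * M * η := by
      calc |q| ≤ 2 * M * (η + e) := hqb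
        _ ≤ 2 * M * (2 * η) := by gcongr
        _ = _ := by ring
    have hLb' : |L| ≤ 2 * M * η := by
      calc |L| ≤ M * (η + e) := hL
        _ ≤ M * (2 * η) := by gcongr
        _ = _ := by ring
    have hWb' : W ≤ 2 * M * η := by
      calc W ≤ M * (η + e) := hW
        _ ≤ M * (2 * η) := by gcongr
        _ = _ := by ring
    have r1 := res_bound M η κ e q L hM hη hη1 he hqb' hκ hLb'
    have hp : |η ^ 2 * q / 30| ≤ M * η ^ 3 := by
      rw [abs_div, abs_mul, abs_of_nonneg (sq_nonneg η), abs_of_pos (by norm_num : (0:ℝ) < 30)]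
      calc _ ≤ η ^ 2 * (4 * M * η) / 30 := by gcongr
        _ = M * η ^ 3 * (4 / 30) := by ring
        _ ≤ M * η ^ 3 * 1 := by gcongr; norm_num
        _ = _ := by ring
    have hc2 : C2 * η ≤ 1 / 20 := by
      have := hεC η hηε
      have : C2 * η ≤ C1 * η := by gcongr; rw [hC2, hC1]; linarith
      linarith
    have c1 := core_lower M η e (η ^ 2 * q / 30) C2 hM hη hη1 he (by positivity) hc2 hp
    have w1 : -(M * (η ^ 2 * e ^ 2 + η ^ 8)) ≤ (η ^ 6 * W - η ^ 5 * q ^ 2) / 3600 := by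
      have : η ^ 5 * q ^ 2 ≤ η ^ 5 * ((η + e) * W) := by gcongr
      have x2 : η ^ 5 * (e * W) ≤ η ^ 5 * (|e| * (2 * M * η)) := by
        have : e * W ≤ |e| * (2 * M * η) :=
          (mul_le_mul_of_nonneg_right (le_abs_self e) hW0).trans (mul_le_mul_of_nonneg_left hWb' (abs_nonneg _))
        gcongr
      have s := sq_nonneg (η * |e| - η ^ 5)
      have e3 : |e| ^ 2 = e ^ 2 := sq_abs e
      have e4 : η ^ 10 ≤ η ^ 8 := pow_le_pow_of_le_one hη.le hη1 (by norm_num)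
      have : 2 * (η ^ 6 * |e|) ≤ η ^ 2 * e ^ 2 + η ^ 8 := by
        have : 2 * (η ^ 6 * |e|) ≤ η ^ 2 * e ^ 2 + η ^ 10 := by
          rw [← e3]; linarith [s]
        linarith
      have x3 : M * (2 * (η ^ 6 * |e|)) ≤ M * (η ^ 2 * e ^ 2 + η ^ 8) := by gcongr
      have x4 : 0 ≤ M * (η ^ 2 * e ^ 2 + η ^ 8) := by positivity
      linarith
    have d1 : B * (η + e) ^ 8 ≤ 256 * B * η ^ 8 := by
      calc B * (η + e) ^ 8 ≤ B * (2 * η) ^ 8 := by gcongr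
        _ = _ := by ring
    have d2 := (abs_le.1 hD).1
    have r2 := (abs_le.1 r1).1
    rw [hC2] at c1 ⊢
    linarith
  · push Not at hc
    have hh0 : 0 < h := by linarith
    have hηh : η ≤ h := by linarith
    have id2 : h ^ 3 / 12 - h ^ 4 * K / 240 + h ^ 6 * L / 10080 - linR η κ h K L W =
      (h - η) ^ 2 * (h + 2 * η) / 12 - (h ^ 4 - η ^ 4) * (K - κ * h) / 240
       - κ * (h ^ 5 - 5 * η ^ 4 * h + 4 * η ^ 5) / 240 + (h ^ 6 - η ^ 6) * L / 10080 + η ^ 6 * W / 3600 := by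
      unfold linR; ring
    have t1 : h ^ 3 / 48 ≤ (h - η) ^ 2 * (h + 2 * η) / 12 := by
      have : (h / 2) ^ 2 * h ≤ (h - η) ^ 2 * (h + 2 * η) := by gcongr <;> linarith
      linarith
    have t2 : |(h ^ 4 - η ^ 4) * (K - κ * h)| ≤ 2 * (M * h ^ 5) := by
      rw [abs_mul]
      have : |h ^ 4 - η ^ 4| ≤ h ^ 4 := by
        have : η ^ 4 ≤ h ^ 4 := by gcongr
        rw [abs_of_nonneg (by linarith)]
        have : 0 ≤ η ^ 4 := by positivity
        linarith
      calc _ ≤ h ^ 4 * (2 * M * h) := by gcongr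
        _ = _ := by ring
    have t3 : |κ * (h ^ 5 - 5 * η ^ 4 * h + 4 * η ^ 5)| ≤ 10 * (M * h ^ 5) := by
      rw [abs_mul]
      have : |h ^ 5 - 5 * η ^ 4 * h + 4 * η ^ 5| ≤ 10 * h ^ 5 := by
        have u1 : η ^ 4 * h ≤ h ^ 4 * h := by gcongr
        have u2 : η ^ 5 ≤ h ^ 5 := by gcongr
        have u3 : 0 ≤ η ^ 4 * h := by positivity
        have u4 : 0 ≤ η ^ 5 := by positivity
        have u5 : 0 ≤ h ^ 5 := by positivity
        rw [abs_le]; constructor <;> nlinarith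
      calc _ ≤ M * (10 * h ^ 5) := by gcongr
        _ = _ := by ring
    have t4 : |(h ^ 6 - η ^ 6) * L| ≤ M * h ^ 5 := by
      rw [abs_mul]
      have : |h ^ 6 - η ^ 6| ≤ h ^ 6 := by
        have : η ^ 6 ≤ h ^ 6 := by gcongr
        rw [abs_of_nonneg (by linarith)]
        have : 0 ≤ η ^ 6 := by positivity
        linarith
      calc _ ≤ h ^ 6 * (M * h) := by gcongr
        _ = M * h ^ 7 := by ring
        _ ≤ M * h ^ 5 := by
          gcongr ?_ * ?_
          exact pow_le_pow_of_le_one hh hh1 (by norm_num)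
    have t5 : B * h ^ 8 ≤ B * h ^ 5 := by
      gcongr ?_ * ?_
      exact pow_le_pow_of_le_one hh hh1 (by norm_num)
    have t6 : C1 * h ^ 5 ≤ 1 / 100 * h ^ 3 := by
      calc C1 * h ^ 5 = C1 * h * h ^ 4 := by ring
        _ ≤ 1 / 100 * h ^ 3 := mul_le_mul (hεC h hhε) (pow_le_pow_of_le_one hh hh1 (by norm_num)) (by positivity) (by norm_num)
    have t7 : 0 ≤ η ^ 6 * W := by positivity
    have t8 : 0 ≤ (256 * B + 4 * M + (64 * M ^ 3 + 16 * M ^ 2 * C2)) * η ^ 8 := by positivity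
    have t9 : 0 ≤ h ^ 3 := by positivity
    have t10 : 0 ≤ M * h ^ 5 := by positivity
    have d2 := (abs_le.1 hD).1
    have t2' := (abs_le.1 t2).2
    have t3' := (abs_le.1 t3).2
    have t4' := (abs_le.1 t4).1
    rw [hC1, add_mul] at t6
    linarith

lemma arc_upper (M B : ℝ) (hM : 1 ≤ M) (hB : 0 ≤ B) : ∃ C : ℝ, 0 < C ∧
    ∀ η h D K L W κ : ℝ, 0 < η → η ≤ 1 → 0 ≤ h → |h - η| ≤ η → |h - η| ≤ M * η ^ 3 →
    |h - η - η ^ 2 * (K - κ * h) / 30| ≤ M * η ^ 5 →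
    |D - (h ^ 3 / 12 - h ^ 4 * K / 240 + h ^ 6 * L / 10080)| ≤ B * h ^ 8 →
    |K| ≤ M * h → |L| ≤ M * h → 0 ≤ W → W ≤ M * h → |κ| ≤ M → h * W - (K - κ * h) ^ 2 ≤ M * h ^ 4 →
    D ≤ linR η κ h K L W + C * η ^ 8 := by
  have hM0 : 0 < M := by linarith
  refine ⟨256 * B + M ^ 2 + M ^ 3 + 3 * M * (M ^ 2 + 1) + 16 * M + 2 * M ^ 2, by positivity, ?_⟩
  intro η h D K L W κ hη hη1 hh he heM hs hD hK hL hW0 hW hκ hv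
  have hqb : |K - κ * h| ≤ 2 * M * h := by
    calc |K - κ * h| ≤ |K| + |κ * h| := abs_sub _ _
      _ ≤ M * h + M * h := by
        rw [abs_mul, abs_of_nonneg hh]
        gcongr
      _ = _ := by ring
  obtain ⟨e, rfl⟩ : ∃ e, h = η + e := ⟨h - η, by ring⟩
  rw [add_sub_cancel_left] at he heM hs
  have hc : η + e ≤ 2 * η := by linarith [(abs_le.1 he).2]
  have id1 := arc_id η κ e K L W
  set q := K - κ * (η + e) with hqd
  have hqb' : |q| ≤ 4 * M * η := by
    calc |q| ≤ 2 * M * (η + e) := hqb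
      _ ≤ 2 * M * (2 * η) := by gcongr
      _ = _ := by ring
  have hLb' : |L| ≤ 2 * M * η := by
    calc |L| ≤ M * (η + e) := hL
      _ ≤ M * (2 * η) := by gcongr
      _ = _ := by ring
  have hWb' : W ≤ 2 * M * η := by
    calc W ≤ M * (η + e) := hW
      _ ≤ M * (2 * η) := by gcongr
      _ = _ := by ring
  have r1 := res_bound M η κ e q L hM hη hη1 he hqb' hκ hLb'
  have p9 : η ^ 9 ≤ η ^ 8 := pow_le_pow_of_le_one hη.le hη1 (by norm_num)
  have p11 : η ^ 11 ≤ η ^ 8 := pow_le_pow_of_le_one hη.le hη1 (by norm_num)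
  have s1 : η / 4 * (e - η ^ 2 * q / 30) ^ 2 ≤ M ^ 2 * η ^ 8 := by
    rw [← sq_abs]
    calc _ ≤ η / 4 * (M * η ^ 5) ^ 2 := by gcongr
      _ = M ^ 2 * η ^ 11 / 4 := by ring
      _ ≤ M ^ 2 * η ^ 8 / 4 := by gcongr
      _ ≤ _ := by
        have : 0 ≤ M ^ 2 * η ^ 8 := by positivity
        linarith
  have s2 : e ^ 3 / 12 ≤ M ^ 3 * η ^ 8 := by
    have : e ^ 3 ≤ (M * η ^ 3) ^ 3 := by
      refine (le_abs_self _).trans ?_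
      rw [abs_pow]; gcongr
    have x : M ^ 3 * η ^ 9 ≤ M ^ 3 * η ^ 8 := by gcongr
    have : 0 ≤ M ^ 3 * η ^ 8 := by positivity
    linarith
  have s3 : η ^ 2 * e ^ 2 ≤ M ^ 2 * η ^ 8 := by
    rw [← sq_abs e]
    calc _ ≤ η ^ 2 * (M * η ^ 3) ^ 2 := by gcongr
      _ = _ := by ring
  have s4 : 3 * M * (η ^ 2 * e ^ 2 + η ^ 8) ≤ 3 * M * (M ^ 2 + 1) * η ^ 8 := by
    calc _ ≤ 3 * M * (M ^ 2 * η ^ 8 + η ^ 8) := by gcongr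
      _ = _ := by ring
  have s5 : (η ^ 6 * W - η ^ 5 * q ^ 2) / 3600 ≤ 16 * M * η ^ 8 + 2 * M ^ 2 * η ^ 8 := by
    have x1 : η ^ 5 * ((η + e) * W - q ^ 2) ≤ η ^ 5 * (M * (η + e) ^ 4) := by gcongr
    have x2 : η ^ 5 * (M * (η + e) ^ 4) ≤ η ^ 5 * (M * (2 * η) ^ 4) := by gcongr
    have x3 : -(e * W) ≤ M * η ^ 3 * (2 * M * η) := by
      refine (neg_le_abs _).trans ?_
      rw [abs_mul, abs_of_nonneg hW0]
      gcongr
    have x4 : η ^ 5 * (-(e * W)) ≤ η ^ 5 * (M * η ^ 3 * (2 * M * η)) := by gcongr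
    have x5 : M * η ^ 9 ≤ M * η ^ 8 := by gcongr
    have x6 : M ^ 2 * η ^ 9 ≤ M ^ 2 * η ^ 8 := by gcongr
    have x7 : 0 ≤ M * η ^ 8 := by positivity
    have x8 : 0 ≤ M ^ 2 * η ^ 8 := by positivity
    linarith
  have d1 : B * (η + e) ^ 8 ≤ 256 * B * η ^ 8 := by
    calc B * (η + e) ^ 8 ≤ B * (2 * η) ^ 8 := by gcongr
      _ = _ := by ring
  have d2 := (abs_le.1 hD).2
  have r2 := (abs_le.1 r1).2
  linarith


structure Conf (x x1 : ℝ → ℝ × ℝ) (lam : ℝ) (C : Set (ℝ × ℝ)) : Prop where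
  hlam : 0 < lam
  hd : ∀ t, HasDerivAt x (x1 t) t
  hc : Continuous x1
  hper : ∀ t, x (t + lam) = x t
  star : ∀ a b c, a < b → b < c → c < a + lam → 0 < om (x b - x a) (x c - x a)
  hcomp : IsCompact C
  hconv : Convex ℝ C
  hfr : ∀ p ∈ frontier C, ∃ t, x t = p
  hmem : ∀ t, x t ∈ frontier C

noncomputable def Dcap (x x1 : ℝ → ℝ × ℝ) (a b : ℝ) : ℝ := 1 / 2 * ∫ t in a..b, om (x t - x a) (x1 t)

lemma om_self (u : ℝ × ℝ) : om u u = 0 := by unfold om; ring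
lemma om_zero_left (u : ℝ × ℝ) : om 0 u = 0 := by simp [om]
lemma om_zero_right (u : ℝ × ℝ) : om u 0 = 0 := by simp [om]
lemma om_add_right (u v w : ℝ × ℝ) : om u (v + w) = om u v + om u w := by simp [om]; ring
lemma om_add_left (u v w : ℝ × ℝ) : om (u + v) w = om u w + om v w := by simp [om]; ring
lemma om_smul_right (r : ℝ) (u v : ℝ × ℝ) : om u (r • v) = r * om u v := by simp [om]; ring
lemma om_smul_left (r : ℝ) (u v : ℝ × ℝ) : om (r • u) v = r * om u v := by simp [om]; ring
lemma om_swap (u v : ℝ × ℝ) : om u v = - om v u := by simp [om]; ring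

lemma om_deriv_right (u : ℝ × ℝ) (y : ℝ → ℝ × ℝ) (y' : ℝ × ℝ) (t : ℝ) (h : HasDerivAt y y' t) :
    HasDerivAt (fun s => om u (y s)) (om u y') t := by
  have h1 : HasDerivAt (fun s => (y s).1) y'.1 t := (ContinuousLinearMap.fst ℝ ℝ ℝ).hasFDerivAt.comp_hasDerivAt t h
  have h2 : HasDerivAt (fun s => (y s).2) y'.2 t := (ContinuousLinearMap.snd ℝ ℝ ℝ).hasFDerivAt.comp_hasDerivAt t h
  exact (h2.const_mul u.1).sub (h1.const_mul u.2)

namespace Conf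
variable {x x1 : ℝ → ℝ × ℝ} {lam : ℝ} {C : Set (ℝ × ℝ)}

lemma cont (hC : Conf x x1 lam C) : Continuous x :=
  continuous_iff_continuousAt.2 fun t => (hC.hd t).continuousAt

lemma weak (hC : Conf x x1 lam C) (a b c : ℝ) (h1 : a ≤ b) (h2 : b ≤ c) (h3 : c ≤ a + lam) :
    0 ≤ om (x b - x a) (x c - x a) := by
  rcases h1.eq_or_lt with rfl | h1
  · simp [om_zero_left]
  rcases h2.eq_or_lt with rfl | h2
  · rw [om_self]
  rcases h3.eq_or_lt with rfl | h3
  · simp [hC.hper, om_zero_right]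
  exact (hC.star a b c h1 h2 h3).le

lemma nn (hC : Conf x x1 lam C) (a t : ℝ) (h1 : a ≤ t) (h2 : t ≤ a + lam) :
    0 ≤ om (x t - x a) (x1 t) := by
  rcases h2.eq_or_lt with rfl | h2
  · simp [hC.hper, om_zero_left]
  have hd : HasDerivAt (fun s => om (x t - x a) (x s - x a)) (om (x t - x a) (x1 t)) t :=
    om_deriv_right _ _ _ _ ((hC.hd t).sub_const _)
  have h := (hasDerivWithinAt_iff_tendsto_slope' (s := Set.Ioi t) (by simp)).1 hd.hasDerivWithinAt
  refine ge_of_tendsto h ?_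
  filter_upwards [Ioo_mem_nhdsGT h2] with s hs
  rw [slope_def_field, om_self, sub_zero]
  exact div_nonneg (hC.weak a t s h1 hs.1.le hs.2.le) (by linarith [hs.1])

lemma contom (hC : Conf x x1 lam C) (o : ℝ × ℝ) : Continuous fun t => om (x t - o) (x1 t) := by
  have := hC.cont
  have := hC.hc
  unfold om; fun_prop

lemma int_shift (hC : Conf x x1 lam C) (o : ℝ × ℝ) (a b : ℝ) :
    ∫ t in a..b, om (x t - o) (x1 t) =
      (∫ t in a..b, om (x t - x a) (x1 t)) + om (x a - o) (x b - o) := by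
  have e : ∀ t, om (x t - o) (x1 t) = om (x t - x a) (x1 t) + om (x a - o) (x1 t) := by
    intro t; rw [← om_add_left]; congr 1; abel
  simp_rw [e]
  have hc := hC.hc
  have hc2 : Continuous fun t => om (x a - o) (x1 t) := by unfold om; fun_prop
  rw [intervalIntegral.integral_add ((hC.contom _).intervalIntegrable _ _) (hc2.intervalIntegrable _ _)]
  congr 1
  rw [intervalIntegral.integral_eq_sub_of_hasDerivAt (f := fun t => om (x a - o) (x t - o))
    (fun t _ => om_deriv_right _ _ _ _ ((hC.hd t).sub_const _)) (hc2.intervalIntegrable _ _), om_self]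
  ring

lemma Dcap_mono (hC : Conf x x1 lam C) (a b c : ℝ) (h1 : a ≤ b) (h2 : b ≤ c) (h3 : c ≤ a + lam) :
    Dcap x x1 a b ≤ Dcap x x1 a c := by
  unfold Dcap
  rw [← intervalIntegral.integral_add_adjacent_intervals (a := a) (b := b) (c := c)
    ((hC.contom _).intervalIntegrable _ _) ((hC.contom _).intervalIntegrable _ _)]
  have : 0 ≤ ∫ t in b..c, om (x t - x a) (x1 t) :=
    intervalIntegral.integral_nonneg h2 fun t ht => hC.nn a t (h1.trans ht.1) (ht.2.trans h3)
  linarith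

lemma Dcap_nonneg (hC : Conf x x1 lam C) (a b : ℝ) (h1 : a ≤ b) (h3 : b ≤ a + lam) :
    0 ≤ Dcap x x1 a b := by
  have := hC.Dcap_mono a a b le_rfl h1 h3
  simpa [Dcap] using this

/-- area of the whole body -/
lemma vol_le (hC : Conf x x1 lam C) (a : ℝ) :
    volume C ≤ ENNReal.ofReal (1 / 2 * ∫ t in a..(a + lam), om (x t - x a) (x1 t)) := by
  refine le_trans (measure_mono ?_) (fan_volume_le x x1 (x a) a (a + lam) (by linarith [hC.hlam]) hC.hd hC.hc
    fun t ht => hC.nn a t ht.1 ht.2)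
  intro p hp
  have hoC : x a ∈ C := hC.hcomp.isClosed.frontier_subset (hC.hmem a)
  by_cases hpo : p = x a
  · refine ⟨(0, a), ⟨by simp, by simp [hC.hlam.le]⟩, ?_⟩
    simp [fan, hpo]
  set v := p - x a with hv
  have hv0 : v ≠ 0 := sub_ne_zero.2 hpo
  let R : Set ℝ := {r | x a + r • v ∈ C}
  have hRcl : IsClosed R := hC.hcomp.isClosed.preimage (by fun_prop)
  have hR1 : (1:ℝ) ∈ R := by simp [R, hv, hp]
  obtain ⟨b, hb⟩ := hC.hcomp.isBounded.exists_norm_le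
  have hRb : BddAbove R := by
    refine ⟨(b + ‖x a‖) / ‖v‖, fun r hr => ?_⟩
    have hvp : 0 < ‖v‖ := norm_pos_iff.2 hv0
    rw [le_div_iff₀ hvp]
    have h1 := hb _ hr
    have h2 : ‖r • v‖ ≤ ‖x a + r • v‖ + ‖x a‖ := by
      have := norm_sub_le (x a + r • v) (x a)
      simpa using this
    rw [norm_smul] at h2
    have : r * ‖v‖ ≤ ‖r‖ * ‖v‖ := by gcongr; exact le_abs_self r
    linarith
  set rs := sSup R with hrs
  have hrsR : rs ∈ R := hRcl.csSup_mem ⟨1, hR1⟩ hRb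
  have hrs1 : 1 ≤ rs := le_csSup hRb hR1
  have hfront : x a + rs • v ∈ frontier C := by
    rw [hC.hcomp.isClosed.frontier_eq]
    refine ⟨hrsR, fun hint => ?_⟩
    have hopen : IsOpen {r : ℝ | x a + r • v ∈ interior C} :=
      isOpen_interior.preimage (by fun_prop)
    obtain ⟨ε, hε, hball⟩ := Metric.isOpen_iff.1 hopen rs hint
    have hmm : x a + (rs + ε / 2) • v ∈ interior C := hball (by
      rw [Metric.mem_ball, Real.dist_eq, add_sub_cancel_left, abs_of_pos (by linarith)]; linarith)
    have : rs + ε / 2 ∈ R := (interior_subset hmm : x a + (rs + ε / 2) • v ∈ C)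
    have := le_csSup hRb this
    linarith
  obtain ⟨t', ht'⟩ := hC.hfr _ hfront
  obtain ⟨t, ht, hte⟩ := Function.Periodic.exists_mem_Ico (f := x) (c := lam) hC.hper hC.hlam t' a
  refine ⟨(1 / rs, t), ⟨⟨by positivity, by simpa using inv_le_one_of_one_le₀ hrs1⟩, Set.Ico_subset_Icc_self ht⟩, ?_⟩
  simp only [fan]
  rw [← hte, ht', add_sub_cancel_left, smul_smul, one_div, inv_mul_cancel₀ (by linarith), one_smul, hv]
  abel

lemma tmono (t : ℕ → ℝ) (n : ℕ) (hm : ∀ i < n, t i < t (i + 1)) :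
    ∀ i j, i ≤ j → j ≤ n → t i ≤ t j := by
  intro i j hij
  induction j, hij using Nat.le_induction with
  | base => intro _; exact le_rfl
  | succ j hij ih => intro hj; exact (ih (by omega)).trans (hm j (by omega)).le

lemma tsmono (t : ℕ → ℝ) (n : ℕ) (hm : ∀ i < n, t i < t (i + 1)) :
    ∀ i j, i < j → j ≤ n → t i < t j := by
  intro i j hij hj
  exact (hm i (by omega)).trans_le (tmono t n hm (i + 1) j hij hj)

lemma cap_packing (hC : Conf x x1 lam C) (t : ℕ → ℝ) (n : ℕ) (hn : 2 ≤ n)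
    (hm : ∀ i < n, t i < t (i + 1)) (hend : t n = t 0 + lam) (S : Finset (ℝ × ℝ))
    (hS : ∀ p ∈ S, ∃ i < n, p = x (t i)) :
    ∑ i ∈ Finset.range n, Dcap x x1 (t i) (t (i + 1)) ≤
      (volume C).toReal - (volume (convexHull ℝ (S : Set (ℝ × ℝ)))).toReal := by
  have hmo := tmono t n hm
  have hsm := tsmono t n hm
  have hgap : ∀ i < n, t (i + 1) < t i + lam := by
    intro i hi
    rcases Nat.eq_zero_or_pos i with rfl | h0
    · rw [← hend]; exact hsm _ _ (by omega) le_rfl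
    · have := hmo (i + 1) n (by omega) le_rfl
      have := hsm 0 i h0 hi.le
      linarith
  let Kp : ℕ → Set (ℝ × ℝ) := fun i => fan x (x (t i)) '' (Set.Ioo (0:ℝ) 1 ×ˢ Set.Ioo (t i) (t (i + 1)))
  have hvol : ∀ i < n, MeasurableSet (Kp i) ∧ volume (Kp i) = ENNReal.ofReal (Dcap x x1 (t i) (t (i + 1))) := by
    intro i hi
    refine fan_volume x x1 (x (t i)) (t i) (t (i + 1)) (hm i hi).le hC.hd hC.hc ?_ ?_
    · intro s hs u hu hsu
      exact hC.star _ _ _ hs.1 hsu (hu.2.trans (hgap i hi))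
    · intro s hs
      exact hC.nn _ _ hs.1.le (hs.2.le.trans (hgap i hi).le)
  have hclosed := hC.hcomp.isClosed
  have hxC : ∀ s, x s ∈ C := fun s => hclosed.frontier_subset (hC.hmem s)
  have hKC : ∀ i, Kp i ⊆ C := by
    rintro i _ ⟨⟨r, s⟩, ⟨hr, hs⟩, rfl⟩
    simp only [fan]
    exact hC.hconv.add_smul_sub_mem (hxC _) (hxC _) ⟨hr.1.le, hr.2.le⟩
  -- halfplanes
  let Hp : ℕ → Set (ℝ × ℝ) := fun i => {p | 0 ≤ om (x (t (i + 1)) - x (t i)) (p - x (t i))}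
  have hHconv : ∀ i, Convex ℝ (Hp i) := by
    intro i p hp q hq a b ha hb hab
    simp only [Hp, Set.mem_setOf_eq] at *
    have : a • p + b • q - x (t i) = a • (p - x (t i)) + b • (q - x (t i)) := by
      rw [smul_sub, smul_sub]
      have : x (t i) = a • x (t i) + b • x (t i) := by rw [← add_smul, hab, one_smul]
      nth_rewrite 1 [this]; abel
    rw [this, om_add_right, om_smul_right, om_smul_right]
    positivity
  have hHx : ∀ i < n, ∀ s, t (i + 1) ≤ s → s ≤ t i + lam → x s ∈ Hp i := by
    intro i hi s h1 h2
    exact hC.weak _ _ _ (hm i hi).le h1 h2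
  have hKneg : ∀ i < n, ∀ p ∈ Kp i, p ∉ Hp i := by
    rintro i hi _ ⟨⟨r, s⟩, ⟨hr, hs⟩, rfl⟩ hmem
    simp only [Hp, fan, Set.mem_setOf_eq, add_sub_cancel_left, om_smul_right] at hmem
    have := hC.star (t i) s (t (i + 1)) hs.1 hs.2 (hgap i hi)
    rw [om_swap] at this
    have := hr.1
    simp only at this
    nlinarith
  have hHS : ∀ i < n, convexHull ℝ (S : Set (ℝ × ℝ)) ⊆ Hp i := by
    intro i hi
    refine convexHull_min ?_ (hHconv i)
    intro p hp
    obtain ⟨j, hj, rfl⟩ := hS p hp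
    rcases le_or_gt j i with h | h
    · rw [← hC.hper]
      refine hHx i hi _ ?_ ?_
      · have h1 := hmo (i + 1) n (by omega) le_rfl
        have h2 := hmo 0 j (by omega) (by omega)
        linarith
      · linarith [hmo j i h hi.le]
    · refine hHx i hi _ (hmo _ _ h hj.le) ?_
      have h1 := hmo j n hj.le le_rfl
      have h2 := hmo 0 i (by omega) hi.le
      linarith
  have hKH : ∀ i j, i < j → j < n → Kp j ⊆ Hp i := by
    rintro i j hij hj _ ⟨⟨r, s⟩, ⟨hr, hs⟩, rfl⟩
    simp only at hr hs
    have q1 := hmo (i + 1) j hij hj.le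
    have q2 := hmo (j + 1) n hj le_rfl
    have q3 := hmo 0 i (by omega) (by omega)
    have h1 : x (t j) ∈ Hp i := hHx i (by omega) _ q1 (by linarith [hs.1, hs.2])
    have h2 : x s ∈ Hp i := hHx i (by omega) _ (by linarith [hs.1]) (by linarith [hs.1, hs.2])
    exact (hHconv i).add_smul_sub_mem h1 h2 ⟨hr.1.le, hr.2.le⟩
  have hdisj : (↑(Finset.range n) : Set ℕ).PairwiseDisjoint Kp := by
    have key : ∀ i j, i < j → j < n → Disjoint (Kp i) (Kp j) := by
      intro i j hij hj
      rw [Set.disjoint_left]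
      exact fun p hp hq => hKneg i (by omega) p hp (hKH i j hij hj hq)
    intro i hi j hj hne
    simp only [Finset.coe_range, Set.mem_Iio] at hi hj
    rcases lt_or_gt_of_ne hne with h | h
    · exact key i j h hj
    · exact (key j i h hi).symm
  have hU : volume (⋃ i ∈ Finset.range n, Kp i) = ∑ i ∈ Finset.range n, volume (Kp i) :=
    measure_biUnion_finset hdisj fun i hi => (hvol i (Finset.mem_range.1 hi)).1
  have hSC : convexHull ℝ (S : Set (ℝ × ℝ)) ⊆ C := by
    refine convexHull_min ?_ hC.hconv
    intro p hp
    obtain ⟨j, hj, rfl⟩ := hS p hp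
    exact hxC _
  have hmS : MeasurableSet (convexHull ℝ (S : Set (ℝ × ℝ))) :=
    (S.finite_toSet.isCompact_convexHull (𝕜 := ℝ)).isClosed.measurableSet
  have hd2 : Disjoint (⋃ i ∈ Finset.range n, Kp i) (convexHull ℝ (S : Set (ℝ × ℝ))) := by
    rw [Set.disjoint_left]
    intro p hp hq
    simp only [Set.mem_iUnion, Finset.mem_range] at hp
    obtain ⟨i, hi, hp⟩ := hp
    exact hKneg i hi p hp (hHS i hi hq)
  have hle : volume (⋃ i ∈ Finset.range n, Kp i) + volume (convexHull ℝ (S : Set (ℝ × ℝ))) ≤ volume C := by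
    rw [← measure_union hd2 hmS]
    refine measure_mono (Set.union_subset ?_ hSC)
    exact Set.iUnion₂_subset fun i _ => hKC i
  have hfin : volume C ≠ ⊤ := hC.hcomp.measure_lt_top.ne
  have hfinS : volume (convexHull ℝ (S : Set (ℝ × ℝ))) ≠ ⊤ := ne_top_of_le_ne_top hfin (measure_mono hSC)
  rw [hU, Finset.sum_congr rfl fun i hi => (hvol i (Finset.mem_range.1 hi)).2,
    ← ENNReal.ofReal_sum_of_nonneg fun i hi => hC.Dcap_nonneg _ _ (hm i (Finset.mem_range.1 hi)).le
      (hgap i (Finset.mem_range.1 hi)).le] at hle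
  have := ENNReal.toReal_mono hfin hle
  rw [ENNReal.toReal_add ENNReal.ofReal_ne_top hfinS, ENNReal.toReal_ofReal (Finset.sum_nonneg fun i hi => hC.Dcap_nonneg _ _ (hm i (Finset.mem_range.1 hi)).le
      (hgap i (Finset.mem_range.1 hi)).le)] at this
  linarith

lemma tri_packing (hC : Conf x x1 lam C) (t : ℕ → ℝ) (n : ℕ) 
    (hm : ∀ i < n, t i < t (i + 1)) (hend : t n = t 0 + lam) (S : Finset (ℝ × ℝ))
    (hS : ∀ i < n, x (t i) ∈ S) :
    ∑ i ∈ Finset.range n, 1 / 2 * om (x (t i) - x (t 0)) (x (t (i + 1)) - x (t 0)) ≤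
      (volume (convexHull ℝ (S : Set (ℝ × ℝ)))).toReal := by
  have hmo := tmono t n hm
  have hsm := tsmono t n hm
  set o := x (t 0) with ho
  let F := (Finset.range n).filter fun i => 1 ≤ i ∧ i + 1 < n
  have hFs : ∑ i ∈ Finset.range n, 1 / 2 * om (x (t i) - o) (x (t (i + 1)) - o) =
      ∑ i ∈ F, 1 / 2 * om (x (t i) - o) (x (t (i + 1)) - o) := by
    symm
    refine Finset.sum_subset (Finset.filter_subset _ _) ?_
    intro i hi hni
    simp only [F, Finset.mem_filter, Finset.mem_range] at hi hni
    have : i = 0 ∨ i + 1 = n := by omega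
    rcases this with rfl | h
    · rw [← ho, sub_self, om_zero_left, mul_zero]
    · rw [h, hend, hC.hper, ← ho, sub_self, om_zero_right, mul_zero]
  rw [hFs]
  let y : ℕ → ℝ → ℝ × ℝ := fun i u => x (t i) + u • (x (t (i + 1)) - x (t i))
  have hyd : ∀ i u, HasDerivAt (y i) (x (t (i + 1)) - x (t i)) u := by
    intro i u
    have := ((hasDerivAt_id u).smul_const (x (t (i + 1)) - x (t i))).const_add (x (t i))
    exact this.congr_deriv (one_smul _ _)
  have hyo : ∀ i u, y i u - o = (1 - u) • (x (t i) - o) + u • (x (t (i + 1)) - o) := by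
    intro i u
    simp only [y]
    module
  have hpos : ∀ i ∈ F, 0 < om (x (t i) - o) (x (t (i + 1)) - o) := by
    intro i hi
    simp only [F, Finset.mem_filter, Finset.mem_range] at hi
    refine hC.star _ _ _ (hsm 0 i (by omega) (by omega)) (hm i (by omega)) ?_
    rw [← hend]; exact hsm _ _ (by omega) le_rfl
  let T : ℕ → Set (ℝ × ℝ) := fun i => fan (y i) o '' (Set.Ioo (0:ℝ) 1 ×ˢ Set.Ioo 0 1)
  have hom : ∀ i u, om (y i u - o) (x (t (i + 1)) - x (t i)) = om (x (t i) - o) (x (t (i + 1)) - o) := by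
    intro i u
    rw [hyo]
    simp [om]; ring
  have hvol : ∀ i ∈ F, MeasurableSet (T i) ∧
      volume (T i) = ENNReal.ofReal (1 / 2 * om (x (t i) - o) (x (t (i + 1)) - o)) := by
    intro i hi
    have h := fan_volume (y i) (fun _ => x (t (i + 1)) - x (t i)) o 0 1 zero_le_one (hyd i) continuous_const ?_ ?_
    · refine ⟨h.1, h.2.trans ?_⟩
      simp only [hom]
      simp
    · intro s hs u hu hsu
      have e : om (y i s - o) (y i u - o) = (u - s) * om (x (t i) - o) (x (t (i + 1)) - o) := by
        rw [hyo, hyo]; simp [om]; ring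
      rw [e]
      exact mul_pos (by linarith) (hpos i hi)
    · intro s hs
      rw [hom]; exact (hpos i hi).le
  have hTS : ∀ i ∈ F, T i ⊆ convexHull ℝ (S : Set (ℝ × ℝ)) := by
    rintro i hi _ ⟨⟨r, s⟩, ⟨hr, hs⟩, rfl⟩
    simp only [F, Finset.mem_filter, Finset.mem_range] at hi
    have hcv := convex_convexHull ℝ (S : Set (ℝ × ℝ))
    have g : ∀ j < n, x (t j) ∈ convexHull ℝ (S : Set (ℝ × ℝ)) :=
      fun j hj => subset_convexHull ℝ _ (hS j hj)
    have h1 : y i s ∈ convexHull ℝ (S : Set (ℝ × ℝ)) :=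
      hcv.add_smul_sub_mem (g i (by omega)) (g (i + 1) (by omega)) ⟨hs.1.le, hs.2.le⟩
    exact hcv.add_smul_sub_mem (g 0 (by omega)) h1 ⟨hr.1.le, hr.2.le⟩
  have hdisj : (F : Set ℕ).PairwiseDisjoint T := by
    have key : ∀ i ∈ F, ∀ j ∈ F, i < j → Disjoint (T i) (T j) := by
      intro i hi j hj hij
      rw [Set.disjoint_left]
      rintro p ⟨⟨r, s⟩, ⟨hr, hs⟩, rfl⟩ ⟨⟨r', s'⟩, ⟨hr', hs'⟩, he⟩
      simp only [fan, add_right_inj] at he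
      simp only at hr hs hr' hs'
      have hp := hpos i hi
      have h1 : om (x (t (i + 1)) - o) (r • (y i s - o)) < 0 := by
        have e : om (x (t (i + 1)) - o) (r • (y i s - o)) =
          - (r * (1 - s) * om (x (t i) - o) (x (t (i + 1)) - o)) := by
          rw [hyo]; simp [om]; ring
        rw [e]
        have : 0 < r * (1 - s) * om (x (t i) - o) (x (t (i + 1)) - o) :=
          mul_pos (mul_pos hr.1 (by linarith [hs.2])) hp
        linarith
      have h2 : 0 ≤ om (x (t (i + 1)) - o) (r' • (y j s' - o)) := by
        rw [hyo, om_smul_right, om_add_right, om_smul_right, om_smul_right]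
        simp only [F, Finset.mem_filter, Finset.mem_range] at hi hj
        have w1 : 0 ≤ om (x (t (i + 1)) - o) (x (t j) - o) :=
          hC.weak _ _ _ (hmo _ _ (by omega) (by omega)) (hmo _ _ (by omega) (by omega))
            (by rw [← hend]; exact hmo _ _ (by omega) le_rfl)
        have w2 : 0 ≤ om (x (t (i + 1)) - o) (x (t (j + 1)) - o) :=
          hC.weak _ _ _ (hmo _ _ (by omega) (by omega)) (hmo _ _ (by omega) (by omega))
            (by rw [← hend]; exact hmo _ _ (by omega) le_rfl)
        have v1 := hr'.1
        have v2 := hs'.1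
        have v3 : 0 ≤ 1 - s' := by linarith [hs'.2]
        positivity
      rw [he] at h2
      linarith
    intro i hi j hj hne
    rcases lt_or_gt_of_ne hne with h | h
    · exact key i hi j hj h
    · exact (key j hj i hi h).symm
  have hU : volume (⋃ i ∈ F, T i) = ∑ i ∈ F, volume (T i) :=
    measure_biUnion_finset hdisj fun i hi => (hvol i hi).1
  have hle : volume (⋃ i ∈ F, T i) ≤ volume (convexHull ℝ (S : Set (ℝ × ℝ))) :=
    measure_mono (Set.iUnion₂_subset hTS)
  have hfinS : volume (convexHull ℝ (S : Set (ℝ × ℝ))) ≠ ⊤ :=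
    (S.finite_toSet.isCompact_convexHull (𝕜 := ℝ)).measure_lt_top.ne
  have hnn : ∀ i ∈ F, 0 ≤ 1 / 2 * om (x (t i) - o) (x (t (i + 1)) - o) := fun i hi => by
    have := hpos i hi; positivity
  rw [hU, Finset.sum_congr rfl fun i hi => (hvol i hi).2, ← ENNReal.ofReal_sum_of_nonneg hnn] at hle
  have := ENNReal.toReal_mono hfinS hle
  rwa [ENNReal.toReal_ofReal (Finset.sum_nonneg hnn)] at this

lemma poly_upper (hC : Conf x x1 lam C) (t : ℕ → ℝ) (n : ℕ) 
    (hm : ∀ i < n, t i < t (i + 1)) (hend : t n = t 0 + lam) (S : Finset (ℝ × ℝ))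
    (hS : ∀ i < n, x (t i) ∈ S) :
    (volume C).toReal - (volume (convexHull ℝ (S : Set (ℝ × ℝ)))).toReal ≤
    ∑ i ∈ Finset.range n, Dcap x x1 (t i) (t (i + 1)) := by
  have h1 := hC.tri_packing t n hm hend S hS
  have h2 := ENNReal.toReal_mono ENNReal.ofReal_ne_top (hC.vol_le (t 0))
  rw [ENNReal.toReal_ofReal] at h2
  swap
  · have := intervalIntegral.integral_nonneg (μ := volume) (a := t 0) (b := t 0 + lam) (by linarith [hC.hlam])
      fun s hs => hC.nn (t 0) s hs.1 hs.2
    positivity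
  have h3 : ∑ i ∈ Finset.range n, (∫ s in (t i)..(t (i + 1)), om (x s - x (t 0)) (x1 s)) =
      ∫ s in (t 0)..(t n), om (x s - x (t 0)) (x1 s) :=
    intervalIntegral.sum_integral_adjacent_intervals fun i _ => (hC.contom _).intervalIntegrable _ _
  rw [← hend, ← h3] at h2
  rw [Finset.mul_sum] at h2
  have h4 : ∀ i ∈ Finset.range n, 1 / 2 * (∫ s in (t i)..(t (i + 1)), om (x s - x (t 0)) (x1 s)) =
      Dcap x x1 (t i) (t (i + 1)) + 1 / 2 * om (x (t i) - x (t 0)) (x (t (i + 1)) - x (t 0)) := by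
    intro i _
    rw [hC.int_shift, Dcap]; ring
  rw [Finset.sum_congr rfl h4, Finset.sum_add_distrib] at h2
  linarith

end Conf


structure Ana (x x1 x2 : ℝ → ℝ × ℝ) (k k1 k2 k3 : ℝ → ℝ) (lam M : ℝ) : Prop where
  hd : ∀ t, HasDerivAt x (x1 t) t
  hd1 : ∀ t, HasDerivAt x1 (x2 t) t
  hd2 : ∀ t, HasDerivAt x2 (-(k t) • x1 t) t
  aff : ∀ t, om (x1 t) (x2 t) = 1
  hk : ∀ t, HasDerivAt k (k1 t) t
  hk1 : ∀ t, HasDerivAt k1 (k2 t) t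
  hk2 : ∀ t, HasDerivAt k2 (k3 t) t
  pk : ∀ t, k (t + lam) = k t
  pk1 : ∀ t, k1 (t + lam) = k1 t
  hM : 1 ≤ M
  bk : ∀ t, |k t| ≤ M
  bk1 : ∀ t, |k1 t| ≤ M
  bk2 : ∀ t, |k2 t| ≤ M
  bk3 : ∀ t, |k3 t| ≤ M
  bf : ∀ a t, |om (x t - x a) (x1 t)| ≤ M

lemma om_deriv (y z : ℝ → ℝ × ℝ) (y' z' : ℝ × ℝ) (t : ℝ) (h : HasDerivAt y y' t) (h' : HasDerivAt z z' t) :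
    HasDerivAt (fun s => om (y s) (z s)) (om y' (z t) + om (y t) z') t := by
  have h1 : HasDerivAt (fun s => (y s).1) y'.1 t := (ContinuousLinearMap.fst ℝ ℝ ℝ).hasFDerivAt.comp_hasDerivAt t h
  have h2 : HasDerivAt (fun s => (y s).2) y'.2 t := (ContinuousLinearMap.snd ℝ ℝ ℝ).hasFDerivAt.comp_hasDerivAt t h
  have h3 : HasDerivAt (fun s => (z s).1) z'.1 t := (ContinuousLinearMap.fst ℝ ℝ ℝ).hasFDerivAt.comp_hasDerivAt t h'
  have h4 : HasDerivAt (fun s => (z s).2) z'.2 t := (ContinuousLinearMap.snd ℝ ℝ ℝ).hasFDerivAt.comp_hasDerivAt t h'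
  refine ((h1.mul h4).sub (h2.mul h3)).congr_deriv ?_
  unfold om; ring

namespace Ana
variable {x x1 x2 : ℝ → ℝ × ℝ} {k k1 k2 k3 : ℝ → ℝ} {lam M : ℝ}

lemma shift {E : Type*} [NormedAddCommGroup E] [NormedSpace ℝ E] {f f' : ℝ → E} (h : ∀ t, HasDerivAt f (f' t) t) (a s : ℝ) :
    HasDerivAt (fun s => f (a + s)) (f' (a + s)) s := (h (a + s)).comp_const_add a s

lemma fderiv1 (H : Ana x x1 x2 k k1 k2 k3 lam M) (a s : ℝ) :
    HasDerivAt (fun s => om (x (a + s) - x a) (x1 (a + s))) (om (x (a + s) - x a) (x2 (a + s))) s := by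
  refine (om_deriv _ _ _ _ s ((shift H.hd a s).sub_const _) (shift H.hd1 a s)).congr_deriv ?_
  rw [om_self, zero_add]

lemma gderiv1 (H : Ana x x1 x2 k k1 k2 k3 lam M) (a s : ℝ) :
    HasDerivAt (fun s => om (x (a + s) - x a) (x2 (a + s)))
      (1 - k (a + s) * om (x (a + s) - x a) (x1 (a + s))) s := by
  refine (om_deriv _ _ _ _ s ((shift H.hd a s).sub_const _) (shift H.hd2 a s)).congr_deriv ?_
  rw [H.aff, om_smul_right]; ring

lemma contk (H : Ana x x1 x2 k k1 k2 k3 lam M) : Continuous k :=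
  continuous_iff_continuousAt.2 fun t => (H.hk t).continuousAt
lemma contk1 (H : Ana x x1 x2 k k1 k2 k3 lam M) : Continuous k1 :=
  continuous_iff_continuousAt.2 fun t => (H.hk1 t).continuousAt
lemma contk2 (H : Ana x x1 x2 k k1 k2 k3 lam M) : Continuous k2 :=
  continuous_iff_continuousAt.2 fun t => (H.hk2 t).continuousAt
lemma contf (H : Ana x x1 x2 k k1 k2 k3 lam M) (a : ℝ) : Continuous fun t => om (x t - x a) (x1 t) := by
  have h1 : Continuous x := continuous_iff_continuousAt.2 fun t => (H.hd t).continuousAt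
  have h2 : Continuous x1 := continuous_iff_continuousAt.2 fun t => (H.hd1 t).continuousAt
  unfold om; fun_prop

lemma prim {f : ℝ → ℝ} (hf : Continuous f) (a s : ℝ) :
    HasDerivAt (fun s => ∫ t in a..(a + s), f t) (f (a + s)) s :=
  HasDerivAt.comp_const_add a s (hf.integral_hasStrictDerivAt a (a + s)).hasDerivAt

lemma cap_expand (H : Ana x x1 x2 k k1 k2 k3 lam M) : ∃ B, 0 ≤ B ∧ ∀ a h, 0 ≤ h → h ≤ 1 →
    |Dcap x x1 a (a + h) - (h^3/12 - h^4*(∫ t in a..(a+h), k t)/240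
      + h^6*(∫ t in a..(a+h), (k t ^ 2 + k2 t))/10080)| ≤ B*h^8 := by
  obtain ⟨B, hB, hE⟩ := expand M (by linarith [H.hM])
  refine ⟨B, hB, fun a h h0 h1 => ?_⟩
  have c1 := H.contk
  have c2 := H.contk2
  refine hE (fun s => om (x (a + s) - x a) (x1 (a + s))) (fun s => om (x (a + s) - x a) (x2 (a + s)))
    (fun s => k (a + s)) (fun s => k1 (a + s)) (fun s => k2 (a + s)) (fun s => k3 (a + s))
    (fun s => Dcap x x1 a (a + s)) (fun s => ∫ t in a..(a+s), k t) (fun s => ∫ t in a..(a+s), (k t ^ 2 + k2 t))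
    (by simp [om_zero_left]) (by simp [om_zero_left]) (by simp [Dcap]) (by simp) (by simp)
    (H.fderiv1 a) (H.gderiv1 a) (shift H.hk a) (shift H.hk1 a) (shift H.hk2 a)
    (fun s => (prim (H.contf a) a s).const_mul _) (prim H.contk a) (prim (by fun_prop) a)
    (fun s _ _ => H.bf a _) (fun s => H.bk _) (fun s => H.bk1 _) (fun s => H.bk2 _) (fun s => H.bk3 _) h h0 h1

lemma f_pos (H : Ana x x1 x2 k k1 k2 k3 lam M) : ∃ ε, 0 < ε ∧ ∀ a s, 0 < s → s < ε →
    0 < om (x (a + s) - x a) (x1 (a + s)) := by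
  have hM := H.hM
  have hpos : 0 < 2 * (M * (1 + M * M)) := by positivity
  refine ⟨min 1 (1 / (2 * (M * (1 + M * M)))), by positivity, fun a s h0 h1 => ?_⟩
  have h1' := h1.trans_le (min_le_left _ _)
  have h2' := h1.trans_le (min_le_right _ _)
  have := (expand0 M (by linarith) (fun s => om (x (a + s) - x a) (x1 (a + s))) (fun s => om (x (a + s) - x a) (x2 (a + s)))
    (fun s => k (a + s)) (by simp [om_zero_left]) (by simp [om_zero_left]) (H.fderiv1 a) (H.gderiv1 a)
    (fun s _ _ => H.bf a _) (fun s => H.bk _)).2 s h0.le h1'.le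
  rw [lt_div_iff₀ hpos] at h2'
  have h3 := (abs_le.1 this).1
  have h4 : s ^ 4 ≤ s * s ^ 2 := by nlinarith [pow_pos h0 3]
  have h5 : M * (1 + M * M) * s ^ 4 ≤ M * (1 + M * M) * (s * s ^ 2) := by gcongr
  have h6 : 0 < s ^ 2 := by positivity
  nlinarith
end Ana


lemma om_abs_le (u v : ℝ × ℝ) : |om u v| ≤ 2 * (‖u‖ * ‖v‖) := by
  have h1 : |u.1| ≤ ‖u‖ := norm_fst_le u
  have h2 : |u.2| ≤ ‖u‖ := norm_snd_le u
  have h3 : |v.1| ≤ ‖v‖ := norm_fst_le v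
  have h4 : |v.2| ≤ ‖v‖ := norm_snd_le v
  calc |om u v| ≤ |u.1 * v.2| + |u.2 * v.1| := abs_sub _ _
    _ ≤ ‖u‖ * ‖v‖ + ‖u‖ * ‖v‖ := by rw [abs_mul, abs_mul]; gcongr
    _ = _ := by ring

lemma om_zero_par (u v : ℝ × ℝ) (hu : u ≠ 0) (h : om u v = 0) : ∃ r : ℝ, v = r • u := by
  have hq : u.1 ^ 2 + u.2 ^ 2 ≠ 0 := by
    intro h0
    apply hu
    have a1 : u.1 = 0 := by nlinarith [sq_nonneg u.1, sq_nonneg u.2]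
    have a2 : u.2 = 0 := by nlinarith [sq_nonneg u.1, sq_nonneg u.2]
    exact Prod.ext a1 a2
  refine ⟨(v.1 * u.1 + v.2 * u.2) / (u.1 ^ 2 + u.2 ^ 2), ?_⟩
  unfold om at h
  ext
  · simp only [Prod.smul_fst, smul_eq_mul]
    rw [div_mul_eq_mul_div, eq_div_iff hq]
    linear_combination (-u.2) * h
  · simp only [Prod.smul_snd, smul_eq_mul]
    rw [div_mul_eq_mul_div, eq_div_iff hq]
    linear_combination (u.1) * h

lemma seg_int (C : Set (ℝ × ℝ)) (hconv : StrictConvex ℝ C) (a b : ℝ × ℝ) (ha : a ∈ C) (hb : b ∈ C) (hab : a ≠ b)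
    (s : ℝ) (h0 : 0 < s) (h1 : s < 1) : a + s • (b - a) ∉ frontier C := by
  intro h
  have := hconv ha hb hab (a := 1 - s) (b := s) (by linarith) h0 (by ring)
  have e : a + s • (b - a) = (1 - s) • a + s • b := by module
  rw [e] at h
  exact h.2 this

lemma noncol (C : Set (ℝ × ℝ)) (hcl : IsClosed C) (hconv : StrictConvex ℝ C) (a b c : ℝ × ℝ)
    (ha : a ∈ frontier C) (hb : b ∈ frontier C) (hc : c ∈ frontier C) (hab : a ≠ b) (hac : a ≠ c) (hbc : b ≠ c) :
    om (b - a) (c - a) ≠ 0 := by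
  intro h
  have ma := hcl.frontier_subset ha
  have mb := hcl.frontier_subset hb
  have mc := hcl.frontier_subset hc
  obtain ⟨r, hr⟩ := om_zero_par _ _ (sub_ne_zero.2 hab.symm) h
  have hce : c = a + r • (b - a) := by rw [← hr]; abel
  have r0 : r ≠ 0 := by rintro rfl; apply hac; rw [hce]; simp
  have r1 : r ≠ 1 := by rintro rfl; apply hbc; rw [hce]; simp
  rcases lt_or_gt_of_ne r0 with h0 | h0
  · refine seg_int C hconv c b mc mb hbc.symm (-r / (1 - r)) (div_pos (by linarith) (by linarith))
      ((div_lt_one (by linarith)).2 (by linarith)) ?_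
    have : c + (-r / (1 - r)) • (b - c) = a := by
      have e : b - c = (1 - r) • (b - a) := by rw [hce]; module
      rw [e, smul_smul, div_mul_cancel₀ _ (by linarith), hce]; module
    rwa [this]
  rcases lt_or_gt_of_ne r1 with h1 | h1
  · exact seg_int C hconv a b ma mb hab r h0 h1 (hce ▸ hc)
  · refine seg_int C hconv a c ma mc hac r⁻¹ (by positivity) (inv_lt_one_of_one_lt₀ h1) ?_
    rw [hr, smul_smul, inv_mul_cancel₀ r0, one_smul]
    simpa using hb

lemma per_bdd {E : Type*} [NormedAddCommGroup E] (f : ℝ → E) (lam : ℝ) (hlam : 0 < lam)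
    (hf : Continuous f) (hp : ∀ t, f (t + lam) = f t) : ∃ M : ℝ, ∀ t, ‖f t‖ ≤ M := by
  have hb := Function.Periodic.isBounded_of_continuous (f := f) (c := lam) hp hlam.ne' hf
  obtain ⟨M, hM⟩ := hb.exists_norm_le
  exact ⟨M, fun t => hM _ ⟨t, rfl⟩⟩

lemma iter_has {E : Type*} [NormedAddCommGroup E] [NormedSpace ℝ E] (f : ℝ → E) (hf : ContDiff ℝ (⊤ : ℕ∞) f) (n : ℕ) (t : ℝ) :
    HasDerivAt (iteratedDeriv n f) (iteratedDeriv (n + 1) f t) t := by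
  rw [iteratedDeriv_succ]
  exact (hf.differentiable_iteratedDeriv n (by exact_mod_cast WithTop.coe_lt_top n) t).hasDerivAt

lemma iter_per {E : Type*} [NormedAddCommGroup E] [NormedSpace ℝ E] (f : ℝ → E) (lam : ℝ) (hp : ∀ t, f (t + lam) = f t) (n : ℕ) (t : ℝ) :
    iteratedDeriv n f (t + lam) = iteratedDeriv n f t := by
  have h := congrFun (iteratedDeriv_comp_add_const n f lam) t
  have e : (fun z => f (z + lam)) = f := funext hp
  rw [e] at h
  exact h.symm

lemma setup_ana (x : ℝ → ℝ × ℝ) (lam : ℝ) (hlam : 0 < lam)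
    (hx : ContDiff ℝ (⊤ : ℕ∞) x)
    (haff : ∀ t : ℝ, om (deriv x t) (iteratedDeriv 2 x t) = 1)
    (hper : ∀ t : ℝ, x (t + lam) = x t)
    (k : ℝ → ℝ) (hk : ∀ t : ℝ, k t = om (iteratedDeriv 2 x t) (iteratedDeriv 3 x t)) :
    ∃ k1 k2 k3 : ℝ → ℝ, ∃ M, Ana x (deriv x) (iteratedDeriv 2 x) k k1 k2 k3 lam M := by
  have hd := iter_has x hx
  have hpx := iter_per x lam hper
  have e1 : iteratedDeriv 1 x = deriv x := iteratedDeriv_one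
  have hd0 : ∀ t, HasDerivAt x (deriv x t) t := by
    intro t; have := hd 0 t; rwa [iteratedDeriv_zero, e1] at this
  have hd1 : ∀ t, HasDerivAt (deriv x) (iteratedDeriv 2 x t) t := by
    intro t; have := hd 1 t; rwa [e1] at this
  have hks : ContDiff ℝ (⊤ : ℕ∞) k := by
    have : k = fun t => om (iteratedDeriv 2 x t) (iteratedDeriv 3 x t) := funext hk
    rw [this]
    have h2 : ContDiff ℝ (⊤ : ℕ∞) (iteratedDeriv 2 x) := by
      rw [iteratedDeriv_eq_iterate]; exact hx.iterate_deriv 2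
    have h3 : ContDiff ℝ (⊤ : ℕ∞) (iteratedDeriv 3 x) := by
      rw [iteratedDeriv_eq_iterate]; exact hx.iterate_deriv 3
    unfold om
    fun_prop
  have hkp : ∀ t, k (t + lam) = k t := fun t => by rw [hk, hk, hpx, hpx]
  have kd := iter_has k hks
  have kp := iter_per k lam hkp
  have ek : iteratedDeriv 0 k = k := iteratedDeriv_zero
  have kc : ∀ n, Continuous (iteratedDeriv n k) := fun n =>
    continuous_iff_continuousAt.2 fun t => (kd n t).continuousAt
  have xc : ∀ n, Continuous (iteratedDeriv n x) := fun n =>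
    continuous_iff_continuousAt.2 fun t => (hd n t).continuousAt
  obtain ⟨m0, b0⟩ := per_bdd (iteratedDeriv 0 k) lam hlam (kc 0) (kp 0)
  obtain ⟨m1, b1⟩ := per_bdd (iteratedDeriv 1 k) lam hlam (kc 1) (kp 1)
  obtain ⟨m2, b2⟩ := per_bdd (iteratedDeriv 2 k) lam hlam (kc 2) (kp 2)
  obtain ⟨m3, b3⟩ := per_bdd (iteratedDeriv 3 k) lam hlam (kc 3) (kp 3)
  obtain ⟨X0, c0⟩ := per_bdd (iteratedDeriv 0 x) lam hlam (xc 0) (hpx 0)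
  obtain ⟨X1, c1⟩ := per_bdd (iteratedDeriv 1 x) lam hlam (xc 1) (hpx 1)
  rw [iteratedDeriv_zero] at b0 c0
  rw [e1] at c1
  have m0p := (norm_nonneg _).trans (b0 0)
  have m1p := (norm_nonneg _).trans (b1 0)
  have m2p := (norm_nonneg _).trans (b2 0)
  have m3p := (norm_nonneg _).trans (b3 0)
  have X0p := (norm_nonneg _).trans (c0 0)
  have X1p := (norm_nonneg _).trans (c1 0)
  have X2p : 0 ≤ 2 * ((X0 + X0) * X1) := by positivity
  refine ⟨iteratedDeriv 1 k, iteratedDeriv 2 k, iteratedDeriv 3 k, 1 + m0 + m1 + m2 + m3 + 2 * ((X0 + X0) * X1), ?_⟩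
  refine ⟨hd0, hd1, ?_, haff, ?_, kd 1, kd 2, hkp, kp 1, by linarith, ?_, ?_, ?_, ?_, ?_⟩
  · intro t
    refine (hd 2 t).congr_deriv ?_
    have h13 : om (deriv x t) (iteratedDeriv 3 x t) = 0 := by
      have h := om_deriv _ _ _ _ t (hd1 t) (hd 2 t)
      rw [om_self, zero_add] at h
      have e : (fun s => om (deriv x s) (iteratedDeriv 2 x s)) = fun _ => (1:ℝ) := funext haff
      rw [e] at h
      exact h.unique (hasDerivAt_const t 1)
    have ha := haff t
    rw [hk t]
    unfold om at *
    ext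
    · simp only [Prod.smul_fst, smul_eq_mul]
      linear_combination (-(iteratedDeriv 3 x t).1) * ha + (iteratedDeriv 2 x t).1 * h13
    · simp only [Prod.smul_snd, smul_eq_mul]
      linear_combination (-(iteratedDeriv 3 x t).2) * ha + (iteratedDeriv 2 x t).2 * h13
  · intro t; have := kd 0 t; rwa [ek] at this
  · intro t; have := b0 t; rw [Real.norm_eq_abs] at this; linarith
  · intro t; have := b1 t; rw [Real.norm_eq_abs] at this; linarith
  · intro t; have := b2 t; rw [Real.norm_eq_abs] at this; linarith
  · intro t; have := b3 t; rw [Real.norm_eq_abs] at this; linarith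
  · intro a t
    have h1 := om_abs_le (x t - x a) (deriv x t)
    have h2 : ‖x t - x a‖ * ‖deriv x t‖ ≤ (X0 + X0) * X1 := by
      have := norm_sub_le (x t) (x a)
      have := c0 t
      have := c0 a
      have := c1 t
      exact mul_le_mul (by linarith) this (norm_nonneg _) (by linarith)
    linarith

lemma setup_conf (x : ℝ → ℝ × ℝ) (lam : ℝ) (hlam : 0 < lam)
    (hper : ∀ t : ℝ, x (t + lam) = x t)
    (hinj : Set.InjOn x (Set.Ico 0 lam))
    (C : Set (ℝ × ℝ))
    (hcomp : IsCompact C) (hconv : StrictConvex ℝ C)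
    (hbd : x '' Set.Icc 0 lam = frontier C) (x1 x2 : ℝ → ℝ × ℝ) (k k1 k2 k3 : ℝ → ℝ) (M : ℝ)
    (H : Ana x x1 x2 k k1 k2 k3 lam M) : Conf x x1 lam C := by
  have hP : Function.Periodic x lam := hper
  have hmem : ∀ t, x t ∈ frontier C := by
    intro t
    obtain ⟨s, hs, he⟩ := hP.exists_mem_Ico₀ hlam t
    rw [he, ← hbd]
    exact ⟨s, Set.Ico_subset_Icc_self hs, rfl⟩
  have hne : ∀ a b, a < b → b < a + lam → x a ≠ x b := by
    intro a b h1 h2 he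
    have ea : x (toIcoMod hlam 0 a) = x a := by
      rw [← self_sub_toIcoDiv_zsmul]; exact hP.sub_zsmul_eq _
    have eb : x (toIcoMod hlam 0 b) = x b := by
      rw [← self_sub_toIcoDiv_zsmul]; exact hP.sub_zsmul_eq _
    have ma := toIcoMod_mem_Ico hlam 0 a
    have mb := toIcoMod_mem_Ico hlam 0 b
    rw [zero_add] at ma mb
    have := hinj ma mb (by rw [ea, eb, he])
    rw [← self_sub_toIcoDiv_zsmul, ← self_sub_toIcoDiv_zsmul] at this
    have e : b - a = ((toIcoDiv hlam 0 b - toIcoDiv hlam 0 a : ℤ) : ℝ) * lam := by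
      push_cast; simp only [zsmul_eq_mul] at this; linarith
    set z := toIcoDiv hlam 0 b - toIcoDiv hlam 0 a
    have z1 : (0:ℝ) < z := by
      by_contra hz; push Not at hz
      nlinarith
    have z2 : (z:ℝ) < 1 := by
      by_contra hz; push Not at hz
      nlinarith
    have z1' : 0 < z := by exact_mod_cast z1
    have z2' : z < 1 := by exact_mod_cast z2
    omega
  have hcx : Continuous x := continuous_iff_continuousAt.2 fun t => (H.hd t).continuousAt
  refine ⟨hlam, H.hd, continuous_iff_continuousAt.2 fun t => (H.hd1 t).continuousAt, hper, ?_, hcomp, hconv.convex, ?_, hmem⟩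
  · let T : Set (ℝ × ℝ × ℝ) := {p | p.1 < p.2.1 ∧ p.2.1 < p.2.2 ∧ p.2.2 < p.1 + lam}
    have hTc : Convex ℝ T := by
      intro p hp q hq a b ha hb hab
      simp only [T, Set.mem_setOf_eq] at *
      simp only [Prod.fst_add, Prod.snd_add, Prod.smul_fst, Prod.smul_snd, smul_eq_mul]
      have hb' : b = 1 - a := by linarith
      rcases ha.eq_or_lt with rfl | ha
      · have : b = 1 := by linarith
        subst this
        refine ⟨?_, ?_, ?_⟩ <;> linarith
      · have e : a * lam + b * lam = lam := by rw [← add_mul, hab, one_mul]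
        refine ⟨?_, ?_, ?_⟩
        · have := mul_lt_mul_of_pos_left hp.1 ha
          have := mul_le_mul_of_nonneg_left hq.1.le hb
          linarith
        · have := mul_lt_mul_of_pos_left hp.2.1 ha
          have := mul_le_mul_of_nonneg_left hq.2.1.le hb
          linarith
        · have := mul_lt_mul_of_pos_left hp.2.2 ha
          have := mul_le_mul_of_nonneg_left hq.2.2.le hb
          linarith
    let G : ℝ × ℝ × ℝ → ℝ := fun p => om (x p.2.1 - x p.1) (x p.2.2 - x p.1)
    have hG : Continuous G := by
      simp only [G, om]; fun_prop
    have hG0 : ∀ p ∈ T, G p ≠ 0 := by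
      rintro ⟨a, b, c⟩ ⟨h1, h2, h3⟩
      simp only at h1 h2 h3
      exact noncol C hcomp.isClosed hconv _ _ _ (hmem _) (hmem _) (hmem _) (hne _ _ h1 (by linarith))
        (hne _ _ (by linarith) h3) (hne _ _ h2 (by linarith))
    obtain ⟨p0, hp0, hG1⟩ : ∃ p ∈ T, 0 < G p := by
      obtain ⟨ε, hε, hf⟩ := H.f_pos
      set s := min ε lam / 2 with hs
      have s0 : 0 < s := by positivity
      have s1 : s < ε := by
        have := min_le_left ε lam
        have : 0 < min ε lam := by positivity
        linarith
      have s2 : s < lam := by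
        have := min_le_right ε lam
        have : 0 < min ε lam := by positivity
        linarith
      have hfp := hf 0 s s0 s1
      rw [zero_add] at hfp
      have hd : HasDerivAt (fun c => om (x s - x 0) (x c - x 0)) (om (x s - x 0) (x1 s)) s :=
        om_deriv_right _ _ _ _ ((H.hd s).sub_const _)
      have h := (hasDerivWithinAt_iff_tendsto_slope' (s := Set.Ioi s) (by simp)).1 hd.hasDerivWithinAt
      have h' := h.eventually (lt_mem_nhds hfp)
      obtain ⟨c, hc, hc2⟩ := (h'.and (Ioo_mem_nhdsGT s2)).exists
      refine ⟨(0, s, c), ⟨s0, hc2.1, by simpa using hc2.2⟩, ?_⟩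
      rw [slope_def_field, om_self, sub_zero] at hc
      have := mul_pos hc (sub_pos.2 hc2.1)
      rwa [div_mul_cancel₀ _ (sub_pos.2 hc2.1).ne'] at this
    intro a b c h1 h2 h3
    by_contra hcon
    push Not at hcon
    have hm : (a, b, c) ∈ T := ⟨h1, h2, h3⟩
    obtain ⟨q, hq, hq0⟩ := hTc.isPreconnected.intermediate_value hm hp0 hG.continuousOn
      (show (0:ℝ) ∈ Set.Icc _ _ from ⟨hcon, hG1.le⟩)
    exact hG0 q hq hq0
  · intro p hp
    rw [← hbd] at hp
    obtain ⟨t, _, ht⟩ := hp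
    exact ⟨t, ht⟩


noncomputable def Tn (lam η I1 I2 : ℝ) : ℝ :=
  lam * η ^ 2 / 12 - η ^ 4 * I1 / 240 - η ^ 6 * (I2 - I1 ^ 2 / lam) / 3600 + η ^ 6 * I2 / 10080

lemma int_abs_le (u : ℝ → ℝ) (a b M : ℝ) (hab : a ≤ b) (hu : ∀ t, a ≤ t → t ≤ b → |u t| ≤ M) :
    |∫ t in a..b, u t| ≤ M * (b - a) := by
  have := intervalIntegral.norm_integral_le_of_norm_le_const (a := a) (b := b) (C := M) (f := u) (fun t ht => by
    rw [Set.uIoc_of_le hab] at ht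
    exact hu t ht.1.le ht.2)
  rwa [Real.norm_eq_abs, abs_of_nonneg (sub_nonneg.2 hab)] at this

lemma int_sub_sq (u : ℝ → ℝ) (hu : Continuous u) (a b c : ℝ) :
    ∫ t in a..b, (u t - c) ^ 2 = (∫ t in a..b, u t ^ 2) - 2 * c * (∫ t in a..b, u t) + c ^ 2 * (b - a) := by
  have e : ∀ t, (u t - c) ^ 2 = u t ^ 2 - 2 * c * u t + c ^ 2 := fun t => by ring
  simp_rw [e]
  rw [intervalIntegral.integral_add (Continuous.intervalIntegrable (by fun_prop) _ _) (Continuous.intervalIntegrable (by fun_prop) _ _),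
    intervalIntegral.integral_sub (Continuous.intervalIntegrable (by fun_prop) _ _) (Continuous.intervalIntegrable (by fun_prop) _ _),
    intervalIntegral.integral_const_mul, intervalIntegral.integral_const, smul_eq_mul]
  ring

lemma int_sub_c (u : ℝ → ℝ) (hu : Continuous u) (a b c : ℝ) :
    ∫ t in a..b, (u t - c) = (∫ t in a..b, u t) - c * (b - a) := by
  rw [intervalIntegral.integral_sub (Continuous.intervalIntegrable (by fun_prop) _ _) (Continuous.intervalIntegrable (by fun_prop) _ _),
    intervalIntegral.integral_const, smul_eq_mul]
  ring

lemma int_CS (u : ℝ → ℝ) (hu : Continuous u) (a b : ℝ) (hab : a ≤ b) :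
    (∫ t in a..b, u t) ^ 2 ≤ (b - a) * ∫ t in a..b, u t ^ 2 := by
  rcases hab.eq_or_lt with rfl | hab'
  · simp
  have h := int_sub_sq u hu a b ((∫ t in a..b, u t) / (b - a))
  have h0 : 0 ≤ ∫ t in a..b, (u t - (∫ t in a..b, u t) / (b - a)) ^ 2 :=
    intervalIntegral.integral_nonneg hab fun t _ => by positivity
  rw [h] at h0
  set q := ∫ t in a..b, u t
  have hp : 0 < b - a := sub_pos.2 hab'
  have e : (∫ t in a..b, u t ^ 2) - 2 * (q / (b - a)) * q + (q / (b - a)) ^ 2 * (b - a) = (∫ t in a..b, u t ^ 2) - q ^ 2 / (b - a) := by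
    field_simp; ring
  rw [e, sub_nonneg, div_le_iff₀ hp] at h0
  linarith

namespace Ana
variable {x x1 x2 : ℝ → ℝ × ℝ} {k k1 k2 k3 : ℝ → ℝ} {lam M : ℝ}

lemma kappa (H : Ana x x1 x2 k k1 k2 k3 lam M) (hlam : 0 < lam) : |(∫ t in (0:ℝ)..lam, k t) / lam| ≤ M := by
  rw [abs_div, abs_of_pos hlam, div_le_iff₀ hlam]
  simpa using int_abs_le k 0 lam M hlam.le fun t _ _ => H.bk t

lemma facts (H : Ana x x1 x2 k k1 k2 k3 lam M) (κ : ℝ) (hκ : |κ| ≤ M) (a b : ℝ) (hab : a ≤ b) :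
    |∫ t in a..b, k t| ≤ 5 * M ^ 2 * (b - a) ∧ |∫ t in a..b, (k t ^ 2 + k2 t)| ≤ 5 * M ^ 2 * (b - a) ∧
    0 ≤ (∫ t in a..b, (k t - κ) ^ 2) ∧ (∫ t in a..b, (k t - κ) ^ 2) ≤ 5 * M ^ 2 * (b - a) ∧ |κ| ≤ 5 * M ^ 2 ∧
    ((∫ t in a..b, k t) - κ * (b - a)) ^ 2 ≤ (b - a) * ∫ t in a..b, (k t - κ) ^ 2 := by
  have hM := H.hM
  have hM2 : M ≤ M ^ 2 := by nlinarith
  have hc := H.contk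
  refine ⟨int_abs_le _ _ _ _ hab fun t _ _ => ?_, int_abs_le _ _ _ _ hab fun t _ _ => ?_,
    intervalIntegral.integral_nonneg hab fun t _ => by positivity, ?_, by nlinarith, ?_⟩
  · have := H.bk t; nlinarith
  · have h1 : k t ^ 2 ≤ M ^ 2 := sq_le_sq' (abs_le.1 (H.bk t)).1 (abs_le.1 (H.bk t)).2
    have h2 := abs_le.1 (H.bk2 t)
    have := sq_nonneg (k t)
    rw [abs_le]; constructor <;> nlinarith
  · refine (le_abs_self _).trans (int_abs_le _ _ _ _ hab fun t _ _ => ?_)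
    have h1 := abs_le.1 (H.bk t)
    have h2 := abs_le.1 hκ
    have : (k t - κ) ^ 2 ≤ (2 * M) ^ 2 := sq_le_sq' (by linarith) (by linarith)
    rw [abs_of_nonneg (sq_nonneg _)]
    nlinarith
  · have := int_CS (fun t => k t - κ) (by fun_prop) a b hab
    rwa [int_sub_c k hc] at this

lemma sum_linR (H : Ana x x1 x2 k k1 k2 k3 lam M) (hlam : 0 < lam) (η κ : ℝ) (t : ℕ → ℝ) (n : ℕ)
    (hη : n * η = lam) (hκ : κ = (∫ t in (0:ℝ)..lam, k t) / lam)
    (hend : t n = t 0 + lam) :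
    ∑ i ∈ Finset.range n, linR η κ (t (i + 1) - t i) (∫ s in (t i)..(t (i + 1)), k s)
      (∫ s in (t i)..(t (i + 1)), (k s ^ 2 + k2 s)) (∫ s in (t i)..(t (i + 1)), (k s - κ) ^ 2) =
    Tn lam η (∫ t in (0:ℝ)..lam, k t) (∫ t in (0:ℝ)..lam, k t ^ 2) := by
  have hc := H.contk
  have hc2 := H.contk2
  have per : ∀ f : ℝ → ℝ, (∀ s, f (s + lam) = f s) → ∫ s in (t 0)..(t n), f s = ∫ s in (0:ℝ)..lam, f s := by
    intro f hf
    have := Function.Periodic.intervalIntegral_add_eq (f := f) (T := lam) hf (t 0) 0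
    rw [hend, this, zero_add]
  have s1 : ∑ i ∈ Finset.range n, (t (i + 1) - t i) = lam := by
    rw [Finset.sum_range_sub]; linarith
  have s2 : ∑ i ∈ Finset.range n, (∫ s in (t i)..(t (i + 1)), k s) = ∫ s in (0:ℝ)..lam, k s := by
    rw [intervalIntegral.sum_integral_adjacent_intervals fun i _ => Continuous.intervalIntegrable (by fun_prop) _ _]
    exact per _ H.pk
  have s3 : ∑ i ∈ Finset.range n, (∫ s in (t i)..(t (i + 1)), (k s ^ 2 + k2 s)) = ∫ s in (0:ℝ)..lam, k s ^ 2 := by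
    rw [intervalIntegral.sum_integral_adjacent_intervals fun i _ => Continuous.intervalIntegrable (by fun_prop) _ _,
      intervalIntegral.integral_add (Continuous.intervalIntegrable (by fun_prop) _ _) (Continuous.intervalIntegrable (by fun_prop) _ _),
      intervalIntegral.integral_eq_sub_of_hasDerivAt (fun s _ => H.hk1 s) (Continuous.intervalIntegrable (by fun_prop) _ _),
      per (fun s => k s ^ 2) (fun s => by rw [H.pk]), hend, H.pk1]
    ring
  have s4 : ∑ i ∈ Finset.range n, (∫ s in (t i)..(t (i + 1)), (k s - κ) ^ 2) =
      (∫ s in (0:ℝ)..lam, k s ^ 2) - (∫ s in (0:ℝ)..lam, k s) ^ 2 / lam := by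
    rw [intervalIntegral.sum_integral_adjacent_intervals fun i _ => Continuous.intervalIntegrable (by fun_prop) _ _,
      per (fun s => (k s - κ) ^ 2) (fun s => by rw [H.pk]), int_sub_sq k hc, hκ]
    field_simp
    ring
  have e : ∀ h K L W, linR η κ h K L W = (η ^ 3 / 12 - η ^ 3 / 4 + κ * η ^ 5 / 60) + (η ^ 2 / 4 - κ * η ^ 4 / 60) * h
      - η ^ 4 / 240 * K - η ^ 6 / 3600 * W + η ^ 6 / 10080 * L := by
    intro h K L W; unfold linR; ring
  simp_rw [e]
  rw [Finset.sum_add_distrib, Finset.sum_sub_distrib, Finset.sum_sub_distrib, Finset.sum_add_distrib,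
    ← Finset.mul_sum, ← Finset.mul_sum, ← Finset.mul_sum, ← Finset.mul_sum, s1, s2, s3, s4, Finset.sum_const,
    Finset.card_range, nsmul_eq_mul]
  unfold Tn
  linear_combination (η ^ 2 / 12 - η ^ 2 / 4 + κ * η ^ 4 / 60) * hη

lemma cap_pos (H : Ana x x1 x2 k k1 k2 k3 lam M) : ∀ ε, 0 < ε → ∃ e c, 0 < e ∧ e ≤ ε ∧ 0 < c ∧
    ∀ a, c ≤ Dcap x x1 a (a + e) := by
  intro ε hε
  obtain ⟨B, hB, hE⟩ := H.cap_expand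
  have hM := H.hM
  set Q := 10 * M ^ 2 + B with hQ
  have hQp : 0 < Q := by positivity
  set e := min (min ε 1) (1 / (24 * Q)) with he
  have e0 : 0 < e := by positivity
  have e1 : e ≤ 1 := (min_le_left _ _).trans (min_le_right _ _)
  have e2 : e * (24 * Q) ≤ 1 := by
    have : e ≤ 1 / (24 * Q) := min_le_right _ _
    rwa [le_div_iff₀ (by positivity)] at this
  refine ⟨e, e ^ 3 / 24, e0, (min_le_left _ _).trans (min_le_left _ _), by positivity, fun a => ?_⟩
  have h := (abs_le.1 (hE a e e0.le e1)).1
  obtain ⟨h1, h2, -⟩ := H.facts 0 (by simp; linarith) a (a + e) (by linarith)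
  rw [add_sub_cancel_left] at h1 h2
  have h1 := (abs_le.1 h1).2
  have h2 := (abs_le.1 h2).1
  have p4 : e ^ 4 ≤ e ^ 3 := pow_le_pow_of_le_one e0.le e1 (by norm_num)
  have p6 : e ^ 6 ≤ e ^ 3 := pow_le_pow_of_le_one e0.le e1 (by norm_num)
  have p8 : e ^ 8 ≤ e ^ 4 := pow_le_pow_of_le_one e0.le e1 (by norm_num)
  have q1 : e ^ 4 * (∫ t in a..(a+e), k t) ≤ e ^ 4 * (5 * M ^ 2 * e) := by gcongr
  have q1' : e ^ 4 * (5 * M ^ 2 * e) ≤ e ^ 3 * (5 * M ^ 2 * e) := by gcongr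
  have q2 : e ^ 6 * (-(5 * M ^ 2 * e)) ≤ e ^ 6 * (∫ t in a..(a+e), (k t ^ 2 + k2 t)) := by gcongr
  have q2' : e ^ 6 * (5 * M ^ 2 * e) ≤ e ^ 3 * (5 * M ^ 2 * e) := by gcongr
  have q3 : B * e ^ 8 ≤ B * e ^ 4 := by gcongr
  have q4 : e ^ 3 * (e * (24 * Q)) ≤ e ^ 3 * 1 := by gcongr
  have q5 : e ^ 3 * (e * (24 * Q)) = 48 * (e ^ 3 * (5 * M ^ 2 * e)) + 24 * (B * e ^ 4) := by rw [hQ]; ring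
  have q6 : 0 ≤ e ^ 3 * (5 * M ^ 2 * e) := by positivity
  nlinarith
end Ana

lemma params (x : ℝ → ℝ × ℝ) (lam : ℝ) (hlam : 0 < lam) (hp : ∀ t, x (t + lam) = x t) (n : ℕ) (hn : 1 ≤ n)
    (S : Finset (ℝ × ℝ)) (hS : ∀ p ∈ S, ∃ t, x t = p) (hcard : S.card ≤ n) :
    ∃ t : ℕ → ℝ, (∀ i < n, t i < t (i + 1)) ∧ t n = t 0 + lam ∧ ∀ p ∈ S, ∃ i < n, p = x (t i) := by
  classical
  have hS' : ∀ p, ∃ t, t ∈ Set.Ico 0 lam ∧ (p ∈ S → x t = p) := by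
    intro p
    by_cases h : p ∈ S
    · obtain ⟨t, ht⟩ := hS p h
      obtain ⟨s, hs, he⟩ := Function.Periodic.exists_mem_Ico₀ (f := x) (c := lam) hp hlam t
      exact ⟨s, hs, fun _ => by rw [← he, ht]⟩
    · exact ⟨0, ⟨le_rfl, hlam⟩, fun h' => absurd h' h⟩
  choose τ hτ hτx using hS'
  have hP0c : (S.image τ).card ≤ n := Finset.card_image_le.trans hcard
  obtain ⟨P', h1, h2, h3⟩ := (Set.Ico_infinite hlam).exists_superset_ncard_eq (s := (S.image τ : Set ℝ)) (k := n)
    (by intro t ht; simp only [Finset.coe_image, Set.mem_image] at ht; obtain ⟨p, _, rfl⟩ := ht; exact hτ p)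
    (Finset.finite_toSet _) (by rwa [Set.ncard_coe_finset])
  have hfin : P'.Finite := Set.finite_of_ncard_ne_zero (by omega)
  obtain ⟨P, rfl⟩ := hfin.exists_finset_coe
  rw [Set.ncard_coe_finset] at h3
  let e := P.orderEmbOfFin h3
  have he : ∀ i, e i ∈ Set.Ico 0 lam := fun i => h2 (P.orderEmbOfFin_mem h3 i)
  let t : ℕ → ℝ := fun i => if h : i < n then e ⟨i, h⟩ else e ⟨0, by omega⟩ + lam
  have t0 : t 0 = e ⟨0, by omega⟩ := dif_pos (by omega)
  refine ⟨t, ?_, ?_, ?_⟩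
  · intro i hi
    have e1 : t i = e ⟨i, hi⟩ := dif_pos hi
    by_cases h : i + 1 < n
    · have e2 : t (i + 1) = e ⟨i + 1, h⟩ := dif_pos h
      rw [e1, e2]
      exact e.strictMono (by simp)
    · have e2 : t (i + 1) = e ⟨0, by omega⟩ + lam := dif_neg h
      rw [e1, e2]
      have := (he ⟨i, hi⟩).2
      have := (he ⟨0, by omega⟩).1
      linarith
  · rw [t0]; exact dif_neg (by omega)
  · intro p hp
    have : τ p ∈ (P : Set ℝ) := h1 (by simp only [Finset.coe_image]; exact ⟨p, hp, rfl⟩)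
    rw [← P.range_orderEmbOfFin h3] at this
    obtain ⟨⟨i, hi⟩, hie⟩ := this
    refine ⟨i, hi, ?_⟩
    have e1 : t i = e ⟨i, hi⟩ := dif_pos hi
    rw [e1]
    change p = x (P.orderEmbOfFin h3 ⟨i, hi⟩)
    rw [hie, hτx p hp]

lemma lower_bound {x x1 x2 : ℝ → ℝ × ℝ} {k k1 k2 k3 : ℝ → ℝ} {lam M : ℝ} {C : Set (ℝ × ℝ)}
    (hC : Conf x x1 lam C) (H : Ana x x1 x2 k k1 k2 k3 lam M) :
    ∃ c : ℝ, ∀ᶠ n : ℕ in atTop, ∀ S : Finset (ℝ × ℝ), ↑S ⊆ frontier C → S.card ≤ n →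
      Tn lam (lam / n) (∫ t in (0:ℝ)..lam, k t) (∫ t in (0:ℝ)..lam, k t ^ 2) - c * (lam / n) ^ 7 ≤
      (volume C).toReal - (volume (convexHull ℝ (S : Set (ℝ × ℝ)))).toReal := by
  have hlam := hC.hlam
  have hM := H.hM
  obtain ⟨B, hB, hE⟩ := H.cap_expand
  obtain ⟨A, ε, hA, hε, hε1, harc⟩ := arc_lower (5 * M ^ 2) B (by nlinarith) hB
  obtain ⟨e, c0, he, heε, hc0, hcap⟩ := H.cap_pos ε hε
  refine ⟨A * lam, ?_⟩
  set I1 := ∫ t in (0:ℝ)..lam, k t with hI1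
  set I2 := ∫ t in (0:ℝ)..lam, k t ^ 2 with hI2
  have hlim : Tendsto (fun n : ℕ => lam / (n : ℝ)) atTop (𝓝 0) := tendsto_const_div_atTop_nhds_zero_nat lam
  have hT : Tendsto (fun n : ℕ => Tn lam (lam / (n : ℝ)) I1 I2) atTop (𝓝 0) := by
    have hcont : Continuous (fun η => Tn lam η I1 I2) := by unfold Tn; fun_prop
    have := (hcont.tendsto 0).comp hlim
    have e0 : Tn lam 0 I1 I2 = 0 := by unfold Tn; ring
    rwa [e0] at this
  filter_upwards [hT.eventually (gt_mem_nhds hc0), hlim.eventually (gt_mem_nhds hε), eventually_ge_atTop 2]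
    with n hn1 hn2 hn3 S hS hcard
  have hnp : (0:ℝ) < n := by exact_mod_cast (by omega : 0 < n)
  obtain ⟨t, hm, hend, htS⟩ := params x lam hlam hC.hper n (by omega) S (fun p hp => hC.hfr p (hS hp)) hcard
  refine le_trans ?_ (hC.cap_packing t n hn3 hm hend S htS)
  set η := lam / (n:ℝ) with hη
  have hη0 : 0 < η := by positivity
  have hnη : n * η = lam := by rw [hη]; field_simp
  have hκ := H.kappa hlam
  have hmo := Conf.tmono t n hm
  have hgap : ∀ i < n, t (i + 1) ≤ t i + lam := by
    intro i hi
    have h1 := hmo (i + 1) n (by omega) le_rfl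
    have h2 := hmo 0 i (by omega) hi.le
    linarith
  by_cases hg : ∀ i < n, t (i + 1) - t i ≤ ε
  · rw [← H.sum_linR hlam η _ t n hnη rfl hend]
    have e1 : A * lam * η ^ 7 = ∑ i ∈ Finset.range n, A * η ^ 8 := by
      rw [Finset.sum_const, Finset.card_range, nsmul_eq_mul, ← hnη]; ring
    rw [e1, ← Finset.sum_sub_distrib]
    refine Finset.sum_le_sum fun i hi => ?_
    have hi' := Finset.mem_range.1 hi
    have hle := (hm i hi').le
    obtain ⟨f1, f2, f3, f4, f5, f6⟩ := H.facts _ hκ (t i) (t (i + 1)) hle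
    have hh := hE (t i) (t (i + 1) - t i) (by linarith) (by linarith [hg i hi'])
    rw [add_sub_cancel] at hh
    exact harc η (t (i + 1) - t i) _ _ _ _ _ hη0 hn2.le (by linarith) (hg i hi') hh f1 f2 f3 f4 f5 f6
  · push Not at hg
    obtain ⟨i, hi, hig⟩ := hg
    have h1 : Dcap x x1 (t i) (t (i + 1)) ≤ ∑ i ∈ Finset.range n, Dcap x x1 (t i) (t (i + 1)) :=
      Finset.single_le_sum (f := fun i => Dcap x x1 (t i) (t (i + 1)))
        (fun j hj => hC.Dcap_nonneg _ _ (hm j (Finset.mem_range.1 hj)).le (hgap j (Finset.mem_range.1 hj)))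
        (Finset.mem_range.2 hi)
    have h2 := hC.Dcap_mono (t i) (t i + e) (t (i + 1)) (by linarith) (by linarith) (hgap i hi)
    have h3 := hcap (t i)
    have h4 : 0 ≤ A * lam * η ^ 7 := by positivity
    linarith


namespace Ana
variable {x x1 x2 : ℝ → ℝ × ℝ} {k k1 k2 k3 : ℝ → ℝ} {lam M : ℝ}

lemma klip (H : Ana x x1 x2 k k1 k2 k3 lam M) (s t : ℝ) : |k s - k t| ≤ M * |s - t| := by
  have := Convex.norm_image_sub_le_of_norm_hasDerivWithin_le (f := k) (f' := k1) (s := Set.univ) (C := M) (x := t) (y := s)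
    (fun u _ => (H.hk u).hasDerivWithinAt) (fun u _ => H.bk1 u) convex_univ (Set.mem_univ _) (Set.mem_univ _)
  simpa [Real.norm_eq_abs] using this

lemma var_le (H : Ana x x1 x2 k k1 k2 k3 lam M) (κ a b : ℝ) (hab : a ≤ b) :
    (b - a) * (∫ t in a..b, (k t - κ) ^ 2) - ((∫ t in a..b, k t) - κ * (b - a)) ^ 2 ≤ M ^ 2 * (b - a) ^ 4 := by
  have hc := H.contk
  have h1 := int_sub_sq k hc a b κ
  have h2 := int_sub_sq k hc a b (k a)
  have h3 : ∫ t in a..b, (k t - k a) ^ 2 ≤ (M * (b - a)) ^ 2 * (b - a) := by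
    refine (le_abs_self _).trans (int_abs_le _ _ _ _ hab fun t h1 h2 => ?_)
    rw [abs_of_nonneg (sq_nonneg _), ← sq_abs]
    have := H.klip t a
    rw [abs_of_nonneg (sub_nonneg.2 h1)] at this
    have hM := H.hM
    have : |k t - k a| ≤ M * (b - a) := this.trans (by gcongr)
    gcongr
  rw [h2] at h3
  rw [h1]
  have h4 := mul_le_mul_of_nonneg_left h3 (sub_nonneg.2 hab)
  nlinarith [sq_nonneg ((∫ t in a..b, k t) - k a * (b - a))]

lemma shift_diff (H : Ana x x1 x2 k k1 k2 k3 lam M) (κ u η d h : ℝ) (hκ : |κ| ≤ M) (hη : 0 ≤ η) :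
    |(∫ t in u..(u + η), (k t - κ)) - ((∫ t in (u + d)..(u + d + h), k t) - κ * h)| ≤
      M * |d| * η + 2 * M * |h - η| := by
  have hc := H.contk
  have hv : Continuous (fun t => k t - κ) := by fun_prop
  have e1 : (∫ t in (u + d)..(u + d + h), k t) - κ * h = ∫ t in (u + d)..(u + d + h), (k t - κ) := by
    rw [int_sub_c k hc]; ring
  have e2 : ∫ t in (u + d)..(u + d + h), (k t - κ) =
      (∫ t in (u + d)..(u + d + η), (k t - κ)) + ∫ t in (u + d + η)..(u + d + h), (k t - κ) :=
    (intervalIntegral.integral_add_adjacent_intervals (hv.intervalIntegrable _ _) (hv.intervalIntegrable _ _)).symm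
  have e3 : ∫ t in (u + d)..(u + d + η), (k t - κ) = ∫ t in u..(u + η), (k (t + d) - κ) := by
    rw [intervalIntegral.integral_comp_add_right (fun t => k t - κ) d]
    congr 1; ring
  rw [e1, e2, e3, ← sub_sub, ← intervalIntegral.integral_sub (Continuous.intervalIntegrable (by fun_prop) _ _) (Continuous.intervalIntegrable (by fun_prop) _ _)]
  have b1 : |∫ t in u..(u + η), ((k t - κ) - (k (t + d) - κ))| ≤ M * |d| * η := by
    have := int_abs_le (fun t => (k t - κ) - (k (t + d) - κ)) u (u + η) (M * |d|) (by linarith) fun t _ _ => by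
      have := H.klip t (t + d)
      rw [show t - (t + d) = -d by ring, abs_neg] at this
      rwa [sub_sub_sub_cancel_right]
    rwa [add_sub_cancel_left] at this
  have b2 : |∫ t in (u + d + η)..(u + d + h), (k t - κ)| ≤ 2 * M * |h - η| := by
    have := intervalIntegral.norm_integral_le_of_norm_le_const (a := u + d + η) (b := u + d + h) (C := 2 * M)
      (f := fun t => k t - κ) (fun t _ => by
        rw [Real.norm_eq_abs]
        have := abs_sub (k t) κ
        have := H.bk t
        linarith)
    rwa [Real.norm_eq_abs, show u + d + h - (u + d + η) = h - η by ring] at this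
  exact (abs_sub _ _).trans (add_le_add b1 b2)
end Ana

set_option maxHeartbeats 1000000 in
lemma upper_bound {x x1 x2 : ℝ → ℝ × ℝ} {k k1 k2 k3 : ℝ → ℝ} {lam M : ℝ} {C : Set (ℝ × ℝ)}
    (hC : Conf x x1 lam C) (H : Ana x x1 x2 k k1 k2 k3 lam M) :
    ∃ c : ℝ, ∀ᶠ n : ℕ in atTop, ∃ S : Finset (ℝ × ℝ), ↑S ⊆ frontier C ∧ S.card ≤ n ∧
      (volume C).toReal - (volume (convexHull ℝ (S : Set (ℝ × ℝ)))).toReal ≤ 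
      Tn lam (lam / n) (∫ t in (0:ℝ)..lam, k t) (∫ t in (0:ℝ)..lam, k t ^ 2) + c * (lam / n) ^ 7 := by
  classical
  have hlam := hC.hlam
  have hM := H.hM
  have hc := H.contk
  have hM2 : M ≤ M ^ 2 := by nlinarith
  obtain ⟨B, hB, hE⟩ := H.cap_expand
  set M' := M ^ 2 * (7 + lam) with hM'
  have hM'5 : 5 * M ^ 2 ≤ M' := by nlinarith
  have hM'1 : M ^ 2 ≤ M' := by linarith [sq_nonneg M]
  obtain ⟨A, hA, harc⟩ := arc_upper M' B (by nlinarith) hB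
  refine ⟨A * lam, ?_⟩
  have hlim : Tendsto (fun n : ℕ => lam / (n : ℝ)) atTop (𝓝 0) := tendsto_const_div_atTop_nhds_zero_nat lam
  have hpos : (0:ℝ) < 1 / (2 * M) := by positivity
  filter_upwards [hlim.eventually (gt_mem_nhds hpos), eventually_ge_atTop 2]
    with n hn2 hn3
  have hnp : (0:ℝ) < n := by exact_mod_cast (by omega : 0 < n)
  set η := lam / (n:ℝ) with hη
  have hη0 : 0 < η := by positivity
  have hnη : n * η = lam := by rw [hη]; field_simp
  have hMη : M * η < 1 / 2 := by
    rw [lt_div_iff₀ (by positivity)] at hn2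
    linarith
  have hη1 : η < 1 / 2 := by nlinarith
  have hκ := H.kappa hlam
  set κ := (∫ t in (0:ℝ)..lam, k t) / lam with hκd
  have hv : Continuous (fun t => k t - κ) := by fun_prop
  have bv : ∀ t, |k t - κ| ≤ 2 * M := fun t => by
    have := abs_sub (k t) κ
    have := H.bk t
    linarith
  let w : ℝ → ℝ := fun u => (∫ s in (0:ℝ)..u, (k s - κ)) / 30
  let t : ℕ → ℝ := fun i => i * η + η ^ 2 * w (i * η)
  have ht0 : t 0 = 0 := by simp [t, w]
  have htn : t n = t 0 + lam := by
    rw [ht0]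
    simp only [t, w, hnη]
    rw [int_sub_c k hc, hκd]
    field_simp
    ring
  let Q : ℕ → ℝ := fun i => ∫ s in (i * η)..(i * η + η), (k s - κ)
  have hgap : ∀ i, t (i + 1) - t i = η + η ^ 2 * Q i / 30 := by
    intro i
    have e : (((i + 1 : ℕ) : ℝ) * η) = i * η + η := by push_cast; ring
    have h := intervalIntegral.integral_add_adjacent_intervals (hv.intervalIntegrable (μ := volume) 0 (i * η)) (hv.intervalIntegrable (i * η) (i * η + η))
    simp only [t, w, Q, e]
    rw [← h]; ring
  have hQ : ∀ i, |Q i| ≤ 2 * M * η := by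
    intro i
    have := int_abs_le (fun s => k s - κ) (i * η) (i * η + η) (2 * M) (by linarith) fun s _ _ => bv s
    rwa [add_sub_cancel_left] at this
  have hdev : ∀ i, |t (i + 1) - t i - η| ≤ M * η ^ 3 := by
    intro i
    rw [hgap, add_sub_cancel_left, abs_div, abs_mul, abs_of_pos (by positivity : (0:ℝ) < η ^ 2), abs_of_pos (by norm_num : (0:ℝ) < 30)]
    have : η ^ 2 * |Q i| ≤ η ^ 2 * (2 * M * η) := by gcongr; exact hQ i
    have : 0 < M * η ^ 3 := by positivity
    rw [div_le_iff₀ (by norm_num)]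
    nlinarith
  have hMη3 : M * η ^ 3 ≤ η / 2 := by
    have h1 : M * η ^ 3 = (M * η) * η * η := by ring
    have h2 : (M * η) * η ≤ 1 / 2 * 1 := mul_le_mul hMη.le (by linarith) hη0.le (by norm_num)
    rw [h1]; nlinarith
  have hm : ∀ i < n, t i < t (i + 1) := by
    intro i _
    have := (abs_le.1 (hdev i)).1
    linarith
  let S : Finset (ℝ × ℝ) := (Finset.range n).image fun i => x (t i)
  refine ⟨S, ?_, ?_, ?_⟩
  · intro p hp
    simp only [S, Finset.coe_image, Set.mem_image] at hp
    obtain ⟨i, _, rfl⟩ := hp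
    exact hC.hmem _
  · exact Finset.card_image_le.trans (by simp)
  refine (hC.poly_upper t n hm htn S fun i hi => Finset.mem_image.2 ⟨i, Finset.mem_range.2 hi, rfl⟩).trans ?_
  rw [← H.sum_linR hlam η κ t n hnη hκd htn]
  have e1 : A * lam * η ^ 7 = ∑ i ∈ Finset.range n, A * η ^ 8 := by
    rw [Finset.sum_const, Finset.card_range, nsmul_eq_mul, ← hnη]; ring
  rw [e1, ← Finset.sum_add_distrib]
  refine Finset.sum_le_sum fun i hi => ?_
  have hi' := Finset.mem_range.1 hi
  have hle := (hm i hi').le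
  have hle' := sub_nonneg.2 hle
  obtain ⟨f1, f2, f3, f4, f5, f6⟩ := H.facts _ hκ (t i) (t (i + 1)) hle
  have hd := hdev i
  have hd' := abs_le.1 hd
  have hwk : 5 * M ^ 2 * (t (i + 1) - t i) ≤ M' * (t (i + 1) - t i) := by gcongr
  have hh := hE (t i) (t (i + 1) - t i) hle' (by linarith)
  rw [add_sub_cancel] at hh
  refine harc η (t (i + 1) - t i) _ _ _ _ _ hη0 (by linarith) hle' (by linarith) ?_ ?_ hh (f1.trans hwk) (f2.trans hwk)
    f3 (f4.trans hwk) (f5.trans hM'5) ?_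
  · refine hd.trans ?_
    gcongr
    linarith [sq_nonneg M]
  · have hui : (i:ℝ) * η ≤ lam := by
      rw [← hnη]; gcongr
    have hui0 : 0 ≤ (i:ℝ) * η := by positivity
    have hwb : |w (i * η)| ≤ M * lam := by
      have := int_abs_le (fun s => k s - κ) 0 (i * η) (2 * M) hui0 fun s _ _ => bv s
      simp only [w]
      rw [abs_div, abs_of_pos (by norm_num : (0:ℝ) < 30), div_le_iff₀ (by norm_num)]
      rw [sub_zero] at this
      have : 2 * M * (i * η) ≤ 2 * M * lam := by gcongr
      have : 0 < M * lam := by positivity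
      linarith
    have sd := H.shift_diff κ (i * η) η (η ^ 2 * w (i * η)) (t (i + 1) - t i) hκ hη0.le
    have ei : (i:ℝ) * η + η ^ 2 * w (i * η) = t i := rfl
    rw [ei, add_sub_cancel] at sd
    change |Q i - _| ≤ _ at sd
    have e2 : t (i + 1) - t i - η - η ^ 2 * ((∫ s in (t i)..(t (i + 1)), k s) - κ * (t (i + 1) - t i)) / 30
      = η ^ 2 / 30 * (Q i - ((∫ s in (t i)..(t (i + 1)), k s) - κ * (t (i + 1) - t i))) := by
      rw [hgap]; ring
    rw [e2, abs_mul, abs_of_pos (by positivity : (0:ℝ) < η ^ 2 / 30)]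
    have s1 : |η ^ 2 * w (i * η)| ≤ η ^ 2 * (M * lam) := by
      rw [abs_mul, abs_of_pos (by positivity : (0:ℝ) < η ^ 2)]; gcongr
    have s2 : M * |η ^ 2 * w (i * η)| * η ≤ M * (η ^ 2 * (M * lam)) * η := by gcongr
    have s3 : 2 * M * |t (i + 1) - t i - η| ≤ 2 * M * (M * η ^ 3) := by gcongr
    have s4 : M * (η ^ 2 * (M * lam)) * η + 2 * M * (M * η ^ 3) ≤ 30 * (M' * η ^ 3) := by
      have : 0 < M ^ 2 * η ^ 3 := by positivity
      have : 0 < M ^ 2 * η ^ 3 * lam := by positivity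
      have e3 : M' * η ^ 3 = 7 * (M ^ 2 * η ^ 3) + M ^ 2 * η ^ 3 * lam := by rw [hM']; ring
      have e4 : M * (η ^ 2 * (M * lam)) * η + 2 * M * (M * η ^ 3) = M ^ 2 * η ^ 3 * lam + 2 * (M ^ 2 * η ^ 3) := by ring
      rw [e3, e4]; linarith
    calc η ^ 2 / 30 * |Q i - ((∫ s in (t i)..(t (i + 1)), k s) - κ * (t (i + 1) - t i))|
        ≤ η ^ 2 / 30 * (30 * (M' * η ^ 3)) := by gcongr; linarith
      _ = M' * η ^ 5 := by ring
  · refine (H.var_le κ (t i) (t (i + 1)) hle).trans ?_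
    exact mul_le_mul_of_nonneg_right hM'1 (by positivity)


theorem stmt_13 (x : ℝ → ℝ × ℝ) (lam : ℝ) (hlam : 0 < lam)
    (hx : ContDiff ℝ (⊤ : ℕ∞) x)
    (haff : ∀ t : ℝ, om (deriv x t) (iteratedDeriv 2 x t) = 1)
    (hper : ∀ t : ℝ, x (t + lam) = x t)
    (hinj : Set.InjOn x (Set.Ico 0 lam))
    (C : Set (ℝ × ℝ)) (hC : C = convexHull ℝ (x '' Set.Icc 0 lam))
    (hcomp : IsCompact C) (hconv : StrictConvex ℝ C)
    (hbd : x '' Set.Icc 0 lam = frontier C)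
    (k : ℝ → ℝ) (hk : ∀ t : ℝ, k t = om (iteratedDeriv 2 x t) (iteratedDeriv 3 x t))
    -- δᵢ(n): area deficit of best approximating inscribed polygons with at most n vertices
    (δi : ℕ → ℝ)
    (hδi : ∀ n : ℕ, 3 ≤ n → δi n = (volume C).toReal -
      sSup { A : ℝ | ∃ S : Finset (ℝ × ℝ), ↑S ⊆ frontier C ∧ S.card ≤ n ∧
        A = (volume (convexHull ℝ (S : Set (ℝ × ℝ)))).toReal }) :
    Tendsto (fun n : ℕ => (n : ℝ) ^ 6 *
        (δi n - lam ^ 3 / (12 * (n : ℝ) ^ 2) +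
          lam ^ 4 / (240 * (n : ℝ) ^ 4) * ∫ t in (0:ℝ)..lam, k t))
      atTop
      (𝓝 (-(9 * lam ^ 6 / 50400) * (∫ t in (0:ℝ)..lam, (k t) ^ 2) +
        lam ^ 5 / 3600 * (∫ t in (0:ℝ)..lam, k t) ^ 2)) := by

  obtain ⟨k1, k2, k3, M, H⟩ := setup_ana x lam hlam hx haff hper k hk
  have hCf := setup_conf x lam hlam hper hinj C hcomp hconv hbd _ _ k k1 k2 k3 M H
  obtain ⟨c1, hlow⟩ := lower_bound hCf H
  obtain ⟨c2, hup⟩ := upper_bound hCf H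
  set I1 := ∫ t in (0:ℝ)..lam, k t with hI1
  set I2 := ∫ t in (0:ℝ)..lam, k t ^ 2 with hI2
  set R := -(9 * lam ^ 6 / 50400) * I2 + lam ^ 5 / 3600 * I1 ^ 2 with hR
  have hlamne := hlam.ne'
  have key : ∀ n : ℕ, 0 < n → (n : ℝ) ^ 6 * (Tn lam (lam / n) I1 I2 - lam ^ 3 / (12 * (n : ℝ) ^ 2) +
          lam ^ 4 / (240 * (n : ℝ) ^ 4) * I1) = R := by
    intro n hn
    have : (n : ℝ) ≠ 0 := by exact_mod_cast hn.ne'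
    rw [hR]; unfold Tn
    field_simp
    ring
  have key2 : ∀ n : ℕ, 0 < n → ∀ c : ℝ, (n : ℝ) ^ 6 * (c * (lam / n) ^ 7) = c * lam ^ 7 / n := by
    intro n hn c
    have : (n : ℝ) ≠ 0 := by exact_mod_cast hn.ne'
    field_simp
  have lim : ∀ c : ℝ, Tendsto (fun n : ℕ => R + c * lam ^ 7 / (n : ℝ)) atTop (𝓝 R) := by
    intro c
    simpa using (tendsto_const_nhds (x := R)).add (tendsto_const_div_atTop_nhds_zero_nat (c * lam ^ 7))
  have hfin : volume C ≠ ⊤ := hcomp.measure_lt_top.ne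
  have hsub : ∀ S : Finset (ℝ × ℝ), ↑S ⊆ frontier C →
      (volume (convexHull ℝ (S : Set (ℝ × ℝ)))).toReal ≤ (volume C).toReal := by
    intro S hS
    refine ENNReal.toReal_mono hfin (measure_mono ?_)
    exact convexHull_min (hS.trans hcomp.isClosed.frontier_subset) hconv.convex
  refine tendsto_of_tendsto_of_tendsto_of_le_of_le' (lim (-c1)) (lim c2) ?_ ?_
  · filter_upwards [hlow, eventually_ge_atTop 3] with n hn hn3
    rw [← key n (by omega), ← key2 n (by omega) (-c1), ← mul_add]
    refine mul_le_mul_of_nonneg_left ?_ (by positivity)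
    have : Tn lam (lam / n) I1 I2 - c1 * (lam / n) ^ 7 ≤ δi n := by
      rw [hδi n hn3]
      have : sSup { A : ℝ | ∃ S : Finset (ℝ × ℝ), ↑S ⊆ frontier C ∧ S.card ≤ n ∧
        A = (volume (convexHull ℝ (S : Set (ℝ × ℝ)))).toReal } ≤
          (volume C).toReal - (Tn lam (lam / n) I1 I2 - c1 * (lam / n) ^ 7) := by
        refine csSup_le ⟨_, ∅, by simp, by simp, rfl⟩ ?_
        rintro A ⟨S, hS, hcard, rfl⟩
        linarith [hn S hS hcard]
      linarith
    linarith
  · filter_upwards [hup, eventually_ge_atTop 3] with n hn hn3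
    rw [← key n (by omega), ← key2 n (by omega) c2, ← mul_add]
    refine mul_le_mul_of_nonneg_left ?_ (by positivity)
    have : δi n ≤ Tn lam (lam / n) I1 I2 + c2 * (lam / n) ^ 7 := by
      rw [hδi n hn3]
      obtain ⟨S, hS, hcard, hle⟩ := hn
      have : (volume (convexHull ℝ (S : Set (ℝ × ℝ)))).toReal ≤
        sSup { A : ℝ | ∃ S : Finset (ℝ × ℝ), ↑S ⊆ frontier C ∧ S.card ≤ n ∧
        A = (volume (convexHull ℝ (S : Set (ℝ × ℝ)))).toReal } := by
        refine le_csSup ⟨(volume C).toReal, ?_⟩ ⟨S, hS, hcard, rfl⟩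
        rintro A ⟨S', hS', -, rfl⟩
        exact hsub S' hS'
      linarith
    linarith
end

section
/- Let x : ℝ → ℝ² be a C^∞, λ-periodic curve parametrized by affine arc length with affine curvature k (the affine curvature of a strictly convex closed curve). Define the symplectic-billiard Mather coefficients β₅ := −(λ⁴/120)·∫₀^λ k(s) ds and β₇ := −(9λ⁶/25200)·∫₀^λ k(s)² ds + (λ⁵/1800)·(∫₀^λ k(s) ds)². Then 42·λ³·β₇ ≤ 120·β₅², with equality if and only if k is constant on ℝ (equivalently, the curve is an ellipse). -/
open Filter
open scoped Topology

theorem stmt_15 (x : ℝ → ℝ × ℝ) (lam : ℝ) (hlam : 0 < lam) (hx : ContDiff ℝ (⊤ : ℕ∞) x)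
    (haff : ∀ s : ℝ, om (deriv x s) (iteratedDeriv 2 x s) = 1)
    (hper : ∀ s : ℝ, x (s + lam) = x s)
    (k : ℝ → ℝ) (hk : ∀ s : ℝ, k s = om (iteratedDeriv 2 x s) (iteratedDeriv 3 x s))
    -- the symplectic-billiard Mather coefficients
    (β₅ β₇ : ℝ)
    (hβ₅ : β₅ = -(lam ^ 4 / 120) * ∫ t in (0:ℝ)..lam, k t)
    (hβ₇ : β₇ = -(9 * lam ^ 6 / 25200) * (∫ t in (0:ℝ)..lam, (k t) ^ 2) +
      lam ^ 5 / 1800 * (∫ t in (0:ℝ)..lam, k t) ^ 2) :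
    42 * lam ^ 3 * β₇ ≤ 120 * β₅ ^ 2 ∧
      (42 * lam ^ 3 * β₇ = 120 * β₅ ^ 2 ↔ ∃ c : ℝ, ∀ s : ℝ, k s = c) := by
  have hc2 : Continuous (iteratedDeriv 2 x) :=
    (contDiff_infty.mp hx 2).continuous_iteratedDeriv 2 (by norm_cast)
  have hc3 : Continuous (iteratedDeriv 3 x) :=
    (contDiff_infty.mp hx 3).continuous_iteratedDeriv 3 (by norm_cast)
  have hkc : Continuous k := by
    have : k = fun s => om (iteratedDeriv 2 x s) (iteratedDeriv 3 x s) := funext hk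
    rw [this]; unfold om; fun_prop
  have hxp : (fun s => x (s + lam)) = x := funext hper
  have hd : ∀ n s, iteratedDeriv n x (s + lam) = iteratedDeriv n x s := by
    intro n s
    have h := congrFun (iteratedDeriv_comp_add_const n x lam) s
    rw [hxp] at h
    exact h.symm
  have hkp : Function.Periodic k lam := by
    intro s
    rw [hk, hk, hd, hd]
  set A := ∫ t in (0:ℝ)..lam, k t with hA
  set B := ∫ t in (0:ℝ)..lam, (k t) ^ 2 with hB
  have hI : ∫ t in (0:ℝ)..lam, (k t - A / lam) ^ 2 = B - A ^ 2 / lam := by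
    have e : ∀ t, (k t - A / lam) ^ 2 = (k t) ^ 2 - 2 * (A / lam) * k t + (A / lam) ^ 2 := by
      intro t; ring
    simp_rw [e]
    rw [intervalIntegral.integral_add, intervalIntegral.integral_sub,
      intervalIntegral.integral_const_mul, intervalIntegral.integral_const, ← hA, ← hB]
    · simp only [smul_eq_mul]; field_simp; ring
    all_goals exact Continuous.intervalIntegrable (by fun_prop) _ _
  have hdiff : 120 * β₅ ^ 2 - 42 * lam ^ 3 * β₇ = 3 / 200 * lam ^ 9 * (B - A ^ 2 / lam) := by
    rw [hβ₅, hβ₇]; field_simp; ring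
  have hnn : 0 ≤ B - A ^ 2 / lam := by
    rw [← hI]
    exact intervalIntegral.integral_nonneg hlam.le (fun t _ => sq_nonneg _)
  have hpos : 0 < 3 / 200 * lam ^ 9 := by positivity
  refine ⟨by nlinarith [mul_nonneg hpos.le hnn], ?_, ?_⟩
  · intro h
    have h0 : B - A ^ 2 / lam = 0 := by
      have : 3 / 200 * lam ^ 9 * (B - A ^ 2 / lam) = 0 := by linarith
      exact (mul_eq_zero.mp this).resolve_left hpos.ne'
    refine ⟨A / lam, fun s => ?_⟩
    obtain ⟨y, hy, hys⟩ := hkp.exists_mem_Ico₀ hlam s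
    rw [hys]
    by_contra hne
    have hlt : 0 < ∫ t in (0:ℝ)..lam, (k t - A / lam) ^ 2 :=
      intervalIntegral.integral_pos hlam (by fun_prop) (fun t _ => sq_nonneg _)
        ⟨y, Set.Ico_subset_Icc_self hy, by have := sub_ne_zero.mpr hne; positivity⟩
    linarith
  · rintro ⟨c, hc⟩
    have h1 : A = lam * c := by rw [hA]; simp [hc]
    have h2 : B = lam * c ^ 2 := by rw [hB]; simp [hc]
    have : B - A ^ 2 / lam = 0 := by rw [h1, h2]; field_simp; ring
    rw [this] at hdiff
    linarith
end

section
/- Let x : ℝ → ℝ² be a C^∞, λ-periodic curve parametrized by affine arc length with affine curvature k (the affine curvature of a strictly convex closed curve). Define the outer-billiard Mather coefficients β₅ := (λ⁴/240)·∫₀^λ k(s) ds and β₇ := (421·λ⁶/201600)·∫₀^λ k(s)² ds − (λ⁵/600)·(∫₀^λ k(s) ds)². Then 7·λ³·β₇ ≥ 170·β₅², with equality if and only if k is constant on ℝ (equivalently, the curve is an ellipse). -/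
open Filter
open scoped Topology

theorem stmt_16 (x : ℝ → ℝ × ℝ) (lam : ℝ) (hlam : 0 < lam) (hx : ContDiff ℝ (⊤ : ℕ∞) x)
    (haff : ∀ s : ℝ, om (deriv x s) (iteratedDeriv 2 x s) = 1)
    (hper : ∀ s : ℝ, x (s + lam) = x s)
    (k : ℝ → ℝ) (hk : ∀ s : ℝ, k s = om (iteratedDeriv 2 x s) (iteratedDeriv 3 x s))
    -- the outer-billiard Mather coefficients
    (β₅ β₇ : ℝ)
    (hβ₅ : β₅ = lam ^ 4 / 240 * ∫ t in (0:ℝ)..lam, k t)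
    (hβ₇ : β₇ = 421 * lam ^ 6 / 201600 * (∫ t in (0:ℝ)..lam, (k t) ^ 2) -
      lam ^ 5 / 600 * (∫ t in (0:ℝ)..lam, k t) ^ 2) :
    7 * lam ^ 3 * β₇ ≥ 170 * β₅ ^ 2 ∧
      (7 * lam ^ 3 * β₇ = 170 * β₅ ^ 2 ↔ ∃ c : ℝ, ∀ s : ℝ, k s = c) := by
  have hc : ∀ n : ℕ, Continuous (iteratedDeriv n x) := fun n =>
    hx.continuous_iteratedDeriv n (by exact_mod_cast le_top)
  have hkc : Continuous k := by
    have : k = fun s => om (iteratedDeriv 2 x s) (iteratedDeriv 3 x s) := funext hk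
    rw [this]
    unfold om
    have h2 := hc 2
    have h3 := hc 3
    fun_prop
  have hdp : ∀ (n : ℕ) (s : ℝ), iteratedDeriv n x (s + lam) = iteratedDeriv n x s := by
    intro n s
    have h := congrFun (iteratedDeriv_comp_add_const n x lam) s
    rw [← h]
    congr 1
    exact funext hper
  have hkp : Function.Periodic k lam := by
    intro s
    rw [hk, hk, hdp, hdp]
  set B := ∫ t in (0:ℝ)..lam, k t with hB
  set A := ∫ t in (0:ℝ)..lam, (k t) ^ 2 with hA
  have hint : ∫ t in (0:ℝ)..lam, (k t - B / lam) ^ 2 = A - B ^ 2 / lam := by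
    have e : ∀ t, (k t - B / lam) ^ 2 = (k t) ^ 2 - (2 * (B / lam)) * k t + (B / lam) ^ 2 := by
      intro t; ring
    simp_rw [e]
    rw [intervalIntegral.integral_add, intervalIntegral.integral_sub,
      intervalIntegral.integral_const_mul, intervalIntegral.integral_const, ← hA, ← hB]
    · simp only [smul_eq_mul]
      field_simp
      ring
    all_goals
      apply Continuous.intervalIntegrable
      fun_prop
  have hnn : 0 ≤ A - B ^ 2 / lam := by
    rw [← hint]
    exact intervalIntegral.integral_nonneg hlam.le (fun t _ => sq_nonneg _)
  have hdiff : 7 * lam ^ 3 * β₇ - 170 * β₅ ^ 2 = 421 / 28800 * lam ^ 9 * (A - B ^ 2 / lam) := by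
    rw [hβ₅, hβ₇]
    field_simp
    ring
  have hpos : 0 < 421 / 28800 * lam ^ 9 := by positivity
  refine ⟨?_, ?_, ?_⟩
  · have := mul_nonneg hpos.le hnn
    linarith
  · intro h
    have h0 : A - B ^ 2 / lam = 0 := by
      rw [h, sub_self] at hdiff
      exact (mul_eq_zero.mp hdiff.symm).resolve_left hpos.ne'
    refine ⟨B / lam, fun s => ?_⟩
    obtain ⟨y, hy, hys⟩ := hkp.exists_mem_Ico₀ hlam s
    rw [hys]
    by_contra hne
    have : 0 < ∫ t in (0:ℝ)..lam, (k t - B / lam) ^ 2 := by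
      apply intervalIntegral.integral_pos hlam
      · fun_prop
      · exact fun t _ => sq_nonneg _
      · exact ⟨y, ⟨hy.1, hy.2.le⟩, by have := sub_ne_zero.mpr hne; positivity⟩
    linarith
  · rintro ⟨c, hcst⟩
    have h0 : A - B ^ 2 / lam = 0 := by
      simp only [hA, hB, hcst, intervalIntegral.integral_const, smul_eq_mul]
      field_simp
      ring
    rw [h0, mul_zero] at hdiff
    linarith
end

section
/- Let a, b > 0, let E := {(u,v) ∈ ℝ² : u²/a² + v²/b² ≤ 1} be a solid ellipse, and let n ≥ 3 be an integer. Then the maximal area of a convex polygon with at most n vertices inscribed in E is sup{ Area(convexHull(S)) : S ⊆ ∂E, S finite, |S| ≤ n } = (n/2)·a·b·sin(2π/n); consequently δ_i(n) := Area(E) − this supremum equals π·a·b − (n/2)·a·b·sin(2π/n). -/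
open MeasureTheory

noncomputable def cs17 (t : ℝ) : ℝ × ℝ := (Real.cos t, Real.sin t)

noncomputable def lm17 (p q : ℝ × ℝ) : (ℝ × ℝ) →ₗ[ℝ] (ℝ × ℝ) :=
  Matrix.toLin (Module.Basis.finTwoProd ℝ) (Module.Basis.finTwoProd ℝ) !![p.1, q.1; p.2, q.2]

lemma lm17_apply (p q x : ℝ × ℝ) :
    lm17 p q x = (p.1 * x.1 + q.1 * x.2, p.2 * x.1 + q.2 * x.2) := by
  simp [lm17, Matrix.toLin_finTwoProd_apply]

lemma lm17_det (p q : ℝ × ℝ) : LinearMap.det (lm17 p q) = p.1 * q.2 - q.1 * p.2 := by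
  simp [lm17, LinearMap.det_toLin, Matrix.det_fin_two]

def tc17 : Set (ℝ × ℝ) := {x | 0 ≤ x.1 ∧ 0 ≤ x.2 ∧ x.1 + x.2 ≤ 1}
def to17 : Set (ℝ × ℝ) := {x | 0 < x.1 ∧ 0 < x.2 ∧ x.1 + x.2 < 1}

lemma lint17 : ∫⁻ x in Set.Ioo (0:ℝ) 1, ENNReal.ofReal (1 - x) = ENNReal.ofReal (1/2) := by
  rw [← ofReal_integral_eq_lintegral_ofReal]
  · congr 1
    rw [← integral_Ioc_eq_integral_Ioo, ← intervalIntegral.integral_of_le zero_le_one]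
    rw [intervalIntegral.integral_sub (by simp) (by simp)]
    simp
    norm_num
  · exact (Continuous.integrableOn_Icc (by fun_prop)).mono_set Set.Ioo_subset_Icc_self
  · filter_upwards [self_mem_ae_restrict measurableSet_Ioo] with x hx
    simp; exact hx.2.le

lemma vol_to17 : volume to17 = ENNReal.ofReal (1/2) := by
  have ho : IsOpen to17 := by
    unfold to17
    have h1 : IsOpen {x : ℝ × ℝ | 0 < x.1} := isOpen_lt (by fun_prop) (by fun_prop)
    have h2 : IsOpen {x : ℝ × ℝ | 0 < x.2} := isOpen_lt (by fun_prop) (by fun_prop)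
    have h3 : IsOpen {x : ℝ × ℝ | x.1 + x.2 < 1} := isOpen_lt (by fun_prop) (by fun_prop)
    exact h1.inter (h2.inter h3)
  rw [Measure.volume_eq_prod, Measure.prod_apply ho.measurableSet, ← lint17,
    ← lintegral_indicator measurableSet_Ioo]
  congr 1
  ext x
  by_cases hx : x ∈ Set.Ioo (0:ℝ) 1
  · rw [Set.indicator_of_mem hx]
    have : Prod.mk x ⁻¹' to17 = Set.Ioo 0 (1 - x) := by
      ext y; simp [to17]; constructor
      · rintro ⟨_, h, h'⟩; exact ⟨h, by linarith⟩
      · rintro ⟨h, h'⟩; exact ⟨hx.1, h, by linarith⟩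
    rw [this, Real.volume_Ioo, sub_zero]
  · rw [Set.indicator_of_notMem hx]
    have : Prod.mk x ⁻¹' to17 = ∅ := by
      ext y; simp [to17]; intro h h'
      by_contra! h2; exact hx ⟨h, by linarith⟩
    rw [this, measure_empty]

lemma vol_tc17 : volume tc17 = ENNReal.ofReal (1/2) := by
  have ho : IsClosed tc17 := by
    unfold tc17
    have h1 : IsClosed {x : ℝ × ℝ | 0 ≤ x.1} := isClosed_le (by fun_prop) (by fun_prop)
    have h2 : IsClosed {x : ℝ × ℝ | 0 ≤ x.2} := isClosed_le (by fun_prop) (by fun_prop)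
    have h3 : IsClosed {x : ℝ × ℝ | x.1 + x.2 ≤ 1} := isClosed_le (by fun_prop) (by fun_prop)
    exact h1.inter (h2.inter h3)
  rw [Measure.volume_eq_prod, Measure.prod_apply ho.measurableSet, ← lint17,
    setLIntegral_congr Ioo_ae_eq_Icc,
    ← lintegral_indicator measurableSet_Icc]
  congr 1
  ext x
  by_cases hx : x ∈ Set.Icc (0:ℝ) 1
  · rw [Set.indicator_of_mem hx]
    have : Prod.mk x ⁻¹' tc17 = Set.Icc 0 (1 - x) := by
      ext y; simp [tc17]; constructor
      · rintro ⟨_, h, h'⟩; exact ⟨h, by linarith⟩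
      · rintro ⟨h, h'⟩; exact ⟨hx.1, h, by linarith⟩
    rw [this, Real.volume_Icc, sub_zero]
  · rw [Set.indicator_of_notMem hx]
    have : Prod.mk x ⁻¹' tc17 = ∅ := by
      ext y; simp [tc17]; intro h h'
      by_contra! h2; exact hx ⟨h, by linarith⟩
    rw [this, measure_empty]

lemma vol_lm17 (p q : ℝ × ℝ) (s : Set (ℝ × ℝ)) :
    volume (lm17 p q '' s) = ENNReal.ofReal |p.1 * q.2 - q.1 * p.2| * volume s := by
  rw [Measure.addHaar_image_linearMap, lm17_det]

lemma polar17 (x : ℝ × ℝ) (t : ℝ) : ∃ r φ : ℝ, 0 ≤ r ∧ t ≤ φ ∧ φ < t + 2 * Real.pi ∧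
    x = (r * Real.cos φ, r * Real.sin φ) ∧ r ^ 2 = x.1 ^ 2 + x.2 ^ 2 := by
  set z : ℂ := ⟨x.1, x.2⟩ with hz
  have hm := toIcoMod_mem_Ico Real.two_pi_pos t z.arg
  obtain ⟨h1, h2⟩ := hm
  have e : toIcoMod Real.two_pi_pos t z.arg
      = z.arg - (toIcoDiv Real.two_pi_pos t z.arg : ℤ) * (2 * Real.pi) := by
    rw [toIcoMod]; simp
  refine ⟨‖z‖, toIcoMod Real.two_pi_pos t z.arg, norm_nonneg _, h1, h2, ?_, ?_⟩
  · rw [e, Real.cos_sub_int_mul_two_pi, Real.sin_sub_int_mul_two_pi,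
      Complex.norm_mul_cos_arg, Complex.norm_mul_sin_arg]
  · rw [Complex.sq_norm, Complex.normSq_apply]; simp [hz]; ring

lemma find17 (θ : ℕ → ℝ) (φ : ℝ) (n : ℕ) (h0 : θ 0 ≤ φ) (h1 : φ < θ n) :
    ∃ i < n, θ i ≤ φ ∧ φ < θ (i + 1) := by
  induction n with
  | zero => linarith
  | succ k ih =>
    by_cases h : φ < θ k
    · obtain ⟨i, hi, h⟩ := ih h
      exact ⟨i, by omega, h⟩
    · exact ⟨k, by omega, not_lt.1 h, h1⟩

lemma sum17 (n : ℕ) (hn : 3 ≤ n) (x : ℕ → ℝ) (h0 : ∀ i < n, 0 ≤ x i)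
    (hs : ∑ i ∈ Finset.range n, x i = 2 * Real.pi) :
    ∑ i ∈ Finset.range n, Real.sin (min (x i) Real.pi) ≤ n * Real.sin (2 * Real.pi / n) := by
  have hpi := Real.pi_pos
  have hn0 : (0:ℝ) < n := by positivity
  have hn3 : (3:ℝ) ≤ n := by exact_mod_cast hn
  have J := strictConcaveOn_sin_Icc.concaveOn.le_map_sum (t := Finset.range n)
    (w := fun _ => (1:ℝ)/n) (p := fun i => min (x i) Real.pi) (by intros; positivity)
    (by simp; field_simp) (by
      intro i hi
      exact ⟨le_min (h0 i (by simpa using hi)) hpi.le, min_le_right _ _⟩)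
  simp only [smul_eq_mul, ← Finset.mul_sum] at J
  have J2 : ∑ i ∈ Finset.range n, Real.sin (min (x i) Real.pi) ≤
      n * Real.sin (1 / n * ∑ i ∈ Finset.range n, min (x i) Real.pi) := by
    rw [one_div, inv_mul_le_iff₀ hn0] at J
    simpa using J
  have hle : ∑ i ∈ Finset.range n, min (x i) Real.pi ≤ 2 * Real.pi := by
    rw [← hs]; exact Finset.sum_le_sum fun i _ => min_le_left _ _
  have hge : 0 ≤ ∑ i ∈ Finset.range n, min (x i) Real.pi :=
    Finset.sum_nonneg fun i hi => le_min (h0 i (by simpa using hi)) hpi.le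
  by_cases hall : ∀ i < n, x i ≤ Real.pi
  · have : ∑ i ∈ Finset.range n, min (x i) Real.pi = 2 * Real.pi := by
      rw [← hs]; exact Finset.sum_congr rfl fun i hi => min_eq_left (hall i (by simpa using hi))
    rw [this] at J2
    convert J2 using 3; ring
  rcases Nat.lt_or_ge n 4 with h4 | h4
  · obtain rfl : n = 3 := by omega
    push Not at hall
    obtain ⟨i, hi, hx⟩ := hall
    have hz : Real.sin (min (x i) Real.pi) = 0 := by
      rw [min_eq_right hx.le, Real.sin_pi]
    have hb : ∀ j, Real.sin (min (x j) Real.pi) ≤ 1 := fun j => Real.sin_le_one _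
    have : ∑ i ∈ Finset.range 3, Real.sin (min (x i) Real.pi) ≤ 2 := by
      simp only [Finset.sum_range_succ, Finset.sum_range_zero]
      have := hb 0; have := hb 1; have := hb 2
      interval_cases i <;> linarith
    refine this.trans ?_
    have e : Real.sin (2 * Real.pi / (3:ℕ)) = √3 / 2 := by
      rw [← Real.sin_pi_div_three, ← Real.sin_pi_sub]; congr 1; push_cast; ring
    rw [e]
    have : (4/3 : ℝ) ≤ √3 := Real.le_sqrt_of_sq_le (by norm_num)
    push_cast; linarith
  · refine J2.trans (mul_le_mul_of_nonneg_left ?_ hn0.le)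
    have hn4 : (4:ℝ) ≤ n := by exact_mod_cast h4
    have h2 : 2 * Real.pi / n ≤ Real.pi / 2 := by
      rw [div_le_div_iff₀ hn0 two_pos]; nlinarith
    have h1 : 1 / n * ∑ i ∈ Finset.range n, min (x i) Real.pi ≤ 2 * Real.pi / n := by
      rw [one_div, inv_mul_eq_div]; gcongr
    have h3 : 0 ≤ 1 / n * ∑ i ∈ Finset.range n, min (x i) Real.pi := by positivity
    exact Real.sin_le_sin_of_le_of_le_pi_div_two (by linarith) h2 h1

lemma half17 (S : Set (ℝ × ℝ)) (u v c : ℝ) (h : ∀ p ∈ S, u * p.1 + v * p.2 ≤ c)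
    (x : ℝ × ℝ) (hx : x ∈ convexHull ℝ S) : u * x.1 + v * x.2 ≤ c := by
  have hc : Convex ℝ {p : ℝ × ℝ | u * p.1 + v * p.2 ≤ c} :=
    convex_halfSpace_le ⟨by intro x y; simp; ring, by intro k x; simp; ring⟩ c
  exact convexHull_min h hc hx

lemma trig17 (α β ψ : ℝ) (h1 : α ≤ β) (h2 : β ≤ ψ) (h3 : ψ ≤ α + 2 * Real.pi) :
    Real.sin (β - ψ) + Real.sin (ψ - α) ≤ Real.sin (β - α) := by
  obtain ⟨u, hu⟩ : ∃ u, u = (ψ - β) / 2 := ⟨_, rfl⟩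
  obtain ⟨v, hv⟩ : ∃ v, v = (β - α) / 2 := ⟨_, rfl⟩
  have e1 : β - ψ = -(2 * u) := by rw [hu]; ring
  have e2 : ψ - α = 2 * (u + v) := by rw [hu, hv]; ring
  have e3 : β - α = 2 * v := by rw [hv]; ring
  have p1 : 0 ≤ Real.sin u := Real.sin_nonneg_of_nonneg_of_le_pi (by linarith) (by linarith)
  have p2 : 0 ≤ Real.sin v := Real.sin_nonneg_of_nonneg_of_le_pi (by linarith) (by linarith)
  have p3 : 0 ≤ Real.sin (u + v) :=
    Real.sin_nonneg_of_nonneg_of_le_pi (by linarith) (by linarith)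
  have p4 : 0 ≤ 4 * Real.sin u * Real.sin v * Real.sin (u + v) := by positivity
  rw [e1, e2, e3, Real.sin_neg, Real.sin_two_mul, Real.sin_two_mul, Real.sin_two_mul]
  rw [Real.cos_add]
  rw [Real.sin_add] at p4 ⊢
  have q1 := Real.sin_sq_add_cos_sq u
  have q2 := Real.sin_sq_add_cos_sq v
  have : 2 * Real.sin v * Real.cos v + 2 * Real.sin u * Real.cos u
     - 2 * (Real.sin u * Real.cos v + Real.cos u * Real.sin v) *
      (Real.cos u * Real.cos v - Real.sin u * Real.sin v)
     = 4 * Real.sin u * Real.sin v * (Real.sin u * Real.cos v + Real.cos u * Real.sin v) := by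
    linear_combination (-2 * Real.sin v * Real.cos v) * q1 + (-2 * Real.sin u * Real.cos u) * q2
  linarith

lemma cover17 (n : ℕ) (hn : 2 ≤ n) (θ : ℕ → ℝ) (hm : ∀ i < n, θ i < θ (i + 1))
    (he : θ n = θ 0 + 2 * Real.pi) (S : Set (ℝ × ℝ)) (hS : ∀ p ∈ S, ∃ j < n, p = cs17 (θ j)) :
    convexHull ℝ S ⊆ ⋃ i ∈ Finset.range n, lm17 (cs17 (θ i))
      (if θ (i + 1) - θ i < Real.pi then cs17 (θ (i + 1)) else 0) '' tc17 := by
  have hmono : ∀ i j, i ≤ j → j ≤ n → θ i ≤ θ j := by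
    intro i j hij hj
    induction j, hij using Nat.le_induction with
    | base => exact le_rfl
    | succ k hk ih => exact (ih (by omega)).trans (hm k (by omega)).le
  intro x hx
  obtain ⟨r, φ, hr, h1, h2, hxe, hr2⟩ := polar17 x (θ 0)
  rw [← he] at h2
  obtain ⟨i, hi, ha, hb⟩ := find17 θ φ n h1 h2
  have hψ : ∀ p ∈ S, ∃ ψ, θ (i + 1) ≤ ψ ∧ ψ ≤ θ i + 2 * Real.pi ∧ p = cs17 ψ := by
    intro p hp
    obtain ⟨j, hj, rfl⟩ := hS p hp
    rcases Nat.lt_or_ge i j with h | h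
    · refine ⟨θ j, hmono _ _ h hj.le, ?_, rfl⟩
      have := hmono j n hj.le le_rfl
      have := hmono 0 i (by omega) hi.le
      linarith
    · refine ⟨θ j + 2 * Real.pi, ?_, ?_, by simp [cs17]⟩
      · have := hmono (i+1) n hi le_rfl
        have := hmono 0 j (by omega) hj.le
        linarith
      · have := hmono j i h hi.le
        linarith
  have hlt : θ (i + 1) - θ i < 2 * Real.pi := by
    rcases Nat.eq_zero_or_pos i with rfl | h
    · have := hmono (0 + 1 + 1) n (by omega) le_rfl
      have := hm (0 + 1) (by omega)
      linarith
    · have := hmono (i + 1) n (by omega) le_rfl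
      have := hmono 1 i (by omega) (by omega)
      have := hm 0 (by omega)
      simp at this
      linarith
  simp only [Set.mem_iUnion, Finset.mem_range]
  refine ⟨i, hi, ?_⟩
  generalize θ i = α at *
  generalize θ (i + 1) = β at *
  have hαβ : α < β := by linarith
  have hx1 : x.1 = r * Real.cos φ := by rw [hxe]
  have hx2 : x.2 = r * Real.sin φ := by rw [hxe]
  split_ifs with hc
  · have hs : 0 < Real.sin (β - α) := Real.sin_pos_of_pos_of_lt_pi (by linarith) hc
    have k1 : 0 ≤ Real.sin (β - φ) :=
      Real.sin_nonneg_of_nonneg_of_le_pi (by linarith) (by linarith)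
    have k2 : 0 ≤ Real.sin (φ - α) :=
      Real.sin_nonneg_of_nonneg_of_le_pi (by linarith) (by linarith)
    have k3 := half17 S (Real.sin β - Real.sin α) (Real.cos α - Real.cos β) (Real.sin (β - α)) (by
      intro p hp
      obtain ⟨ψ, g1, g2, rfl⟩ := hψ p hp
      have := trig17 α β ψ hαβ.le g1 g2
      rw [Real.sin_sub β ψ, Real.sin_sub ψ α] at this
      simp only [cs17]; linarith) x hx
    refine ⟨(r * Real.sin (β - φ) / Real.sin (β - α), r * Real.sin (φ - α) / Real.sin (β - α)),
      ⟨by positivity, by positivity, ?_⟩, ?_⟩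
    · simp only
      rw [← add_div, div_le_one hs]
      rw [hx1, hx2] at k3
      rw [Real.sin_sub β φ, Real.sin_sub φ α]
      linarith
    · show lm17 _ _ _ = _
      rw [lm17_apply, hxe]
      simp only [cs17]
      ext
      · field_simp
        simp only [Real.sin_sub]; ring
      · field_simp
        simp only [Real.sin_sub]; ring
  · push Not at hc
    have hr1 : r ≤ 1 := by
      have k := half17 S (Real.cos φ) (Real.sin φ) 1 (by
        intro p hp
        obtain ⟨ψ, g1, g2, rfl⟩ := hψ p hp
        simp only [cs17]
        rw [← Real.cos_sub]; exact Real.cos_le_one _) x hx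
      rw [hx1, hx2] at k
      have := Real.sin_sq_add_cos_sq φ
      have : r = Real.cos φ * (r * Real.cos φ) + Real.sin φ * (r * Real.sin φ) := by
        linear_combination (-r) * this
      linarith
    have hor : r = 0 ∨ φ = α := by
      by_contra! hcon
      obtain ⟨hr0, hφ⟩ := hcon
      have hrp : 0 < r := lt_of_le_of_ne hr (Ne.symm hr0)
      have hφ' : α < φ := lt_of_le_of_ne ha (Ne.symm hφ)
      have k1 := half17 S (Real.sin β) (-Real.cos β) 0 (by
        intro p hp
        obtain ⟨ψ, g1, g2, rfl⟩ := hψ p hp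
        have : 0 ≤ Real.sin (ψ - β) :=
          Real.sin_nonneg_of_nonneg_of_le_pi (by linarith) (by linarith)
        rw [Real.sin_sub] at this
        simp only [cs17]; linarith) x hx
      have k2 := half17 S (-Real.sin α) (Real.cos α) 0 (by
        intro p hp
        obtain ⟨ψ, g1, g2, rfl⟩ := hψ p hp
        have : 0 ≤ Real.sin (α + 2 * Real.pi - ψ) :=
          Real.sin_nonneg_of_nonneg_of_le_pi (by linarith) (by linarith)
        rw [Real.sin_sub, Real.sin_add_two_pi, Real.cos_add_two_pi] at this
        simp only [cs17]; linarith) x hx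
      rw [hx1, hx2] at k1 k2
      have m1 : r * Real.sin (β - φ) ≤ 0 := by rw [Real.sin_sub]; linarith
      have m2 : r * Real.sin (φ - α) ≤ 0 := by rw [Real.sin_sub]; linarith
      have n1 : Real.pi ≤ β - φ := by
        by_contra! h
        have := mul_pos hrp (Real.sin_pos_of_pos_of_lt_pi (by linarith : 0 < β - φ) h)
        linarith
      have n2 : Real.pi ≤ φ - α := by
        by_contra! h
        have := mul_pos hrp (Real.sin_pos_of_pos_of_lt_pi (by linarith : 0 < φ - α) h)
        linarith
      linarith
    refine ⟨(r, 0), ⟨hr, le_rfl, by simpa using hr1⟩, ?_⟩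
    show lm17 _ _ _ = _
    rw [lm17_apply, hxe]
    rcases hor with rfl | rfl
    · simp
    · simp [cs17, mul_comm]

lemma upper17 (n : ℕ) (hn : 3 ≤ n) (θ : ℕ → ℝ) (hm : ∀ i < n, θ i < θ (i + 1))
    (he : θ n = θ 0 + 2 * Real.pi) (S : Set (ℝ × ℝ)) (hS : ∀ p ∈ S, ∃ j < n, p = cs17 (θ j)) :
    volume (convexHull ℝ S) ≤ ENNReal.ofReal (n / 2 * Real.sin (2 * Real.pi / n)) := by
  have hpi := Real.pi_pos
  refine (measure_mono (cover17 n (by omega) θ hm he S hS)).trans ?_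
  refine (measure_biUnion_finset_le _ _).trans ?_
  have key : ∀ i ∈ Finset.range n, volume (lm17 (cs17 (θ i))
      (if θ (i + 1) - θ i < Real.pi then cs17 (θ (i + 1)) else 0) '' tc17) =
      ENNReal.ofReal (Real.sin (min (θ (i + 1) - θ i) Real.pi) / 2) := by
    intro i hi
    have h := hm i (by simpa using hi)
    rw [vol_lm17, vol_tc17, ← ENNReal.ofReal_mul (abs_nonneg _)]
    congr 1
    split_ifs with hc
    · rw [min_eq_left hc.le]
      have hs : 0 < Real.sin (θ (i+1) - θ i) := Real.sin_pos_of_pos_of_lt_pi (by linarith) hc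
      have e : (cs17 (θ i)).1 * (cs17 (θ (i+1))).2 - (cs17 (θ (i+1))).1 * (cs17 (θ i)).2
        = Real.sin (θ (i+1) - θ i) := by simp only [cs17]; rw [Real.sin_sub]; ring
      rw [e, abs_of_pos hs]; ring
    · rw [min_eq_right (not_lt.1 hc)]; simp
  rw [Finset.sum_congr rfl key, ← ENNReal.ofReal_sum_of_nonneg]
  · apply ENNReal.ofReal_le_ofReal
    rw [← Finset.sum_div]
    have := sum17 n hn (fun i => θ (i + 1) - θ i) (fun i hi => by have := hm i hi; simp; linarith)
      (by rw [Finset.sum_range_sub, he]; ring)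
    linarith
  · intro i hi
    have h := hm i (by simpa using hi)
    have := Real.sin_nonneg_of_nonneg_of_le_pi (x := min (θ (i + 1) - θ i) Real.pi)
      (le_min (by linarith) hpi.le) (min_le_right _ _)
    positivity

lemma upperS17 (n : ℕ) (hn : 3 ≤ n) (S : Finset (ℝ × ℝ))
    (hS : ∀ p ∈ S, p.1 ^ 2 + p.2 ^ 2 = 1) (hc : S.card ≤ n) :
    volume (convexHull ℝ (S : Set (ℝ × ℝ))) ≤
      ENNReal.ofReal (n / 2 * Real.sin (2 * Real.pi / n)) := by
  have hang : ∀ p : ℝ × ℝ, ∃ t, 0 ≤ t ∧ t < 2 * Real.pi ∧ (p ∈ S → p = cs17 t) := by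
    intro p
    obtain ⟨r, φ, hr, h1, h2, h3, h4⟩ := polar17 p 0
    refine ⟨φ, h1, by linarith, fun hp => ?_⟩
    rw [hS p hp] at h4
    have : r = 1 := by nlinarith
    rw [h3, this]; simp [cs17]
  choose A hA0 hA1 hA using hang
  have hinf : (Set.Ico 0 (2 * Real.pi)).Infinite := Set.Ico_infinite Real.two_pi_pos
  obtain ⟨Θ, hΘ1, hΘ2, hΘ3⟩ : ∃ Θ : Finset ℝ, S.image A ⊆ Θ ∧
      (Θ : Set ℝ) ⊆ Set.Ico 0 (2 * Real.pi) ∧ Θ.card = n := by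
    have hcard : (S.image A).card ≤ n := Finset.card_image_le.trans hc
    have hsub : ((S.image A : Finset ℝ) : Set ℝ) ⊆ Set.Ico 0 (2 * Real.pi) := by
      intro t ht
      simp only [Finset.coe_image, Set.mem_image] at ht
      obtain ⟨p, _, rfl⟩ := ht
      exact ⟨hA0 p, hA1 p⟩
    obtain ⟨T, hT1, hT2, hT3⟩ := hinf.exists_superset_ncard_eq hsub (Finset.finite_toSet _)
      (k := n) (by rwa [Set.ncard_coe_finset])
    have hTf : T.Finite := Set.finite_of_ncard_pos (by omega)
    refine ⟨hTf.toFinset, ?_, by simpa using hT2, ?_⟩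
    · intro t ht; simp only [Set.Finite.mem_toFinset]; exact hT1 (by exact_mod_cast ht)
    · rw [← Set.ncard_eq_toFinset_card T hTf, hT3]
  let e := Θ.orderEmbOfFin hΘ3
  have hn0 : 0 < n := by omega
  let θ : ℕ → ℝ := fun k => if h : k < n then e ⟨k, h⟩ else e ⟨0, hn0⟩ + 2 * Real.pi
  have hmem : ∀ k, e k ∈ Set.Ico 0 (2 * Real.pi) := fun k => hΘ2 (Θ.orderEmbOfFin_mem hΘ3 k)
  refine upper17 n hn θ ?_ ?_ _ ?_
  · intro i hi
    by_cases h : i + 1 < n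
    · simp only [θ, hi, h, dif_pos]
      exact e.strictMono (by simp)
    · simp only [θ, hi, h, dif_pos, dif_neg, not_false_iff]
      have := (hmem ⟨i, hi⟩).2
      have := (hmem ⟨0, hn0⟩).1
      linarith
  · simp [θ, hn0]
  · intro p hp
    have : A p ∈ Set.range e := by
      rw [Finset.range_orderEmbOfFin]
      exact hΘ1 (Finset.mem_image_of_mem _ hp)
    obtain ⟨k, hk⟩ := this
    refine ⟨k, k.2, ?_⟩
    simp only [θ, k.2, dif_pos, Fin.eta, hk]
    exact hA p hp

lemma wedge17 (α β φ r s t : ℝ) (hα : 0 ≤ α) (hβ : β ≤ 2 * Real.pi) (h : α < β)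
    (hπ : β - α < Real.pi) (h0 : 0 ≤ φ) (h1 : φ < 2 * Real.pi) (hr : 0 ≤ r)
    (hs : 0 < s) (ht : 0 < t)
    (e1 : r * Real.cos φ = Real.cos α * s + Real.cos β * t)
    (e2 : r * Real.sin φ = Real.sin α * s + Real.sin β * t) : α < φ ∧ φ < β := by
  have hp : 0 < Real.sin (β - α) := Real.sin_pos_of_pos_of_lt_pi (by linarith) hπ
  have k1 : r * Real.sin (φ - α) = t * Real.sin (β - α) := by
    rw [Real.sin_sub, Real.sin_sub]; linear_combination Real.cos α * e2 - Real.sin α * e1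
  have k2 : r * Real.sin (β - φ) = s * Real.sin (β - α) := by
    rw [Real.sin_sub, Real.sin_sub]; linear_combination Real.sin β * e1 - Real.cos β * e2
  have m1 : 0 < Real.sin (φ - α) := by
    have := mul_pos ht hp
    rw [← k1] at this; exact pos_of_mul_pos_right this hr
  have m2 : 0 < Real.sin (β - φ) := by
    have := mul_pos hs hp
    rw [← k2] at this; exact pos_of_mul_pos_right this hr
  have gen : ∀ y, -(2 * Real.pi) ≤ y → 0 < Real.sin y → 0 < y ∨ y < -Real.pi := by
    intro y hy hsy
    by_contra! hcon
    have := Real.sin_nonpos_of_nonpos_of_neg_pi_le hcon.1 hcon.2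
    linarith
  rcases gen _ (by linarith) m1 with g1 | g1 <;> rcases gen _ (by linarith) m2 with g2 | g2
  · constructor <;> linarith
  · exfalso
    have := Real.sin_nonpos_of_nonpos_of_neg_pi_le (x := φ - α - 2 * Real.pi)
    by_cases hh : φ - α < Real.pi
    · linarith
    · have := this (by linarith) (by linarith)
      rw [Real.sin_sub_two_pi] at this
      linarith
  · exfalso
    have := Real.sin_nonpos_of_nonpos_of_neg_pi_le (x := β - φ - 2 * Real.pi)
    by_cases hh : β - φ < Real.pi
    · linarith
    · have := this (by linarith) (by linarith)
      rw [Real.sin_sub_two_pi] at this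
      linarith
  · linarith

lemma zero17 (n : ℕ) (hn : 3 ≤ n) (S : Set (ℝ × ℝ))
    (hS : ∀ k < n, cs17 (k * (2 * Real.pi / n)) ∈ S) : (0 : ℝ × ℝ) ∈ convexHull ℝ S := by
  have hn0 : (n : ℝ) ≠ 0 := by positivity
  have hg := (Complex.isPrimitiveRoot_exp n (by omega)).geom_sum_eq_zero (by omega)
  have hk : ∀ k : ℕ, Complex.exp (2 * Real.pi * Complex.I / n) ^ k =
      ⟨Real.cos (k * (2 * Real.pi / n)), Real.sin (k * (2 * Real.pi / n))⟩ := by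
    intro k
    rw [← Complex.exp_nat_mul]
    have : (k : ℂ) * (2 * Real.pi * Complex.I / n) =
      ((k * (2 * Real.pi / n) : ℝ) : ℂ) * Complex.I := by push_cast; ring
    rw [this]
    apply Complex.ext
    · rw [Complex.exp_ofReal_mul_I_re]
    · rw [Complex.exp_ofReal_mul_I_im]
  simp only [hk] at hg
  have h1 := congrArg Complex.re hg
  have h2 := congrArg Complex.im hg
  simp only [Complex.re_sum, Complex.im_sum, Complex.zero_re, Complex.zero_im] at h1 h2
  have := (convex_convexHull ℝ S).sum_mem (t := Finset.range n) (w := fun _ => (1:ℝ)/n)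
    (z := fun k : ℕ => cs17 (k * (2 * Real.pi / n))) (by intros; positivity)
    (by simp; field_simp) (fun k hk => subset_convexHull ℝ S (hS k (by simpa using hk)))
  rw [← Finset.smul_sum] at this
  convert this
  ext
  · simp [Prod.fst_sum, cs17, h1]
  · simp [Prod.snd_sum, cs17, h2]

lemma lower17 (n : ℕ) (hn : 3 ≤ n) (S : Set (ℝ × ℝ))
    (hS : ∀ k < n, cs17 (k * (2 * Real.pi / n)) ∈ S) :
    ENNReal.ofReal (n / 2 * Real.sin (2 * Real.pi / n)) ≤ volume (convexHull ℝ S) := by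
  have hpi := Real.pi_pos
  have hn3 : (3:ℝ) ≤ n := by exact_mod_cast hn
  have hn0 : (0:ℝ) < n := by linarith
  have h0 := zero17 n hn S hS
  obtain ⟨c, hc⟩ : ∃ c, c = 2 * Real.pi / n := ⟨_, rfl⟩
  have hcn : n * c = 2 * Real.pi := by rw [hc]; field_simp
  have hc0 : 0 < c := by rw [hc]; positivity
  have hcπ : c < Real.pi := by nlinarith
  have hsin : 0 < Real.sin c := Real.sin_pos_of_pos_of_lt_pi hc0 hcπ
  rw [← hc] at hS ⊢
  have hS' : ∀ k ≤ n, cs17 (k * c) ∈ S := by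
    intro k hk
    rcases hk.lt_or_eq with h | rfl
    · exact hS k h
    · have := hS 0 (by omega)
      rw [hcn]; simpa [cs17] using this
  let T : ℕ → Set (ℝ × ℝ) := fun k => lm17 (cs17 (k * c)) (cs17 ((k + 1 : ℕ) * c)) '' to17
  have hdet : ∀ k : ℕ, (cs17 (k * c)).1 * (cs17 ((k + 1 : ℕ) * c)).2 -
      (cs17 ((k + 1 : ℕ) * c)).1 * (cs17 (k * c)).2 = Real.sin c := by
    intro k
    have : c = (k + 1 : ℕ) * c - k * c := by push_cast; ring
    conv_rhs => rw [this, Real.sin_sub]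
    simp only [cs17]; ring
  have hvol : ∀ k, volume (T k) = ENNReal.ofReal (Real.sin c / 2) := by
    intro k
    simp only [T]
    rw [vol_lm17, hdet, vol_to17, ← ENNReal.ofReal_mul (abs_nonneg _), abs_of_pos hsin]
    congr 1; ring
  have hmeas : ∀ k, MeasurableSet (T k) := by
    intro k
    have hd : LinearMap.det (lm17 (cs17 (k * c)) (cs17 ((k + 1 : ℕ) * c))) ≠ 0 := by
      rw [lm17_det, hdet]; exact hsin.ne'
    have ho : IsOpen to17 := by
      unfold to17
      have h1 : IsOpen {x : ℝ × ℝ | 0 < x.1} := isOpen_lt (by fun_prop) (by fun_prop)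
      have h2 : IsOpen {x : ℝ × ℝ | 0 < x.2} := isOpen_lt (by fun_prop) (by fun_prop)
      have h3 : IsOpen {x : ℝ × ℝ | x.1 + x.2 < 1} := isOpen_lt (by fun_prop) (by fun_prop)
      exact h1.inter (h2.inter h3)
    have : IsOpenMap (lm17 (cs17 (k * c)) (cs17 ((k + 1 : ℕ) * c))) := by
      apply LinearMap.isOpenMap_of_finiteDimensional
      exact (LinearMap.equivOfDetNeZero _ hd).surjective
    exact (this _ ho).measurableSet
  have hang : ∀ k < n, ∀ x ∈ T k, ∀ r φ : ℝ, 0 ≤ r → 0 ≤ φ → φ < 2 * Real.pi →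
      x = (r * Real.cos φ, r * Real.sin φ) → k * c < φ ∧ φ < (k + 1 : ℕ) * c := by
    rintro k hk x ⟨⟨s, t⟩, ⟨hs, ht, -⟩, rfl⟩ r φ hr h0 h1 hx
    change lm17 _ _ _ = _ at hx
    rw [lm17_apply] at hx
    simp only [cs17, Prod.mk.injEq] at hx
    have hk' : ((k + 1 : ℕ) : ℝ) ≤ n := by exact_mod_cast hk
    refine wedge17 (k * c) ((k + 1 : ℕ) * c) φ r s t (by positivity) ?_ ?_ ?_ h0 h1 hr hs ht
      hx.1.symm hx.2.symm
    · rw [← hcn]; gcongr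
    · push_cast; linarith
    · push_cast; linarith
  have hdisj : (↑(Finset.range n) : Set ℕ).PairwiseDisjoint T := by
    have main : ∀ i j, i < j → j < n → Disjoint (T i) (T j) := by
      intro i j hij hj
      rw [Set.disjoint_left]
      intro x hx hx'
      obtain ⟨r, φ, hr, g1, g2, g3, -⟩ := polar17 x 0
      have a1 := hang i (by omega) x hx r φ hr g1 (by linarith) g3
      have a2 := hang j hj x hx' r φ hr g1 (by linarith) g3
      have : ((i + 1 : ℕ) : ℝ) * c ≤ j * c := by gcongr; omega
      linarith
    intro i hi j hj hij
    simp only [Finset.coe_range, Set.mem_Iio] at hi hj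
    rcases Nat.lt_or_gt_of_ne hij with h | h
    · exact main i j h hj
    · exact (main j i h hi).symm
  have hsub : (⋃ k ∈ Finset.range n, T k) ⊆ convexHull ℝ S := by
    intro x hx
    simp only [Set.mem_iUnion, Finset.mem_range] at hx
    obtain ⟨k, hk, ⟨s, t⟩, ⟨hs, ht, hst⟩, rfl⟩ := hx
    simp only at hs ht hst
    have p1 := subset_convexHull ℝ S (hS' k hk.le)
    have p2 := subset_convexHull ℝ S (hS' (k+1) hk)
    have := (convex_convexHull ℝ S).sum_mem (t := Finset.univ) (w := ![s, t, 1 - s - t])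
      (z := ![cs17 (k * c), cs17 ((k + 1 : ℕ) * c), 0])
      (by intro i _; fin_cases i <;> simp <;> linarith) (by simp [Fin.sum_univ_three])
      (by intro i _; fin_cases i <;> assumption)
    show lm17 _ _ _ ∈ _
    rw [lm17_apply]
    convert this using 1
    ext <;> simp [Fin.sum_univ_three, mul_comm]
  refine le_trans ?_ (measure_mono hsub)
  rw [measure_biUnion_finset hdisj (fun k _ => hmeas k), Finset.sum_congr rfl (fun k _ => hvol k),
    Finset.sum_const, Finset.card_range, ← ENNReal.ofReal_nsmul]
  apply le_of_eq; congr 1; simp; ring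

lemma disc17 : volume {p : ℝ × ℝ | p.1 ^ 2 + p.2 ^ 2 ≤ 1} = ENNReal.ofReal Real.pi := by
  have h := Complex.volume_preserving_equiv_real_prod.measure_preimage
    (s := {p : ℝ × ℝ | p.1 ^ 2 + p.2 ^ 2 ≤ 1})
    (isClosed_le (by fun_prop) (by fun_prop)).nullMeasurableSet
  rw [← h]
  have : Complex.measurableEquivRealProd ⁻¹' {p : ℝ × ℝ | p.1 ^ 2 + p.2 ^ 2 ≤ 1} =
      Metric.closedBall (0:ℂ) 1 := by
    ext z
    simp only [Set.mem_preimage, Set.mem_setOf_eq, Complex.measurableEquivRealProd_apply,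
      mem_closedBall_zero_iff]
    rw [← sq_le_one_iff₀ (norm_nonneg z), Complex.sq_norm, Complex.normSq_apply, sq, sq]
  rw [this, Complex.volume_closedBall]
  simp [← NNReal.coe_real_pi]

theorem stmt_17 (a b : ℝ) (ha : 0 < a) (hb : 0 < b)
    (E : Set (ℝ × ℝ)) (hE : E = {p : ℝ × ℝ | p.1 ^ 2 / a ^ 2 + p.2 ^ 2 / b ^ 2 ≤ 1})
    (n : ℕ) (hn : 3 ≤ n) :
    sSup { A : ℝ | ∃ S : Finset (ℝ × ℝ),
        ↑S ⊆ {p : ℝ × ℝ | p.1 ^ 2 / a ^ 2 + p.2 ^ 2 / b ^ 2 = 1} ∧ S.card ≤ n ∧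
        A = (volume (convexHull ℝ (S : Set (ℝ × ℝ)))).toReal } =
      (n : ℝ) / 2 * a * b * Real.sin (2 * Real.pi / n) ∧
    (volume E).toReal -
      sSup { A : ℝ | ∃ S : Finset (ℝ × ℝ),
        ↑S ⊆ {p : ℝ × ℝ | p.1 ^ 2 / a ^ 2 + p.2 ^ 2 / b ^ 2 = 1} ∧ S.card ≤ n ∧
        A = (volume (convexHull ℝ (S : Set (ℝ × ℝ)))).toReal } =
      Real.pi * a * b - (n : ℝ) / 2 * a * b * Real.sin (2 * Real.pi / n) := by
  have hpi := Real.pi_pos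
  have hn3 : (3:ℝ) ≤ n := by exact_mod_cast hn
  have hn0 : (0:ℝ) < n := by linarith
  let D := lm17 (a, 0) (0, b)
  have hD : ∀ x, D x = (a * x.1, b * x.2) := by intro x; simp [D, lm17_apply]
  have hDv : ∀ s : Set (ℝ × ℝ), volume (D '' s) = ENNReal.ofReal (a * b) * volume s := by
    intro s
    simp only [D]; rw [vol_lm17]; simp [abs_of_pos (mul_pos ha hb)]
  have hsin : 0 ≤ Real.sin (2 * Real.pi / n) := by
    apply Real.sin_nonneg_of_nonneg_of_le_pi (by positivity)
    rw [div_le_iff₀ hn0]; nlinarith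
  have hEv : (volume E).toReal = Real.pi * a * b := by
    have : E = D '' {p : ℝ × ℝ | p.1 ^ 2 + p.2 ^ 2 ≤ 1} := by
      rw [hE]; ext p
      simp only [Set.mem_setOf_eq, Set.mem_image, hD]
      constructor
      · intro h
        refine ⟨(p.1 / a, p.2 / b), by simpa [div_pow] using h, ?_⟩
        ext <;> simp <;> field_simp
      · rintro ⟨x, hx, rfl⟩
        simp only [mul_pow]
        rw [mul_div_cancel_left₀ _ (by positivity), mul_div_cancel_left₀ _ (by positivity)]
        exact hx
    rw [this, hDv, disc17, ← ENNReal.ofReal_mul (by positivity), ENNReal.toReal_ofReal (by positivity)]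
    ring
  have hG : IsGreatest { A : ℝ | ∃ S : Finset (ℝ × ℝ),
        ↑S ⊆ {p : ℝ × ℝ | p.1 ^ 2 / a ^ 2 + p.2 ^ 2 / b ^ 2 = 1} ∧ S.card ≤ n ∧
        A = (volume (convexHull ℝ (S : Set (ℝ × ℝ)))).toReal }
      ((n : ℝ) / 2 * a * b * Real.sin (2 * Real.pi / n)) := by
    have hval : (ENNReal.ofReal (a * b) *
        ENNReal.ofReal (n / 2 * Real.sin (2 * Real.pi / n))).toReal =
        (n : ℝ) / 2 * a * b * Real.sin (2 * Real.pi / n) := by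
      rw [← ENNReal.ofReal_mul (by positivity), ENNReal.toReal_ofReal (by positivity)]; ring
    constructor
    · let R : Finset (ℝ × ℝ) :=
        (Finset.range n).image (fun k : ℕ => cs17 (k * (2 * Real.pi / n)))
      have hR : R.card ≤ n := Finset.card_image_le.trans (by simp)
      refine ⟨R.image D, ?_, Finset.card_image_le.trans hR, ?_⟩
      · intro p hp
        simp only [R, Finset.coe_image, Set.mem_image] at hp
        obtain ⟨_, ⟨k, -, rfl⟩, rfl⟩ := hp
        rw [hD]
        simp only [Set.mem_setOf_eq, mul_pow, cs17]
        rw [mul_div_cancel_left₀ _ (by positivity), mul_div_cancel_left₀ _ (by positivity)]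
        exact Real.cos_sq_add_sin_sq _
      · have : volume (convexHull ℝ (R : Set (ℝ × ℝ))) =
            ENNReal.ofReal (n / 2 * Real.sin (2 * Real.pi / n)) := by
          apply le_antisymm
          · refine upperS17 n hn R ?_ hR
            intro p hp
            simp only [R, Finset.mem_image] at hp
            obtain ⟨k, -, rfl⟩ := hp
            exact Real.cos_sq_add_sin_sq _
          · refine lower17 n hn _ ?_
            intro k hk
            simp only [R, Finset.coe_image, Set.mem_image]
            exact ⟨k, by simpa using hk, rfl⟩
        rw [Finset.coe_image, ← LinearMap.image_convexHull, hDv, this, hval]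
    · rintro A ⟨S, hS, hc, rfl⟩
      let R : Finset (ℝ × ℝ) := S.image (fun p => (p.1 / a, p.2 / b))
      have hSR : (S : Set (ℝ × ℝ)) = D '' (R : Set (ℝ × ℝ)) := by
        simp only [R, Finset.coe_image, Set.image_image, hD]
        rw [← Set.image_id (S : Set (ℝ × ℝ)), Set.image_image]
        apply Set.image_congr
        intro p _
        ext <;> simp <;> field_simp
      have hle := upperS17 n hn R (by
        intro p hp
        simp only [R, Finset.mem_image] at hp
        obtain ⟨q, hq, rfl⟩ := hp
        have := hS hq
        simpa [div_pow] using this) (Finset.card_image_le.trans hc)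
      rw [hSR, ← LinearMap.image_convexHull, hDv, ← hval]
      exact ENNReal.toReal_mono (by finiteness) (by gcongr)
  rw [hG.csSup_eq, hEv]
  exact ⟨rfl, rfl⟩
end
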